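/- arXiv:2202.08872 — 14 statements merged into one kernel-verified Lean document; each statement's English description precedes it below -/
import Mathlib

section
/- Fix 0 < r < 1. Let H be a complex Hilbert space, J an invertible bounded linear operator on H belonging to 𝒬𝔸_r[H], K a complex Hilbert space, and F an invertible bounded linear operator on K with ‖F‖ ≤ r⁻¹ and ‖F⁻¹‖ ≤ r⁻¹. If V : H → K is a linear isometry such that Jⁿ = V* Fⁿ V for every integer n, then the range of V reduces F; that is, the range of V is invariant under both F and F*. (In other words, every element of 𝒬𝔸_r is dilation extremal in the quantum annulus ℚ𝔸_r.) -/
open ContinuousLinearMap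

noncomputable section

/-- `P` is an orthogonal projection: self-adjoint and idempotent. -/
def IsOrthProj {H : Type*} [NormedAddCommGroup H] [InnerProductSpace ℂ H] [CompleteSpace H]
    (P : H →L[ℂ] H) : Prop :=
  IsSelfAdjoint P ∧ P * P = P

/-- Membership in the dilation boundary `𝒬𝔸_r`: `J` is invertible and `J*J = r²P₊ + r⁻²P₋`
for orthogonal projections `P₊, P₋` summing to the identity. -/
def memQAscript (r : ℝ) {H : Type*} [NormedAddCommGroup H] [InnerProductSpace ℂ H]
    [CompleteSpace H] (J : H →L[ℂ] H) : Prop :=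
  IsUnit J ∧ ∃ Pp Pm : H →L[ℂ] H, IsOrthProj Pp ∧ IsOrthProj Pm ∧ Pp + Pm = 1 ∧
    adjoint J * J = ((r : ℂ) ^ 2) • Pp + ((r : ℂ)⁻¹ ^ 2) • Pm

theorem qa_aux_ext {H K : Type*}
    [NormedAddCommGroup H] [InnerProductSpace ℂ H] [CompleteSpace H]
    [NormedAddCommGroup K] [InnerProductSpace ℂ K] [CompleteSpace K]
    (c : ℝ) (A : K →L[ℂ] K) (V : H →L[ℂ] K) (hV : ∀ x, ‖V x‖ = ‖x‖)
    (hA : ‖A‖ ≤ c) (x b : H) (hb : adjoint V (A (V x)) = b) (hn : ‖b‖ = c * ‖x‖) :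
    A (V x) = V b := by
  have h1 : ‖A (V x)‖ ≤ ‖b‖ := by
    rw [hn, ← hV x]
    exact A.le_of_opNorm_le hA _
  have h2 : inner ℂ (A (V x)) (V b) = inner ℂ b b := by
    rw [← adjoint_inner_left, hb]
  have h3 := norm_sub_sq (𝕜 := ℂ) (A (V x)) (V b)
  rw [h2, hV b, inner_self_eq_norm_sq] at h3
  have h4 : ‖A (V x)‖ ^ 2 ≤ ‖b‖ ^ 2 := by gcongr
  have h5 : ‖A (V x) - V b‖ ^ 2 ≤ 0 := by linarith
  have h6 : ‖A (V x) - V b‖ = 0 := by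
    have := sq_nonneg ‖A (V x) - V b‖
    exact pow_eq_zero_iff (two_ne_zero) |>.1 (le_antisymm h5 this)
  exact sub_eq_zero.1 (norm_eq_zero.1 h6)

theorem qa_aux_norm {H : Type*}
    [NormedAddCommGroup H] [InnerProductSpace ℂ H] [CompleteSpace H]
    (t : ℝ) (ht : 0 ≤ t) (J : H →L[ℂ] H) (u : H)
    (h : adjoint J (J u) = ((t : ℂ) ^ 2) • u) : ‖J u‖ = t * ‖u‖ := by
  have h1 : inner ℂ u (adjoint J (J u)) = inner ℂ (J u) (J u) := adjoint_inner_right _ _ _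
  rw [h, inner_smul_right, inner_self_eq_norm_sq_to_K, inner_self_eq_norm_sq_to_K] at h1
  have h2 : t ^ 2 * ‖u‖ ^ 2 = ‖J u‖ ^ 2 := by
    apply Complex.ofReal_injective
    push_cast
    exact h1
  rw [← mul_pow] at h2
  exact ((pow_left_inj₀ (by positivity) (by positivity) two_ne_zero).1 h2).symm

/-- Every element of `𝒬𝔸_r` is dilation extremal in the quantum annulus `ℚ𝔸_r`:
any `ℂ[x,x⁻¹]`-dilation of `J ∈ 𝒬𝔸_r` to an element `F` of `ℚ𝔸_r` is trivial, i.e. the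
range of the isometry `V` reduces `F`. -/
theorem qa_script_dilation_extremal {H K : Type*}
    [NormedAddCommGroup H] [InnerProductSpace ℂ H] [CompleteSpace H]
    [NormedAddCommGroup K] [InnerProductSpace ℂ K] [CompleteSpace K]
    (r : ℝ) (hr0 : 0 < r) (hr1 : r < 1)
    (J J' : H →L[ℂ] H) (hJinv : J * J' = 1) (hJinv' : J' * J = 1)
    (hJ : memQAscript r J)
    (F F' : K →L[ℂ] K) (hFinv : F * F' = 1) (hFinv' : F' * F = 1)
    (hFnorm : ‖F‖ ≤ r⁻¹) (hF'norm : ‖F'‖ ≤ r⁻¹)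
    (V : H →L[ℂ] K) (hV : ∀ x, ‖V x‖ = ‖x‖)
    (hdil : ∀ n : ℕ, J ^ n = adjoint V ∘L (F ^ n) ∘L V ∧
      J' ^ n = adjoint V ∘L (F' ^ n) ∘L V) :
    (∀ y ∈ Set.range V, F y ∈ Set.range V) ∧
      (∀ y ∈ Set.range V, adjoint F y ∈ Set.range V) := by
  obtain ⟨-, Pp, Pm, ⟨-, hPp⟩, ⟨-, hPm⟩, hsum, hJJ⟩ := hJ
  have hrc : (r : ℂ) ≠ 0 := by exact_mod_cast hr0.ne'
  have e1 : ∀ x, J (J' x) = x := fun x => by simpa using congrArg (fun T => T x) hJinv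
  have e2 : ∀ x, J' (J x) = x := fun x => by simpa using congrArg (fun T => T x) hJinv'
  have e3 : ∀ x, F (F' x) = x := fun x => by simpa using congrArg (fun T => T x) hFinv
  have e4 : ∀ x, F' (F x) = x := fun x => by simpa using congrArg (fun T => T x) hFinv'
  have d1 : J = adjoint V ∘L F ∘L V := by simpa using (hdil 1).1
  have d2 : J' = adjoint V ∘L F' ∘L V := by simpa using (hdil 1).2
  have d3 : adjoint J = adjoint V ∘L adjoint F ∘L V := by
    rw [d1]; simp [adjoint_comp, ContinuousLinearMap.comp_assoc]
  have d4 : adjoint J' = adjoint V ∘L adjoint F' ∘L V := by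
    rw [d2]; simp [adjoint_comp, ContinuousLinearMap.comp_assoc]
  have d1x : ∀ x, adjoint V (F (V x)) = J x := fun x => by rw [d1]; rfl
  have d2x : ∀ x, adjoint V (F' (V x)) = J' x := fun x => by rw [d2]; rfl
  have d3x : ∀ x, adjoint V (adjoint F (V x)) = adjoint J x := fun x => by rw [d3]; rfl
  have d4x : ∀ x, adjoint V (adjoint F' (V x)) = adjoint J' x := fun x => by rw [d4]; rfl
  have a1 : ∀ x, adjoint F (adjoint F' x) = x := fun x => by
    have : adjoint F ∘L adjoint F' = 1 := by
      rw [← adjoint_comp]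
      have h : F' ∘L F = 1 := hFinv'
      rw [h]; exact star_one _
    simpa using congrArg (fun T => T x) this
  have a2 : ∀ x, adjoint J' (adjoint J x) = x := fun x => by
    have : adjoint J' ∘L adjoint J = 1 := by
      rw [← adjoint_comp]
      have h : J ∘L J' = 1 := hJinv
      rw [h]; exact star_one _
    simpa using congrArg (fun T => T x) this
  have nF : ‖adjoint F‖ ≤ r⁻¹ := by rwa [LinearIsometryEquiv.norm_map]
  have nF' : ‖adjoint F'‖ ≤ r⁻¹ := by rwa [LinearIsometryEquiv.norm_map]
  have hPmp : Pm * Pp = 0 := by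
    have : Pm = 1 - Pp := by rw [← hsum]; abel
    rw [this, sub_mul, hPp, one_mul, sub_self]
  have hPpm : Pp * Pm = 0 := by
    have : Pm = 1 - Pp := by rw [← hsum]; abel
    rw [this, mul_sub, hPp, mul_one, sub_self]
  have jp : ∀ x, adjoint J (J (Pp x)) = ((r : ℂ) ^ 2) • Pp x := fun x => by
    have : adjoint J * J * Pp = ((r : ℂ) ^ 2) • Pp := by
      rw [hJJ, add_mul, smul_mul_assoc, smul_mul_assoc, hPp, hPmp, smul_zero, add_zero]
    exact congrArg (fun T => T x) this
  have jm : ∀ x, adjoint J (J (Pm x)) = (((r⁻¹ : ℝ) : ℂ) ^ 2) • Pm x := fun x => by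
    have : adjoint J * J * Pm = (((r⁻¹ : ℝ) : ℂ) ^ 2) • Pm := by
      rw [hJJ, add_mul, smul_mul_assoc, smul_mul_assoc, hPm, hPpm, smul_zero, zero_add]
      push_cast; rfl
    exact congrArg (fun T => T x) this
  have hdec : ∀ x, x = Pp x + Pm x := fun x => by
    simpa using (congrArg (fun T => T x) hsum).symm
  have np : ∀ x, ‖J (Pp x)‖ = r * ‖Pp x‖ := fun x => qa_aux_norm r hr0.le J _ (jp x)
  have nm : ∀ x, ‖J (Pm x)‖ = r⁻¹ * ‖Pm x‖ := fun x =>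
    qa_aux_norm r⁻¹ (inv_pos.2 hr0).le J _ (jm x)
  have fm : ∀ x, F (V (Pm x)) = V (J (Pm x)) := fun x =>
    qa_aux_ext r⁻¹ F V hV hFnorm _ _ (d1x _) (nm x)
  have fp : ∀ x, F (V (Pp x)) = V (J (Pp x)) := fun x => by
    have h : F' (V (J (Pp x))) = V (Pp x) := by
      refine qa_aux_ext r⁻¹ F' V hV hF'norm _ _ ((d2x _).trans (e2 _)) ?_
      rw [np]; field_simp
    rw [← h, e3]
  have f : ∀ x, F (V x) = V (J x) := fun x => by
    rw [hdec x]; simp only [map_add, fm, fp]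
  have gm : ∀ x, adjoint F (V (J (Pm x))) = V (adjoint J (J (Pm x))) := fun x => by
    refine qa_aux_ext r⁻¹ _ V hV nF _ _ (d3x _) ?_
    rw [jm, norm_smul, nm, norm_pow, Complex.norm_real, Real.norm_eq_abs,
      abs_of_pos (inv_pos.2 hr0)]
    ring
  have gp : ∀ x, adjoint F (V (J (Pp x))) = V (adjoint J (J (Pp x))) := fun x => by
    have h0 : J (Pp x) = adjoint J' (((r : ℂ) ^ 2) • Pp x) := by rw [← jp, a2]
    have h : adjoint F' (V (((r : ℂ) ^ 2) • Pp x)) = V (J (Pp x)) := by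
      refine qa_aux_ext r⁻¹ _ V hV nF' _ _ ((d4x _).trans h0.symm) ?_
      rw [np, norm_smul, norm_pow, Complex.norm_real, Real.norm_eq_abs, abs_of_pos hr0]
      field_simp
    rw [← h, a1, jp]
  have g : ∀ x, adjoint F (V (J x)) = V (adjoint J (J x)) := fun x => by
    rw [hdec x]; simp only [map_add, gm, gp]
  constructor
  · rintro _ ⟨x, rfl⟩
    exact ⟨J x, (f x).symm⟩
  · rintro _ ⟨x, rfl⟩
    refine ⟨adjoint J x, ?_⟩
    have := g (J' x)
    rw [e1] at this
    exact this.symm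

end
end

section
/- Fix 0 < r < 1. If H is a complex Hilbert space and T is an invertible bounded linear operator on H with ‖T‖ ≤ r⁻¹ and ‖T⁻¹‖ ≤ r⁻¹, then there exist a complex Hilbert space K, an operator J ∈ 𝒬𝔸_r[K], and a linear isometry V : H → K such that Tⁿ = V* Jⁿ V for every integer n. -/
open ContinuousLinearMap

noncomputable section

universe u

namespace QADil

/-- The `2 × 2` block operator with entries `a b c d` on the Hilbert sum `H ⊕ H`. -/
noncomputable def blk {H : Type*} [NormedAddCommGroup H] [InnerProductSpace ℂ H]
    (a b c d : H →L[ℂ] H) : WithLp 2 (H × H) →L[ℂ] WithLp 2 (H × H) :=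
  ((WithLp.prodContinuousLinearEquiv 2 ℂ H H).symm : H × H →L[ℂ] WithLp 2 (H × H)) ∘L
    ((a ∘L ContinuousLinearMap.fst ℂ H H + b ∘L ContinuousLinearMap.snd ℂ H H).prod
      (c ∘L ContinuousLinearMap.fst ℂ H H + d ∘L ContinuousLinearMap.snd ℂ H H)) ∘L
    ((WithLp.prodContinuousLinearEquiv 2 ℂ H H) : WithLp 2 (H × H) →L[ℂ] H × H)

section
variable {H : Type*} [NormedAddCommGroup H] [InnerProductSpace ℂ H]

theorem blk_apply (a b c d : H →L[ℂ] H) (x : WithLp 2 (H × H)) :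
    blk a b c d x = WithLp.toLp 2 (a x.fst + b x.snd, c x.fst + d x.snd) := rfl

theorem blk_mul (a b c d a' b' c' d' : H →L[ℂ] H) :
    blk a b c d * blk a' b' c' d' =
      blk (a * a' + b * c') (a * b' + b * d') (c * a' + d * c') (c * b' + d * d') := by
  ext x
  simp only [mul_apply_eq_comp, blk_apply, add_apply, WithLp.toLp.injEq, Prod.mk.injEq,
    WithLp.toLp_fst, WithLp.toLp_snd, map_add]
  constructor <;> abel

theorem blk_add (a b c d a' b' c' d' : H →L[ℂ] H) :
    blk a b c d + blk a' b' c' d' = blk (a + a') (b + b') (c + c') (d + d') := by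
  ext x
  simp only [blk_apply, add_apply, ← WithLp.toLp_add, Prod.mk_add_mk, WithLp.toLp.injEq,
    Prod.mk.injEq]
  constructor <;> abel

theorem blk_smul_one (k : ℂ) :
    blk (k • 1 : H →L[ℂ] H) 0 0 (k • 1) = k • 1 := by
  ext x
  simp [blk_apply]
  rfl

theorem blk_one : blk (1 : H →L[ℂ] H) 0 0 1 = 1 := by
  ext x
  simp [blk_apply]
  rfl

theorem blk_star [CompleteSpace H] (a b c d : H →L[ℂ] H) :
    star (blk a b c d) = blk (star a) (star c) (star b) (star d) := by
  rw [star_eq_adjoint]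
  symm
  rw [eq_adjoint_iff]
  intro x y
  simp only [blk_apply, WithLp.prod_inner_apply, star_eq_adjoint, inner_add_left, inner_add_right,
    adjoint_inner_left]
  change inner ℂ x.fst (a y.fst) + inner ℂ x.snd (c y.fst) +
    (inner ℂ x.fst (b y.snd) + inner ℂ x.snd (d y.snd)) =
    inner ℂ x.fst (a y.fst) + inner ℂ x.fst (b y.snd) +
    (inner ℂ x.snd (c y.fst) + inner ℂ x.snd (d y.snd))
  ring

/-- Embedding as first summand. -/
noncomputable def emb : H →L[ℂ] WithLp 2 (H × H) :=
  ((WithLp.prodContinuousLinearEquiv 2 ℂ H H).symm : H × H →L[ℂ] WithLp 2 (H × H)) ∘L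
    ContinuousLinearMap.inl ℂ H H

theorem emb_apply (x : H) : emb x = WithLp.toLp 2 (x, (0 : H)) := rfl

theorem blk_pow_emb (a b d : H →L[ℂ] H) (n : ℕ) (x : H) :
    (blk a b 0 d ^ n) (emb x) = emb ((a ^ n) x) := by
  induction n with
  | zero => simp
  | succ n ih =>
    have h : (blk a b 0 d ^ (n + 1)) (emb x) = blk a b 0 d ((blk a b 0 d ^ n) (emb x)) := by
      rw [pow_succ']; rfl
    rw [h, ih, pow_succ']
    simp [blk_apply, emb_apply]

theorem compress [CompleteSpace H] (a b d : H →L[ℂ] H) (n : ℕ) :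
    a ^ n = adjoint (emb (H := H)) ∘L (blk a b 0 d ^ n) ∘L emb := by
  ext x
  refine ext_inner_right ℂ fun y => ?_
  simp only [ContinuousLinearMap.comp_apply, adjoint_inner_left, blk_pow_emb]
  simp [emb_apply, WithLp.prod_inner_apply]

theorem exists_D [CompleteSpace H] (r : ℝ) (hr0 : 0 < r)
    (T T' : H →L[ℂ] H) (hTinv : T * T' = 1) (hTinv' : T' * T = 1)
    (hTnorm : ‖T‖ ≤ r⁻¹) (hT'norm : ‖T'‖ ≤ r⁻¹) :
    ∃ D : H →L[ℂ] H, star D = D ∧ Commute D (star T * T) ∧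
      D * D = ((r : ℂ) ^ 2 + (r : ℂ)⁻¹ ^ 2) • 1 - star T * T - T' * star T' := by
  have hS : star T * star T' = 1 := by rw [← star_mul, hTinv', star_one]
  have hS' : star T' * star T = 1 := by rw [← star_mul, hTinv, star_one]
  have h1 : (star T * T) * (T' * star T') = 1 := by
    rw [mul_assoc, ← mul_assoc T, hTinv, one_mul, hS]
  have h2 : (T' * star T') * (star T * T) = 1 := by
    rw [mul_assoc, ← mul_assoc (star T'), hS', one_mul, hTinv']
  set A := star T * T with hA
  set B := T' * star T' with hB
  have hR : (0 : ℝ) ≤ r⁻¹ := by positivity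
  have pA : 0 ≤ algebraMap ℝ (H →L[ℂ] H) (r⁻¹ ^ 2) - A := by
    rw [sub_nonneg]
    refine CStarAlgebra.star_mul_le_algebraMap_norm_sq.trans ?_
    exact algebraMap_mono _ (by gcongr)
  have pB : 0 ≤ algebraMap ℝ (H →L[ℂ] H) (r⁻¹ ^ 2) - B := by
    rw [sub_nonneg]
    refine CStarAlgebra.mul_star_le_algebraMap_norm_sq.trans ?_
    exact algebraMap_mono _ (by gcongr)
  have cAB : Commute A B := by rw [Commute, SemiconjBy, h1, h2]
  have hc : Commute (algebraMap ℝ (H →L[ℂ] H) (r⁻¹ ^ 2) - A)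
      (algebraMap ℝ (H →L[ℂ] H) (r⁻¹ ^ 2) - B) := by
    refine Commute.sub_left (Algebra.commutes _ _) (Commute.sub_right ?_ cAB)
    exact (Algebra.commutes _ _).symm
  have hp := Commute.mul_nonneg pA pB hc
  have hp2 := smul_nonneg (sq_nonneg r) hp
  set E := (r ^ 2) • ((algebraMap ℝ (H →L[ℂ] H) (r⁻¹ ^ 2) - A) *
    (algebraMap ℝ (H →L[ℂ] H) (r⁻¹ ^ 2) - B)) with hE
  refine ⟨CFC.sqrt E, (CFC.sqrt_nonneg E).isSelfAdjoint.star_eq, ?_, ?_⟩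
  · refine Commute.cfcₙ_nnreal ?_ _
    refine Commute.smul_left (Commute.mul_left ?_ ?_) _
    · exact Commute.sub_left (Algebra.commutes _ _) (Commute.refl _)
    · exact Commute.sub_left (Algebra.commutes _ _) cAB.symm
  · rw [CFC.sqrt_mul_sqrt_self E hp2, hE]
    have e : ((r : ℂ) ^ 2 + (r : ℂ)⁻¹ ^ 2) • (1 : H →L[ℂ] H) =
        (r ^ 2 + r⁻¹ ^ 2 : ℝ) • (1 : H →L[ℂ] H) := by
      ext x; simp [← Complex.coe_smul]
    rw [e, sub_mul, mul_sub, mul_sub, h1]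
    simp only [Algebra.algebraMap_eq_smul_one, smul_mul_assoc, mul_smul_comm, one_mul, mul_one]
    have hr : r ≠ 0 := hr0.ne'
    match_scalars <;> field_simp <;> ring

theorem mem_of_eq [CompleteSpace H] (r : ℝ) (hr0 : 0 < r) (hr1 : r < 1) (N N' : H →L[ℂ] H)
    (hN : star N = N) (h1 : N * N' = 1)
    (h2 : N + N' = ((r : ℂ) ^ 2 + (r : ℂ)⁻¹ ^ 2) • 1) :
    ∃ Pp Pm : H →L[ℂ] H, IsOrthProj Pp ∧ IsOrthProj Pm ∧ Pp + Pm = 1 ∧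
      N = ((r : ℂ) ^ 2) • Pp + ((r : ℂ)⁻¹ ^ 2) • Pm := by
  have hr : (r : ℂ) ≠ 0 := by exact_mod_cast hr0.ne'
  have hq : (r : ℂ)⁻¹ ^ 2 - (r : ℂ) ^ 2 ≠ 0 := by
    have h : r⁻¹ ^ 2 - r ^ 2 ≠ 0 := by
      have := (one_lt_inv₀ hr0).2 hr1
      nlinarith
    exact_mod_cast h
  have hNN : N * N = ((r : ℂ) ^ 2 + (r : ℂ)⁻¹ ^ 2) • N - 1 := by
    have : N * (N + N') = N * (((r : ℂ) ^ 2 + (r : ℂ)⁻¹ ^ 2) • 1) := by rw [h2]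
    rw [mul_add, h1, mul_smul_comm, mul_one] at this
    exact eq_sub_of_add_eq this
  have hs : (r : ℂ) ^ 2 * (r : ℂ)⁻¹ ^ 2 = 1 := by field_simp
  have sp : star ((r : ℂ) ^ 2) = (r : ℂ) ^ 2 := by simp
  have sq : star ((r : ℂ)⁻¹ ^ 2) = (r : ℂ)⁻¹ ^ 2 := by simp
  generalize (r : ℂ) ^ 2 = p at *
  generalize (r : ℂ)⁻¹ ^ 2 = q at *
  refine ⟨(q - p)⁻¹ • (q • 1 - N), (q - p)⁻¹ • (N - p • 1), ⟨?_, ?_⟩, ⟨?_, ?_⟩, ?_, ?_⟩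
  · rw [IsSelfAdjoint, star_smul, star_sub, star_smul, star_inv₀, star_sub, sp, sq, hN, star_one]
  · simp only [smul_mul_assoc, mul_smul_comm, sub_mul, mul_sub, one_mul, mul_one, hNN]
    match_scalars
    · field_simp
      linear_combination hs
    · field_simp
      ring
  · rw [IsSelfAdjoint, star_smul, star_sub, star_smul, star_inv₀, star_sub, sp, sq, hN, star_one]
  · simp only [smul_mul_assoc, mul_smul_comm, sub_mul, mul_sub, one_mul, mul_one, hNN]
    match_scalars
    · field_simp
      ring
    · field_simp
      linear_combination hs
  · match_scalars
    · field_simp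
      ring
    · ring
  · match_scalars
    · field_simp
      ring
    · ring

end

end QADil

/-- Every element of the quantum annulus `ℚ𝔸_r` has a `ℂ[x,x⁻¹]`-dilation to an
element of `𝒬𝔸_r`. -/
theorem qa_dilation {H : Type u}
    [NormedAddCommGroup H] [InnerProductSpace ℂ H] [CompleteSpace H]
    (r : ℝ) (hr0 : 0 < r) (hr1 : r < 1)
    (T T' : H →L[ℂ] H) (hTinv : T * T' = 1) (hTinv' : T' * T = 1)
    (hTnorm : ‖T‖ ≤ r⁻¹) (hT'norm : ‖T'‖ ≤ r⁻¹) :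
    ∃ (K : Type u) (_ : NormedAddCommGroup K) (_ : InnerProductSpace ℂ K)
      (_ : CompleteSpace K) (J J' : K →L[ℂ] K) (V : H →L[ℂ] K),
      J * J' = 1 ∧ J' * J = 1 ∧ memQAscript r J ∧ (∀ x, ‖V x‖ = ‖x‖) ∧
      ∀ n : ℕ, T ^ n = adjoint V ∘L (J ^ n) ∘L V ∧
        T' ^ n = adjoint V ∘L (J' ^ n) ∘L V := by
  obtain ⟨D, hD, hcom, hDD⟩ := QADil.exists_D r hr0 T T' hTinv hTinv' hTnorm hT'norm
  have hS : star T * star T' = 1 := by rw [← star_mul, hTinv', star_one]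
  have hS' : star T' * star T = 1 := by rw [← star_mul, hTinv, star_one]
  have hJJ' : QADil.blk T (T * D * T') 0 T' * QADil.blk T' (-D) 0 T = 1 := by
    rw [QADil.blk_mul, ← QADil.blk_one]
    congr 1
    · simp [hTinv]
    · rw [mul_assoc (T * D), hTinv']; simp
    · simp
    · simp [hTinv']
  have hJ'J : QADil.blk T' (-D) 0 T * QADil.blk T (T * D * T') 0 T' = 1 := by
    rw [QADil.blk_mul, ← QADil.blk_one]
    congr 1
    · simp [hTinv']
    · rw [← mul_assoc, ← mul_assoc, hTinv']; simp
    · simp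
    · simp [hTinv]
  refine ⟨WithLp 2 (H × H), inferInstance, inferInstance, inferInstance,
    QADil.blk T (T * D * T') 0 T', QADil.blk T' (-D) 0 T, QADil.emb, hJJ', hJ'J,
    ⟨⟨⟨_, _, hJJ', hJ'J⟩, rfl⟩, ?_⟩, ?_, fun n => ⟨QADil.compress _ _ _ n, QADil.compress _ _ _ n⟩⟩
  · rw [← star_eq_adjoint]
    refine QADil.mem_of_eq r hr0 hr1 _
      (QADil.blk T' (-D) 0 T * star (QADil.blk T' (-D) 0 T)) (by simp) ?_ ?_
    · rw [mul_assoc, ← mul_assoc (QADil.blk T (T * D * T') 0 T'), hJJ', one_mul, ← star_mul,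
        hJ'J, star_one]
    · rw [QADil.blk_star, QADil.blk_star, QADil.blk_mul, QADil.blk_mul, QADil.blk_add,
        ← QADil.blk_smul_one]
      have hc : D * (star T * T) = star T * T * D := hcom
      have e1 : star T * (T * D * T') = D * star T := by
        calc star T * (T * D * T') = (star T * T * D) * T' := by simp only [mul_assoc]
          _ = D * star T * (T * T') := by rw [← hc]; simp only [mul_assoc]
          _ = D * star T := by rw [hTinv, mul_one]
      have e2 : star (T * D * T') = star T' * D * star T := by
        simp [star_mul, hD, mul_assoc]
      have e3 : star T' * D * star T * T = T * D := by
        calc star T' * D * star T * T = star T' * (D * (star T * T)) := by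
              simp only [mul_assoc]
          _ = (star T' * star T) * T * D := by rw [hc]; simp only [mul_assoc]
          _ = T * D := by rw [hS', one_mul]
      have e4 : star T' * D * star T * (T * D * T') =
          ((r : ℂ) ^ 2 + (r : ℂ)⁻¹ ^ 2) • 1 - T * star T - star T' * T' := by
        calc star T' * D * star T * (T * D * T')
            = star T' * D * (star T * (T * D * T')) := by simp only [mul_assoc]
          _ = star T' * (D * D) * star T := by rw [e1]; simp only [mul_assoc]
          _ = ((r : ℂ) ^ 2 + (r : ℂ)⁻¹ ^ 2) • (star T' * star T) -
              (star T' * star T) * T * star T - star T' * T' * (star T' * star T) := by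
              rw [hDD]
              simp only [mul_sub, sub_mul, mul_smul_comm, smul_mul_assoc, mul_one, mul_assoc]
          _ = _ := by rw [hS']; simp
      simp only [star_zero, zero_mul, mul_zero, add_zero, zero_add, star_neg, hD, e2, e1, e3, e4,
        neg_mul_neg, hDD, mul_neg, neg_mul]
      congr 1
      · abel
      · abel
      · abel
      · abel
  · intro x
    rw [QADil.emb_apply]
    simp

end
end

section
/- Fix 0 < r < 1. Suppose H is a complex Hilbert space and T is an invertible bounded linear operator on H with ‖T‖ ≤ r⁻¹ and ‖T⁻¹‖ ≤ r⁻¹, and suppose the spectrum of T*T is a finite subset of the open interval (r², r⁻²). Then there exist a complex Hilbert space K, an operator J ∈ 𝒬𝔸_r[K], and a linear isometry V : H → K such that Tⁿ = V* Jⁿ V for every integer n. -/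
open ContinuousLinearMap

noncomputable section

universe u

section Helpers

set_option linter.unusedSectionVars false

variable {H : Type u} [NormedAddCommGroup H] [InnerProductSpace ℂ H] [CompleteSpace H]

/-- First inclusion. -/
def qaV1 (H : Type u) [NormedAddCommGroup H] [InnerProductSpace ℂ H] : H →L[ℂ] WithLp 2 (H × H) :=
  (WithLp.prodContinuousLinearEquiv 2 ℂ H H).symm.toContinuousLinearMap ∘L
    ContinuousLinearMap.inl ℂ H H

/-- Block operators on the Hilbert sum. -/
def qaBlk (a b c d : H →L[ℂ] H) : WithLp 2 (H × H) →L[ℂ] WithLp 2 (H × H) :=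
  (WithLp.prodContinuousLinearEquiv 2 ℂ H H).symm.toContinuousLinearMap ∘L
    ((a.coprod b).prod (c.coprod d)) ∘L
    (WithLp.prodContinuousLinearEquiv 2 ℂ H H).toContinuousLinearMap

theorem qaBlk_apply (a b c d : H →L[ℂ] H) (x : WithLp 2 (H × H)) :
    qaBlk a b c d x = WithLp.toLp 2 (a x.fst + b x.snd, c x.fst + d x.snd) := rfl

theorem qaV1_apply (x : H) : qaV1 H x = WithLp.toLp 2 (x, 0) := rfl

theorem qaBlk_mul (a b c d a' b' c' d' : H →L[ℂ] H) :
    qaBlk a b c d * qaBlk a' b' c' d' =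
      qaBlk (a * a' + b * c') (a * b' + b * d') (c * a' + d * c') (c * b' + d * d') := by
  ext x
  change qaBlk a b c d (qaBlk a' b' c' d' x) = _
  rw [qaBlk_apply, qaBlk_apply, qaBlk_apply]
  simp only [WithLp.toLp_fst, WithLp.toLp_snd, add_apply, mul_apply_eq_comp, map_add]
  congr 2 <;> abel

theorem qaBlk_one : qaBlk (1 : H →L[ℂ] H) 0 0 1 = 1 := by
  ext x
  simp only [qaBlk_apply, one_apply_eq_self, zero_apply, add_zero, zero_add]
  rfl

theorem qaBlk_add (a b c d a' b' c' d' : H →L[ℂ] H) :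
    qaBlk a b c d + qaBlk a' b' c' d' = qaBlk (a + a') (b + b') (c + c') (d + d') := by
  ext x
  simp only [qaBlk_apply, add_apply, ← WithLp.toLp_add, Prod.mk_add_mk]
  congr 2 <;> abel

theorem qaBlk_smul (k : ℂ) (a b c d : H →L[ℂ] H) :
    k • qaBlk a b c d = qaBlk (k • a) (k • b) (k • c) (k • d) := by
  ext x
  simp only [qaBlk_apply, smul_apply, ← WithLp.toLp_smul, Prod.smul_mk,
    smul_add]

theorem qaBlk_adjoint (a b c d : H →L[ℂ] H) :
    adjoint (qaBlk a b c d) = qaBlk (adjoint a) (adjoint c) (adjoint b) (adjoint d) := by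
  symm
  rw [ContinuousLinearMap.eq_adjoint_iff]
  intro x y
  simp only [qaBlk_apply, WithLp.prod_inner_apply, inner_add_left, inner_add_right,
    ContinuousLinearMap.adjoint_inner_left, WithLp.ofLp_fst, WithLp.ofLp_snd]
  ring

theorem qaV1_norm (x : H) : ‖qaV1 H x‖ = ‖x‖ := by
  simp [qaV1_apply]

theorem qaV1_adj : adjoint (qaV1 H) ∘L qaV1 H = ContinuousLinearMap.id ℂ H :=
  (ContinuousLinearMap.norm_map_iff_adjoint_comp_self (qaV1 H)).1 qaV1_norm

theorem qaBlk_pow_V1 (a b d : H →L[ℂ] H) (n : ℕ) :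
    ((qaBlk a b 0 d) ^ n) ∘L qaV1 H = qaV1 H ∘L (a ^ n) := by
  induction n with
  | zero => ext x; simp
  | succ n ih =>
    rw [pow_succ', pow_succ']
    ext x
    have h := congrArg (fun f => f x) ih
    simp only [ContinuousLinearMap.comp_apply, mul_apply_eq_comp] at h ⊢
    rw [h]
    simp [qaV1_apply, qaBlk_apply]

theorem qa_compress (a b d : H →L[ℂ] H) (n : ℕ) :
    a ^ n = adjoint (qaV1 H) ∘L ((qaBlk a b 0 d) ^ n) ∘L qaV1 H := by
  rw [qaBlk_pow_V1, ← ContinuousLinearMap.comp_assoc, qaV1_adj, ContinuousLinearMap.id_comp]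

/-- An invertible `J` with `X + X⁻¹ = r² + r⁻²`, `X = J*J`, lies in the boundary. -/
theorem qa_mem (r : ℝ) (hr0 : 0 < r) (hr1 : r < 1) (J J' : H →L[ℂ] H)
    (h1 : J * J' = 1) (h2 : J' * J = 1)
    (h : adjoint J * J + J' * adjoint J' = ((r : ℂ) ^ 2 + (r : ℂ)⁻¹ ^ 2) • 1) :
    memQAscript r J := by
  have hne : ((r : ℂ)⁻¹ ^ 2 - (r : ℂ) ^ 2) ≠ 0 := by
    have : r⁻¹ ^ 2 - r ^ 2 ≠ 0 := by
      have h1 : 1 < r⁻¹ := (one_lt_inv₀ hr0).2 hr1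
      nlinarith
    exact_mod_cast this
  have hX : (adjoint J * J) * (J' * adjoint J') = 1 := by
    have : adjoint J * adjoint J' = 1 := by
      have := congrArg star h2
      simpa [star_mul, ContinuousLinearMap.star_eq_adjoint] using this
    rw [mul_assoc, ← mul_assoc J, h1, one_mul, this]
  have hsa : IsSelfAdjoint (adjoint J * J) := IsSelfAdjoint.star_mul_self J
  set X := adjoint J * J with hXdef
  have hab : (r : ℂ) ^ 2 * (r : ℂ)⁻¹ ^ 2 = 1 := by
    have : (r : ℂ) ≠ 0 := by exact_mod_cast hr0.ne'
    field_simp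
  have hsα : star ((r : ℂ) ^ 2) = (r : ℂ) ^ 2 := by simp
  have hsβ : star ((r : ℂ)⁻¹ ^ 2) = (r : ℂ)⁻¹ ^ 2 := by simp
  rw [memQAscript, ← hXdef]
  generalize (r : ℂ) ^ 2 = α at *
  generalize (r : ℂ)⁻¹ ^ 2 = β at *
  have hq : X * X = (α + β) • X - (α * β) • 1 := by
    have := congrArg (fun Y => X * Y) h
    simp only [mul_add, hX, mul_smul_comm, mul_one] at this
    rw [← this, hab, one_smul]; abel
  have hsi : star ((β - α)⁻¹) = (β - α)⁻¹ := by
    rw [star_inv₀, star_sub, hsα, hsβ]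
  refine ⟨⟨⟨J, J', h1, h2⟩, rfl⟩, (β - α)⁻¹ • (β • 1 - X), (β - α)⁻¹ • (X - α • 1),
    ⟨?_, ?_⟩, ⟨?_, ?_⟩, ?_, ?_⟩
  · rw [IsSelfAdjoint, star_smul, hsi, star_sub, star_smul, hsβ, star_one, hsa.star_eq]
  · have : (β • 1 - X) * (β • 1 - X) = (β - α) • (β • 1 - X) := by
      simp only [sub_mul, mul_sub, hq, smul_mul_assoc, mul_smul_comm, one_mul, mul_one]
      module
    rw [smul_mul_smul_comm, this, smul_smul]
    congr 1
    field_simp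
  · rw [IsSelfAdjoint, star_smul, hsi, star_sub, star_smul, hsα, star_one, hsa.star_eq]
  · have : (X - α • 1) * (X - α • 1) = (β - α) • (X - α • 1) := by
      simp only [sub_mul, mul_sub, hq, smul_mul_assoc, mul_smul_comm, one_mul, mul_one]
      module
    rw [smul_mul_smul_comm, this, smul_smul]
    congr 1
    field_simp
  · rw [← smul_add]
    have : (β • (1 : H →L[ℂ] H) - X + (X - α • 1)) = (β - α) • 1 := by module
    rw [this, smul_smul, inv_mul_cancel₀ hne, one_smul]
  · have : α • (β - α)⁻¹ • (β • (1 : H →L[ℂ] H) - X) + β • (β - α)⁻¹ • (X - α • 1)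
      = ((β - α)⁻¹ * (β - α)) • X := by module
    rw [this, inv_mul_cancel₀ hne, one_smul]

theorem qa_sqrt (r : ℝ) (hr0 : 0 < r) (A : H →L[ℂ] H) (hA : IsSelfAdjoint A)
    (hloc : spectrum ℂ A ⊆ Complex.ofReal '' Set.Ioo (r ^ 2) (r⁻¹ ^ 2)) :
    ∃ L : H →L[ℂ] H, IsSelfAdjoint L ∧ L * A = A * L ∧
      L * L = ((r : ℂ) ^ 2 + (r : ℂ)⁻¹ ^ 2) • A - A * A - 1 := by
  have hs : ∀ x ∈ spectrum ℝ A, x ∈ Set.Ioo (r ^ 2) (r⁻¹ ^ 2) := by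
    intro x hx
    have : (x : ℂ) ∈ spectrum ℂ A := by
      have := (spectrum.algebraMap_mem_iff ℂ (R := ℝ) (a := A) (r := x)).2 hx
      simpa using this
    obtain ⟨y, hy, hxy⟩ := hloc this
    rwa [← Complex.ofReal_injective hxy]
  let f : ℝ → ℝ := fun x => Real.sqrt ((r ^ 2 + r⁻¹ ^ 2) * x - x * x - 1)
  have hf : Continuous f := by fun_prop
  refine ⟨cfc f A, cfc_predicate f A, ?_, ?_⟩
  · exact ((cfc_commute_cfc f id A).eq.trans (by rfl) |> fun h => by simpa [cfc_id ℝ A] using h)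
  · rw [← cfc_mul f f A hf.continuousOn hf.continuousOn]
    have : cfc (fun x => f x * f x) A = cfc (fun x : ℝ => (r ^ 2 + r⁻¹ ^ 2) * x - x * x - 1) A := by
      apply cfc_congr
      intro x hx
      obtain ⟨h1, h2⟩ := hs x hx
      refine Real.mul_self_sqrt ?_
      have : r ^ 2 * r⁻¹ ^ 2 = 1 := by field_simp
      nlinarith
    rw [this, cfc_sub _ _ A (by fun_prop) (by fun_prop), cfc_sub _ _ A (by fun_prop) (by fun_prop),
      cfc_mul _ _ A (by fun_prop) (by fun_prop), cfc_mul _ _ A (by fun_prop) (by fun_prop), cfc_const _ A, cfc_id' ℝ A, cfc_const_one ℝ A,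
      Algebra.algebraMap_eq_smul_one, smul_mul_assoc, one_mul]
    congr 2
    rw [← Complex.coe_smul]
    norm_num

end Helpers

/-- If `T ∈ ℚ𝔸_r` and the spectrum of `T*T` is a finite subset of the open interval
`(r², r⁻²)`, then `T` has a `ℂ[x,x⁻¹]`-dilation to an element of `𝒬𝔸_r`. -/
theorem qa_dilation_finite_spectrum {H : Type u}
    [NormedAddCommGroup H] [InnerProductSpace ℂ H] [CompleteSpace H]
    (r : ℝ) (hr0 : 0 < r) (hr1 : r < 1)
    (T T' : H →L[ℂ] H) (hTinv : T * T' = 1) (hTinv' : T' * T = 1)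
    (hTnorm : ‖T‖ ≤ r⁻¹) (hT'norm : ‖T'‖ ≤ r⁻¹)
    (hfin : (spectrum ℂ (adjoint T * T)).Finite)
    (hloc : spectrum ℂ (adjoint T * T) ⊆ Complex.ofReal '' Set.Ioo (r ^ 2) (r⁻¹ ^ 2)) :
    ∃ (K : Type u) (_ : NormedAddCommGroup K) (_ : InnerProductSpace ℂ K)
      (_ : CompleteSpace K) (J J' : K →L[ℂ] K) (V : H →L[ℂ] K),
      J * J' = 1 ∧ J' * J = 1 ∧ memQAscript r J ∧ (∀ x, ‖V x‖ = ‖x‖) ∧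
      ∀ n : ℕ, T ^ n = adjoint V ∘L (J ^ n) ∘L V ∧
        T' ^ n = adjoint V ∘L (J' ^ n) ∘L V := by
  have hTs : adjoint T * adjoint T' = 1 := by
    have := congrArg star hTinv'
    simpa [star_mul, ContinuousLinearMap.star_eq_adjoint] using this
  have hTs' : adjoint T' * adjoint T = 1 := by
    have := congrArg star hTinv
    simpa [star_mul, ContinuousLinearMap.star_eq_adjoint] using this
  have hAsa : IsSelfAdjoint (adjoint T * T) := IsSelfAdjoint.star_mul_self T
  have hSsa : IsSelfAdjoint (T' * adjoint T') := IsSelfAdjoint.mul_star_self T'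
  obtain ⟨L, hL, hLA, hLL⟩ := qa_sqrt r hr0 _ hAsa hloc
  have hAS : (adjoint T * T) * (T' * adjoint T') = 1 := by
    rw [mul_assoc, ← mul_assoc T, hTinv, one_mul, hTs]
  have hSA : (T' * adjoint T') * (adjoint T * T) = 1 := by
    rw [mul_assoc, ← mul_assoc (adjoint T'), hTs', one_mul, hTinv']
  obtain ⟨A, hA⟩ : ∃ A, A = adjoint T * T := ⟨_, rfl⟩
  obtain ⟨S, hS⟩ : ∃ S, S = T' * adjoint T' := ⟨_, rfl⟩
  rw [← hA] at hAsa hLA hLL hAS hSA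
  rw [← hS] at hSsa hAS hSA
  have hLS : L * S = S * L := by
    calc L * S = S * A * (L * S) := by rw [hSA, one_mul]
      _ = S * (A * L) * S := by noncomm_ring
      _ = S * L * (A * S) := by rw [← hLA]; noncomm_ring
      _ = S * L := by rw [hAS, mul_one]
  obtain ⟨G, hG⟩ : ∃ G, G = S * L := ⟨_, rfl⟩
  have hGsa : adjoint G = G := by
    rw [← ContinuousLinearMap.star_eq_adjoint, hG, star_mul, hL.star_eq, hSsa.star_eq, hLS]
  have hAG : A * G = L := by rw [hG, ← mul_assoc, hAS, one_mul]
  have hGA : G * A = L := by rw [hG, mul_assoc, hLA, ← mul_assoc, hSA, one_mul]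
  have hGAG : G * A * G = ((r : ℂ) ^ 2 + (r : ℂ)⁻¹ ^ 2) • 1 - A - S := by
    rw [hGA, hG, ← mul_assoc, hLS, mul_assoc, hLL, mul_sub, mul_sub, mul_smul_comm, hSA,
      ← mul_assoc, hSA, one_mul, mul_one]
  have e1 : qaBlk T (T * G) 0 (adjoint T') * qaBlk T' (-(G * adjoint T)) 0 (adjoint T) = 1 := by
    rw [qaBlk_mul, ← qaBlk_one]
    congr 1
    · simp [hTinv]
    · simp [mul_assoc]
    · simp
    · simp [hTs']
  have e2 : qaBlk T' (-(G * adjoint T)) 0 (adjoint T) * qaBlk T (T * G) 0 (adjoint T') = 1 := by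
    rw [qaBlk_mul, ← qaBlk_one]
    congr 1
    · simp [hTinv']
    · rw [← mul_assoc, hTinv', neg_mul, mul_assoc, hTs]; simp
    · simp
    · simp [hTs]
  have a1 : adjoint (T * G) = G * adjoint T := by
    rw [← ContinuousLinearMap.star_eq_adjoint, star_mul]
    simp only [ContinuousLinearMap.star_eq_adjoint, hGsa]
  have a2 : adjoint (-(G * adjoint T)) = -(T * G) := by
    rw [map_neg, ← a1, ContinuousLinearMap.adjoint_adjoint]
  refine ⟨WithLp 2 (H × H), inferInstance, inferInstance, inferInstance, 
    qaBlk T (T * G) 0 (adjoint T'), qaBlk T' (-(G * adjoint T)) 0 (adjoint T), qaV1 H, e1, e2,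
    qa_mem r hr0 hr1 _ _ e1 e2 ?_, qaV1_norm, fun n => ⟨qa_compress _ _ _ n, qa_compress _ _ _ n⟩⟩
  rw [qaBlk_adjoint, qaBlk_adjoint, qaBlk_mul, qaBlk_mul, qaBlk_add, ← qaBlk_one, qaBlk_smul, a1, a2]
  simp only [ContinuousLinearMap.adjoint_adjoint, map_zero, mul_zero, zero_mul, add_zero, zero_add,
    smul_zero]
  have b1 : G * adjoint T * T = L := by rw [mul_assoc, ← hA, hGA]
  have b2 : adjoint T * (T * G) = L := by rw [← mul_assoc, ← hA, hAG]
  have b3 : G * adjoint T * (T * G) = ((r : ℂ) ^ 2 + (r : ℂ)⁻¹ ^ 2) • 1 - A - S := by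
    rw [← hGAG, hA]; noncomm_ring
  congr 1
  · rw [neg_mul_neg, b3, ← hA, ← hS]; abel
  · rw [b2, neg_mul, b1]; abel
  · rw [b1, mul_neg, b2]; abel
  · rw [b3, ← hA, ← hS]; abel

end
end

section
/- Fix 0 < r < 1 and let H be a complex Hilbert space. An invertible bounded linear operator T on H satisfies ‖T‖ ≤ r⁻¹ and ‖T⁻¹‖ ≤ r⁻¹ if and only if the self-adjoint operator (r⁻² + r²)I − T*T − T⁻¹T⁻* is positive semidefinite, where T⁻* denotes (T⁻¹)*. -/
open ContinuousLinearMap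

noncomputable section

section aux
variable {R : Type*} [CStarAlgebra R] [PartialOrder R] [StarOrderedRing R]

lemma qa_fwd (s : ℝ) (hs : 0 < s) (a b : R) (ha : 0 ≤ a) (hb : 0 ≤ b) (hab : a * b = 1)
    (hba : b * a = 1) (h1 : ‖a‖ ≤ s) (h2 : ‖b‖ ≤ s) :
    0 ≤ algebraMap ℝ R (s + s⁻¹) - a - b := by
  have e1 : 0 ≤ algebraMap ℝ R s - a :=
    sub_nonneg.2 ((CStarAlgebra.norm_le_iff_le_algebraMap a hs.le ha).1 h1)
  have e2 : 0 ≤ algebraMap ℝ R s - b :=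
    sub_nonneg.2 ((CStarAlgebra.norm_le_iff_le_algebraMap b hs.le hb).1 h2)
  have hc : Commute a b := hab.trans hba.symm
  have hc' : Commute (algebraMap ℝ R s - a) (algebraMap ℝ R s - b) := by
    apply Commute.sub_left (Algebra.commute_algebraMap_left _ _)
    exact Commute.sub_right (Algebra.commute_algebraMap_right _ _) hc
  have e3 := smul_nonneg (inv_nonneg.2 hs.le) (hc'.mul_nonneg e1 e2)
  convert e3 using 1
  simp only [Algebra.algebraMap_eq_smul_one, mul_sub, sub_mul, hab, smul_sub, smul_mul_assoc,
    mul_smul_comm, one_mul, mul_one, smul_smul, inv_mul_cancel₀ hs.ne', add_smul, one_smul]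
  rw [← mul_assoc, inv_mul_cancel₀ hs.ne', one_mul]
  abel

lemma qa_bwd (s : ℝ) (hs : 1 < s) (a b : R) (ha : 0 ≤ a) (hab : a * b = 1)
    (hba : b * a = 1) (h : 0 ≤ algebraMap ℝ R (s + s⁻¹) - a - b) : ‖a‖ ≤ s := by
  have hs0 : 0 < s := by linarith
  have hi : s⁻¹ ≤ 1 := inv_le_one_of_one_le₀ hs.le
  have hi0 : 0 < s⁻¹ := inv_pos.2 hs0
  rcases subsingleton_or_nontrivial R with hR | hR
  · rw [Subsingleton.elim a 0, norm_zero]; exact hs0.le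
  have hc : Commute a b := hab.trans hba.symm
  have hc' : Commute (algebraMap ℝ R (s + s⁻¹) - a - b) a :=
    ((Commute.sub_left (Algebra.commute_algebraMap_left _ _) (Commute.refl a))).sub_left hc.symm
  have e := hc'.mul_nonneg h ha
  set m : ℝ := (s + s⁻¹) / 2 with hm
  set d : ℝ := (s - s⁻¹) / 2 with hd
  set c : R := a - algebraMap ℝ R m with hcdef
  have hsa : IsSelfAdjoint c := (IsSelfAdjoint.of_nonneg ha).sub (IsSelfAdjoint.algebraMap R (.all m))
  have hmd : d ^ 2 = m ^ 2 - 1 := by rw [hm, hd]; field_simp; ring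
  have key : star c * c ≤ algebraMap ℝ R (d ^ 2) := by
    rw [← sub_nonneg]
    convert e using 1
    rw [hsa.star_eq, hmd, show s + s⁻¹ = m + m by rw [hm]; ring, hcdef]
    have hcm := Algebra.commutes m a
    rw [sub_mul, sub_mul, hba, map_sub, map_pow, map_add, map_one, sub_mul, mul_sub, mul_sub,
      ← hcm]
    noncomm_ring
  have n1 := (CStarAlgebra.norm_le_iff_le_algebraMap _ (sq_nonneg d) (star_mul_self_nonneg c)).2 key
  rw [CStarRing.norm_star_mul_self, ← sq] at n1
  have n2 : ‖c‖ ≤ d := le_of_sq_le_sq n1 (by rw [hd]; linarith)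
  calc ‖a‖ = ‖c + algebraMap ℝ R m‖ := by rw [hcdef, sub_add_cancel]
    _ ≤ ‖c‖ + ‖algebraMap ℝ R m‖ := norm_add_le _ _
    _ ≤ d + m := by
      rw [norm_algebraMap', Real.norm_of_nonneg (by positivity)]; linarith
    _ = s := by rw [hm, hd]; ring

end aux

/-- An invertible operator `T` satisfies `‖T‖ ≤ r⁻¹` and `‖T⁻¹‖ ≤ r⁻¹` (i.e. lies in the
quantum annulus `ℚ𝔸_r`) if and only if `(r⁻² + r²)I − T*T − T⁻¹T⁻*` is positive
semidefinite. -/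
theorem qa_membership_positivity {H : Type*}
    [NormedAddCommGroup H] [InnerProductSpace ℂ H] [CompleteSpace H]
    (r : ℝ) (hr0 : 0 < r) (hr1 : r < 1)
    (T T' : H →L[ℂ] H) (hTinv : T * T' = 1) (hTinv' : T' * T = 1) :
    (‖T‖ ≤ r⁻¹ ∧ ‖T'‖ ≤ r⁻¹) ↔
      (((r⁻¹ ^ 2 + r ^ 2 : ℝ) : ℂ) • (1 : H →L[ℂ] H)
        - adjoint T * T - T' * adjoint T').IsPositive := by
  rw [← nonneg_iff_isPositive]
  simp only [← star_eq_adjoint]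
  have hs : 1 < r⁻¹ ^ 2 := one_lt_pow₀ ((one_lt_inv₀ hr0).2 hr1) two_ne_zero
  have hri : 0 < r⁻¹ := inv_pos.2 hr0
  have e0 : ((r⁻¹ ^ 2 + r ^ 2 : ℝ) : ℂ) • (1 : H →L[ℂ] H)
      = algebraMap ℝ (H →L[ℂ] H) (r⁻¹ ^ 2 + (r⁻¹ ^ 2)⁻¹) := by
    rw [inv_pow, inv_inv, Algebra.algebraMap_eq_smul_one, Complex.coe_smul]
  rw [e0]
  have st1 : star T * star T' = 1 := by rw [← star_mul, hTinv', star_one]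
  have st2 : star T' * star T = 1 := by rw [← star_mul, hTinv, star_one]
  have hab : (star T * T) * (T' * star T') = 1 := by
    rw [mul_assoc, ← mul_assoc T, hTinv, one_mul, st1]
  have hba : (T' * star T') * (star T * T) = 1 := by
    rw [mul_assoc, ← mul_assoc (star T'), st2, one_mul, hTinv']
  have ha := star_mul_self_nonneg T
  have hb := mul_star_self_nonneg T'
  have n1 : ‖T‖ ≤ r⁻¹ ↔ ‖star T * T‖ ≤ r⁻¹ ^ 2 := by
    rw [CStarRing.norm_star_mul_self, ← sq, sq_le_sq₀ (norm_nonneg _) hri.le]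
  have n2 : ‖T'‖ ≤ r⁻¹ ↔ ‖T' * star T'‖ ≤ r⁻¹ ^ 2 := by
    rw [CStarRing.norm_self_mul_star, ← sq, sq_le_sq₀ (norm_nonneg _) hri.le]
  rw [n1, n2]
  constructor
  · rintro ⟨h1, h2⟩
    exact qa_fwd _ (by linarith) _ _ ha hb hab hba h1 h2
  · intro h
    refine ⟨qa_bwd _ hs _ _ ha hab hba h, qa_bwd _ hs _ _ hb hba hab ?_⟩
    rwa [sub_right_comm]

end
end

section
/- Fix 0 < r < 1. Let H be a complex Hilbert space, let P₊ and P₋ be orthogonal projections on H with P₊ + P₋ = I, let U be a unitary operator on H with P₋ U P₊ = 0, and set J = U (r P₊ + r⁻¹ P₋). Then J is invertible, (r⁻² + r²)I − J*J − J⁻*J⁻¹ = (r⁻² − r²)(P₊ − U P₊ U*), the operator P₊ − U P₊ U* is an orthogonal projection, and (r⁻² + r²)I − J*J − J⁻*J⁻¹ = −((r⁻² + r²)I − JJ* − J⁻¹J⁻*). -/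
open ContinuousLinearMap

noncomputable section

/-- For `J = U (r P₊ + r⁻¹ P₋)` with `U` unitary, block upper triangular
(`P₋ U P₊ = 0`), and `P₊, P₋` complementary orthogonal projections:
`J` is invertible, `(r⁻² + r²)I − J*J − J⁻*J⁻¹ = (r⁻² − r²)(P₊ − U P₊ U*)`,
the operator `P₊ − U P₊ U*` is an orthogonal projection, and
`(r⁻² + r²)I − J*J − J⁻*J⁻¹ = −((r⁻² + r²)I − JJ* − J⁻¹J⁻*)`. -/
theorem pa_script_projection_identity {H : Type*}
    [NormedAddCommGroup H] [InnerProductSpace ℂ H] [CompleteSpace H]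
    (r : ℝ) (hr0 : 0 < r) (hr1 : r < 1)
    (Pp Pm U : H →L[ℂ] H)
    (hPp : IsOrthProj Pp) (hPm : IsOrthProj Pm) (hsum : Pp + Pm = 1)
    (hU : adjoint U * U = 1) (hU' : U * adjoint U = 1)
    (htri : Pm * U * Pp = 0)
    (J : H →L[ℂ] H) (hJ : J = U * ((r : ℂ) • Pp + (r : ℂ)⁻¹ • Pm)) :
    IsUnit J ∧
    (((r⁻¹ ^ 2 + r ^ 2 : ℝ) : ℂ) • (1 : H →L[ℂ] H) - adjoint J * J
        - adjoint (Ring.inverse J) * Ring.inverse J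
      = ((r⁻¹ ^ 2 - r ^ 2 : ℝ) : ℂ) • (Pp - U * Pp * adjoint U)) ∧
    IsOrthProj (Pp - U * Pp * adjoint U) ∧
    (((r⁻¹ ^ 2 + r ^ 2 : ℝ) : ℂ) • (1 : H →L[ℂ] H) - adjoint J * J
        - adjoint (Ring.inverse J) * Ring.inverse J
      = -(((r⁻¹ ^ 2 + r ^ 2 : ℝ) : ℂ) • (1 : H →L[ℂ] H) - J * adjoint J
          - Ring.inverse J * adjoint (Ring.inverse J))) := by
  obtain ⟨hPs, hPP⟩ := hPp
  have hPm1 : Pm = 1 - Pp := by rw [← hsum]; abel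
  have hr : (r : ℂ) ≠ 0 := by exact_mod_cast hr0.ne'
  subst hPm1
  rw [← star_eq_adjoint] at hU hU'
  simp only [← star_eq_adjoint]
  have hPs' : star Pp = Pp := hPs
  have hD : ∀ a b c d : ℂ, (a • Pp + b • (1 - Pp)) * (c • Pp + d • (1 - Pp))
      = (a * c) • Pp + (b * d) • (1 - Pp) := by
    intro a b c d
    simp only [mul_add, add_mul, smul_mul_smul_comm, mul_sub, sub_mul, hPP, mul_one, one_mul,
      sub_self, smul_zero, add_zero, zero_add, sub_zero]
  have hDs : ∀ a b : ℝ, star ((a : ℂ) • Pp + (b : ℂ) • (1 - Pp))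
      = (a : ℂ) • Pp + (b : ℂ) • (1 - Pp) := by
    intro a b
    simp [star_add, star_smul, hPs']
  have hUD : ∀ a b : ℂ, U * (a • Pp + b • (1 - Pp)) * star U
      = a • (U * Pp * star U) + b • (1 - U * Pp * star U) := by
    intro a b
    simp only [mul_add, add_mul, mul_smul_comm, smul_mul_assoc, mul_sub, sub_mul, mul_one, hU']
  have hJ' : J = U * ((r : ℂ) • Pp + ((r⁻¹ : ℝ) : ℂ) • (1 - Pp)) := by
    rw [hJ]; push_cast; rfl
  set D := (r : ℂ) • Pp + ((r⁻¹ : ℝ) : ℂ) • (1 - Pp) with hDdef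
  set E := ((r⁻¹ : ℝ) : ℂ) • Pp + (r : ℂ) • (1 - Pp) with hEdef
  have hDE : D * E = 1 := by
    rw [hDdef, hEdef, hD]; push_cast; rw [mul_inv_cancel₀ hr, inv_mul_cancel₀ hr]; simp
  have hED : E * D = 1 := by
    rw [hDdef, hEdef, hD]; push_cast; rw [mul_inv_cancel₀ hr, inv_mul_cancel₀ hr]; simp
  have hsD : star D = D := hDs _ _
  have hsE : star E = E := hDs _ _
  have h1 : J * (E * star U) = 1 := by
    rw [hJ', mul_assoc, ← mul_assoc D, hDE, one_mul, hU']
  have h2 : (E * star U) * J = 1 := by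
    rw [hJ', mul_assoc, ← mul_assoc (star U), hU, one_mul, hED]
  have hunit : IsUnit J := ⟨⟨J, E * star U, h1, h2⟩, rfl⟩
  have hinv : Ring.inverse J = E * star U := Ring.inverse_unit ⟨J, E * star U, h1, h2⟩
  have e1 : star J * J = D * D := by
    rw [hJ', star_mul, hsD, mul_assoc, ← mul_assoc (star U), hU, one_mul]
  have e2 : star (E * star U) * (E * star U) = U * (E * E) * star U := by
    rw [star_mul, hsE, star_star]; simp only [mul_assoc]
  have e3 : J * star J = U * (D * D) * star U := by
    rw [hJ', star_mul, hsD]; simp only [mul_assoc]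
  have e4 : (E * star U) * star (E * star U) = E * E := by
    rw [star_mul, hsE, star_star, mul_assoc, ← mul_assoc (star U), hU, one_mul]
  have hUP : Pp * U * Pp = U * Pp := by
    rw [sub_mul, sub_mul, one_mul, sub_eq_zero] at htri
    exact htri.symm
  have hQs : star (U * Pp * star U) = U * Pp * star U := by
    simp only [star_mul, star_star, hPs', mul_assoc]
  have hPQ : Pp * (U * Pp * star U) = U * Pp * star U := by
    rw [← mul_assoc, ← mul_assoc, hUP]
  have hQP : (U * Pp * star U) * Pp = U * Pp * star U := by
    have := congrArg star hPQ
    rwa [star_mul, hQs, hPs'] at this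
  have hQQ : (U * Pp * star U) * (U * Pp * star U) = U * Pp * star U := by
    calc _ = U * Pp * (star U * U) * Pp * star U := by simp only [mul_assoc]
      _ = _ := by rw [hU, mul_one, mul_assoc U, hPP]
  rw [hinv, e1, e2, e3, e4, hDdef, hEdef, hD, hD, hUD, hUD]
  generalize U * Pp * star U = Q at *
  refine ⟨hunit, ?_, ⟨?_, ?_⟩, ?_⟩
  · push_cast; module
  · exact (IsSelfAdjoint.sub hPs hQs)
  · rw [mul_sub, sub_mul, sub_mul, hPP, hQP, hPQ, hQQ]; abel
  · push_cast; module

end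
end

section
/- Fix 0 < r < 1 and let H be a complex Hilbert space. For an invertible bounded linear operator J on H, the following are equivalent: (i) J ∈ 𝒫𝔸_r[H], i.e., there exist orthogonal projections P₊ and P₋ on H with P₊ + P₋ = I and a unitary U on H with P₋ U P₊ = 0 such that J = U (r P₊ + r⁻¹ P₋); (ii) (r⁻² + r²)I − J*J − J⁻*J⁻¹ = −((r⁻² + r²)I − JJ* − J⁻¹J⁻*) and the operator (1/(r⁻² − r²)) ((r⁻² + r²)I − J*J − J⁻*J⁻¹) is an orthogonal projection. -/
open ContinuousLinearMap

noncomputable section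

/-- Membership in `𝒫𝔸_r`: `J = U (r P₊ + r⁻¹ P₋)` with `P₊, P₋` complementary orthogonal
projections and `U` a unitary that is block upper triangular (`P₋ U P₊ = 0`). -/
def memPAscript (r : ℝ) {H : Type*} [NormedAddCommGroup H] [InnerProductSpace ℂ H]
    [CompleteSpace H] (J : H →L[ℂ] H) : Prop :=
  ∃ Pp Pm U : H →L[ℂ] H, IsOrthProj Pp ∧ IsOrthProj Pm ∧ Pp + Pm = 1 ∧
    adjoint U * U = 1 ∧ U * adjoint U = 1 ∧ Pm * U * Pp = 0 ∧
    J = U * ((r : ℂ) • Pp + (r : ℂ)⁻¹ • Pm)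

theorem paFwdAlg {A : Type*} [Ring A] [StarRing A] [Algebra ℂ A] [StarModule ℂ A]
    (c ci : ℂ) (hc : c * ci = 1) (sc : star c = c) (sci : star ci = ci)
    (hd : ci ^ 2 - c ^ 2 ≠ 0) (J J' P U : A) (h1 : J * J' = 1)
    (sP : star P = P) (PP : P * P = P) (u1 : star U * U = 1) (u2 : U * star U = 1)
    (h0 : (1 - P) * U * P = 0) (hJ : J = U * (c • P + ci • (1 - P))) :
    ((ci ^ 2 + c ^ 2) • (1 : A) - star J * J - star J' * J'
      = -((ci ^ 2 + c ^ 2) • (1 : A) - J * star J - J' * star J')) ∧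
    ∃ E : A, star E = E ∧ E * E = E ∧
      (ci ^ 2 + c ^ 2) • (1 : A) - star J * J - star J' * J' = (ci ^ 2 - c ^ 2) • E := by
  obtain ⟨D, hD⟩ : ∃ D, D = c • P + ci • (1 - P) := ⟨_, rfl⟩
  obtain ⟨D', hD'⟩ : ∃ D', D' = ci • P + c • (1 - P) := ⟨_, rfl⟩
  have hc' : ci * c = 1 := by rw [mul_comm]; exact hc
  have sD : star D = D := by rw [hD]; simp [sP, sc, sci]
  have sD' : star D' = D' := by rw [hD']; simp [sP, sc, sci]
  have e1 : D' * D = 1 := by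
    rw [hD, hD']
    simp only [mul_add, add_mul, smul_mul_smul_comm, mul_sub, sub_mul, PP, mul_one, one_mul, hc, hc']
    simp
  have e1' : D * D' = 1 := by
    rw [hD, hD']
    simp only [mul_add, add_mul, smul_mul_smul_comm, mul_sub, sub_mul, PP, mul_one, one_mul, hc, hc']
    simp
  have e2 : D * D = ci ^ 2 • (1 : A) - (ci ^ 2 - c ^ 2) • P := by
    rw [hD]
    simp only [mul_add, add_mul, smul_mul_smul_comm, mul_sub, sub_mul, PP, mul_one, one_mul, hc, hc']
    module
  have e3 : D' * D' = c ^ 2 • (1 : A) + (ci ^ 2 - c ^ 2) • P := by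
    rw [hD']
    simp only [mul_add, add_mul, smul_mul_smul_comm, mul_sub, sub_mul, PP, mul_one, one_mul, hc, hc']
    module
  rw [← hD] at hJ
  have hJ' : J' = D' * star U := by
    have h2 : (D' * star U) * J = 1 := by
      rw [hJ, mul_assoc, ← mul_assoc (star U), u1, one_mul, e1]
    calc J' = ((D' * star U) * J) * J' := by rw [h2, one_mul]
      _ = _ := by rw [mul_assoc, h1, mul_one]
  have a1 : star J * J = D * D := by
    rw [hJ, star_mul, sD, mul_assoc, ← mul_assoc (star U), u1, one_mul]
  have a2 : J' * star J' = D' * D' := by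
    rw [hJ', star_mul, sD', star_star, mul_assoc, ← mul_assoc (star U), u1, one_mul]
  have a3 : J * star J = U * (D * D) * star U := by
    rw [hJ, star_mul, sD]; simp only [mul_assoc]
  have a4 : star J' * J' = U * (D' * D') * star U := by
    rw [hJ', star_mul, sD', star_star]; simp only [mul_assoc]
  have b3 : J * star J = ci ^ 2 • (1 : A) - (ci ^ 2 - c ^ 2) • (U * P * star U) := by
    rw [a3, e2]; simp [mul_sub, sub_mul, u2]
  have b4 : star J' * J' = c ^ 2 • (1 : A) + (ci ^ 2 - c ^ 2) • (U * P * star U) := by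
    rw [a4, e3]; simp [mul_add, add_mul, u2]
  rw [a1, b4, b3, a2, e2, e3]
  have k1 : P * U * P = U * P := by
    rw [sub_mul, sub_mul, one_mul, sub_eq_zero] at h0; exact h0.symm
  have k2 : P * (star U * P) = P * star U := by
    have := congrArg star k1
    simpa [sP, mul_assoc] using this
  have q1 : P * (U * P * star U) = U * P * star U := by
    rw [← mul_assoc, ← mul_assoc, k1]
  have q2 : (U * P * star U) * P = U * P * star U := by
    rw [mul_assoc, mul_assoc, k2, ← mul_assoc]
  have q3 : (U * P * star U) * (U * P * star U) = U * P * star U := by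
    calc _ = U * P * (star U * U) * P * star U := by simp only [mul_assoc]
      _ = U * (P * P) * star U := by rw [u1, mul_one, mul_assoc U P P]
      _ = _ := by rw [PP]
  refine ⟨by module, P - U * P * star U, ?_, ?_, by module⟩
  · simp [sP, mul_assoc]
  · rw [sub_mul, mul_sub, mul_sub, PP, q1, q2, q3]; abel

theorem paBwdAlg {A : Type*} [Ring A] [StarRing A] [Algebra ℂ A] [StarModule ℂ A]
    (c ci : ℂ) (hc : c * ci = 1) (sc : star c = c) (sci : star ci = ci)
    (hd : ci ^ 2 - c ^ 2 ≠ 0) (J J' : A) (h1 : J * J' = 1) (h2 : J' * J = 1)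
    (hA : star J * J + J' * star J' = (ci ^ 2 + c ^ 2) • (1 : A))
    (E : A) (EE : E * E = E)
    (hE : (ci ^ 2 + c ^ 2) • (1 : A) - star J * J - star J' * J' = (ci ^ 2 - c ^ 2) • E) :
    ∃ P U : A, star P = P ∧ P * P = P ∧ star U * U = 1 ∧ U * star U = 1 ∧
      (1 - P) * U * P = 0 ∧ J = U * (c • P + ci • (1 - P)) := by
  have hc' : ci * c = 1 := by rw [mul_comm]; exact hc
  obtain ⟨d, hdd⟩ : ∃ d, d = ci ^ 2 - c ^ 2 := ⟨_, rfl⟩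
  rw [← hdd] at hd hE
  have sd : star d = d := by rw [hdd]; simp [sc, sci]
  obtain ⟨P, hP⟩ : ∃ P, P = d⁻¹ • (ci ^ 2 • (1 : A) - star J * J) := ⟨_, rfl⟩
  have hJJ : star J * J = ci ^ 2 • (1 : A) - d • P := by
    rw [hP, smul_inv_smul₀ hd]; abel
  have hJJ' : J' * star J' = c ^ 2 • (1 : A) + d • P := by
    rw [eq_sub_of_add_eq' hA, hJJ]; module
  have sP : star P = P := by
    rw [hP]; simp [sc, sci, sd]
  have sJ : star J' * star J = 1 := by rw [← star_mul, h1, star_one]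
  have sJ' : star J * star J' = 1 := by rw [← star_mul, h2, star_one]
  have cc : ci ^ 2 * c ^ 2 = 1 := by rw [← mul_pow, hc', one_pow]
  have PP : P * P = P := by
    have h : (J' * star J') * (star J * J) = 1 := by
      rw [mul_assoc, ← mul_assoc (star J'), sJ, one_mul, h2]
    rw [hJJ, hJJ'] at h
    simp only [add_mul, mul_sub, smul_mul_smul_comm, mul_one, one_mul] at h
    have h3 : (d * d) • (P * P) = (d * d) • P := by
      have : (d * d) • (P * P) = (c ^ 2 * ci ^ 2) • (1 : A) - (1 : A) + (d * (ci ^ 2 - c ^ 2)) • P := by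
        nth_rewrite 2 [← h]; module
      rw [this, ← hdd, mul_comm (c ^ 2), cc, one_smul, sub_self, zero_add]
    exact (smul_right_injective A (mul_ne_zero hd hd)) h3
  obtain ⟨D, hD⟩ : ∃ D, D = c • P + ci • (1 - P) := ⟨_, rfl⟩
  obtain ⟨D', hD'⟩ : ∃ D', D' = ci • P + c • (1 - P) := ⟨_, rfl⟩
  have sD : star D = D := by rw [hD]; simp [sP, sc, sci]
  have sD' : star D' = D' := by rw [hD']; simp [sP, sc, sci]
  have e1 : D' * D = 1 := by
    rw [hD, hD']
    simp only [mul_add, add_mul, smul_mul_smul_comm, mul_sub, sub_mul, PP, mul_one, one_mul, hc, hc']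
    simp
  have e1' : D * D' = 1 := by
    rw [hD, hD']
    simp only [mul_add, add_mul, smul_mul_smul_comm, mul_sub, sub_mul, PP, mul_one, one_mul, hc, hc']
    simp
  have e2 : D * D = star J * J := by
    rw [hD, hJJ, hdd]
    simp only [mul_add, add_mul, smul_mul_smul_comm, mul_sub, sub_mul, PP, mul_one, one_mul, hc, hc']
    module
  have e3 : D' * D' = J' * star J' := by
    rw [hD', hJJ', hdd]
    simp only [mul_add, add_mul, smul_mul_smul_comm, mul_sub, sub_mul, PP, mul_one, one_mul, hc, hc']
    module
  obtain ⟨U, hU⟩ : ∃ U, U = J * D' := ⟨_, rfl⟩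
  have hJ : J = U * D := by rw [hU, mul_assoc, e1, mul_one]
  have u1 : star U * U = 1 := by
    calc star U * U = D' * (star J * J) * D' := by rw [hU, star_mul, sD']; simp only [mul_assoc]
      _ = (D' * D) * (D * D') := by rw [← e2]; simp only [mul_assoc]
      _ = 1 := by rw [e1, e1', one_mul]
  have u2 : U * star U = 1 := by
    calc U * star U = J * (D' * D') * star J := by rw [hU, star_mul, sD']; simp only [mul_assoc]
      _ = (J * J') * (star J' * star J) := by rw [e3]; simp only [mul_assoc]
      _ = 1 := by rw [h1, sJ, one_mul]
  have hJ' : J' = D' * star U := by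
    rw [hU, star_mul, sD', ← mul_assoc, e3, mul_assoc, sJ, mul_one]
  obtain ⟨Q, hQ⟩ : ∃ Q, Q = U * P * star U := ⟨_, rfl⟩
  have b4 : star J' * J' = c ^ 2 • (1 : A) + d • Q := by
    have : star J' * J' = U * (D' * D') * star U := by
      rw [hJ', star_mul, sD', star_star]; simp only [mul_assoc]
    rw [this, e3, hJJ', hQ]; simp [mul_add, add_mul, u2]
  have q3 : Q * Q = Q := by
    rw [hQ]
    calc _ = U * P * (star U * U) * P * star U := by simp only [mul_assoc]
      _ = U * (P * P) * star U := by rw [u1, mul_one, mul_assoc U P P]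
      _ = _ := by rw [PP]
  have hEPQ : E = P - Q := by
    rw [hJJ, b4] at hE
    apply smul_right_injective A hd
    simp only
    rw [← hE]; module
  rw [hEPQ] at EE
  have k : P * Q + Q * P = Q + Q := by
    rw [sub_mul, mul_sub, mul_sub, PP, q3] at EE
    have : P * Q + Q * P = P + Q - (P - P * Q - (Q * P - Q)) := by abel
    rw [this, EE]; abel
  have k1 : P * Q * P = P * Q := by
    have := congrArg (fun x => P * x) k
    simp only [mul_add, ← mul_assoc, PP] at this
    exact add_left_cancel this
  have k2 : P * Q * P = Q * P := by
    have := congrArg (fun x => x * P) k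
    simp only [add_mul, mul_assoc, PP] at this
    rw [mul_assoc]
    exact add_right_cancel this
  have k3 : P * Q = Q := by
    rw [← k2, k1] at k
    have h2 : (2 : ℂ) • (P * Q) = (2 : ℂ) • Q := by rw [two_smul, two_smul, k]
    exact smul_right_injective A (two_ne_zero) h2
  refine ⟨P, U, sP, PP, u1, u2, ?_, by rw [← hD]; exact hJ⟩
  have h3 : Q * U = U * P := by rw [hQ, mul_assoc, u1, mul_one]
  rw [mul_assoc, ← h3, ← mul_assoc, sub_mul, k3, one_mul, sub_self, zero_mul]

theorem paNormBound {H : Type*}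
    [NormedAddCommGroup H] [InnerProductSpace ℂ H] [CompleteSpace H]
    (r : ℝ) (hr0 : 0 < r) (hr1 : r < 1) (J J' : H →L[ℂ] H) (h1 : J * J' = 1)
    (h : ∀ x, ‖J x‖ ^ 2 + ‖J' x‖ ^ 2 ≤ (r⁻¹ ^ 2 + r ^ 2) * ‖x‖ ^ 2) : ‖J‖ ≤ r⁻¹ := by
  by_contra hM
  push Not at hM
  have hri : 1 < r⁻¹ := (one_lt_inv₀ hr0).2 hr1
  obtain ⟨M, hMM⟩ : ∃ M, M = ‖J‖ := ⟨_, rfl⟩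
  have hM0 : 0 < M := by rw [hMM]; linarith
  have hM2 : r⁻¹ ^ 2 < M ^ 2 := by
    rw [hMM]; exact pow_lt_pow_left₀ hM (by linarith) two_ne_zero
  have hr2 : r ^ 2 < 1 := by nlinarith
  have hi2 : 1 < r⁻¹ ^ 2 := by nlinarith
  have hrr : r⁻¹ ^ 2 * r ^ 2 = 1 := by rw [← mul_pow, inv_mul_cancel₀ hr0.ne', one_pow]
  obtain ⟨t, ht⟩ : ∃ t, t = r⁻¹ ^ 2 + r ^ 2 - (M ^ 2)⁻¹ := ⟨_, rfl⟩
  have hMi : (M ^ 2)⁻¹ < 1 := inv_lt_one_of_one_lt₀ (by linarith)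
  have ht0 : 0 ≤ t := by rw [ht]; nlinarith [sq_nonneg r]
  have hJ : ‖J‖ ≤ √t := by
    apply ContinuousLinearMap.opNorm_le_bound _ (Real.sqrt_nonneg _)
    intro x
    have hx := h x
    have e : J (J' x) = x := by
      have := congrArg (fun T : H →L[ℂ] H => T x) h1
      simpa using this
    have h3 : ‖x‖ ≤ M * ‖J' x‖ := by
      have := J.le_opNorm (J' x)
      rwa [e, ← hMM] at this
    have h4 : ‖x‖ ^ 2 ≤ M ^ 2 * ‖J' x‖ ^ 2 := by
      rw [← mul_pow]; exact pow_le_pow_left₀ (norm_nonneg _) h3 2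
    have h5 : (M ^ 2)⁻¹ * ‖x‖ ^ 2 ≤ ‖J' x‖ ^ 2 := by
      rw [inv_mul_le_iff₀ (by positivity)]; exact h4
    refine (sq_le_sq₀ (norm_nonneg _) (by positivity)).1 ?_
    rw [mul_pow, Real.sq_sqrt ht0, ht]
    linarith
  have h6 : M ^ 2 ≤ t := by
    rw [← Real.sq_sqrt ht0, hMM]; exact pow_le_pow_left₀ (norm_nonneg _) hJ 2
  have h7 : M ^ 2 * (M ^ 2)⁻¹ = 1 := mul_inv_cancel₀ (by positivity)
  have h8 : M ^ 2 * M ^ 2 ≤ M ^ 2 * t := mul_le_mul_of_nonneg_left h6 (by positivity)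
  rw [ht] at h8
  have : 0 < (M ^ 2 - r⁻¹ ^ 2) * (M ^ 2 - r ^ 2) := mul_pos (by linarith) (by linarith)
  nlinarith

theorem paProdNonneg {H : Type*}
    [NormedAddCommGroup H] [InnerProductSpace ℂ H] [CompleteSpace H]
    (a : ℝ) (X Y : H →L[ℂ] H) (hX : X ≤ algebraMap ℝ _ a) (hY : Y ≤ algebraMap ℝ _ a)
    (hXY : X * Y = 1) (hYX : Y * X = 1) :
    0 ≤ (((a ^ 2 + 1 : ℝ) : ℂ) • (1 : H →L[ℂ] H) - (a : ℂ) • (X + Y)) := by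
  have hc : Commute (algebraMap ℝ (H →L[ℂ] H) a - X) (algebraMap ℝ _ a - Y) := by
    apply Commute.sub_left
    · exact Algebra.commutes _ _
    · apply Commute.sub_right
      · exact (Algebra.commutes _ _).symm
      · exact hXY.trans hYX.symm
  have := hc.mul_nonneg (sub_nonneg.2 hX) (sub_nonneg.2 hY)
  convert this using 1
  have e : algebraMap ℝ (H →L[ℂ] H) a = (a : ℂ) • 1 := by
    rw [Algebra.algebraMap_eq_smul_one]; ext x; simp
  rw [e]
  simp only [sub_mul, mul_sub, smul_mul_assoc, mul_smul_comm, one_mul, mul_one, hXY]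
  push_cast
  module

theorem paKey {H : Type*}
    [NormedAddCommGroup H] [InnerProductSpace ℂ H] [CompleteSpace H]
    (r : ℝ) (hr0 : 0 < r) (hr1 : r < 1)
    (J J' E : H →L[ℂ] H) (h1 : J * J' = 1) (h2 : J' * J = 1)
    (he : ((r⁻¹ ^ 2 + r ^ 2 : ℝ) : ℂ) • (1 : H →L[ℂ] H) - star J * J - star J' * J'
          = -(((r⁻¹ ^ 2 + r ^ 2 : ℝ) : ℂ) • (1 : H →L[ℂ] H) - J * star J
              - J' * star J'))
    (sE : star E = E) (EE : E * E = E)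
    (hE : ((r⁻¹ ^ 2 + r ^ 2 : ℝ) : ℂ) • (1 : H →L[ℂ] H) - star J * J - star J' * J' =
      ((r⁻¹ ^ 2 - r ^ 2 : ℝ) : ℂ) • E) :
    star J * J + J' * star J' = ((r⁻¹ ^ 2 + r ^ 2 : ℝ) : ℂ) • (1 : H →L[ℂ] H) := by
  have hri : 1 < r⁻¹ := (one_lt_inv₀ hr0).2 hr1
  have hr2 : r ^ 2 < 1 := by nlinarith
  have hi2 : 1 < r⁻¹ ^ 2 := by nlinarith
  have hrr : r⁻¹ ^ 2 * r ^ 2 = 1 := by rw [← mul_pow, inv_mul_cancel₀ hr0.ne', one_pow]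
  have hb : ∀ x, ‖J x‖ ^ 2 + ‖J' x‖ ^ 2 ≤ (r⁻¹ ^ 2 + r ^ 2) * ‖x‖ ^ 2 := by
    intro x
    have h := congrArg (fun T : H →L[ℂ] H => (inner ℂ (T x) x).re) hE
    have hT : ∀ T : H →L[ℂ] H, (inner ℂ ((star T * T) x) x).re = ‖T x‖ ^ 2 := fun T =>
      (ContinuousLinearMap.apply_norm_sq_eq_inner_adjoint_left T x).symm
    have hEx : (inner ℂ (E x) x).re = ‖E x‖ ^ 2 := by
      rw [← hT E, sE, EE]
    have hxx : (inner ℂ x x).re = ‖x‖ ^ 2 := inner_self_eq_norm_sq (𝕜 := ℂ) x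
    simp only [sub_apply, smul_apply, one_apply_eq_self, inner_sub_left, inner_smul_left, Complex.sub_re,
      Complex.conj_ofReal, Complex.re_ofReal_mul, hT, hEx, hxx] at h
    have : 0 ≤ (r⁻¹ ^ 2 - r ^ 2) * ‖E x‖ ^ 2 := mul_nonneg (by linarith) (by positivity)
    linarith
  have hn1 : ‖J‖ ≤ r⁻¹ := paNormBound r hr0 hr1 J J' h1 hb
  have hn2 : ‖J'‖ ≤ r⁻¹ := paNormBound r hr0 hr1 J' J h2 (fun x => by rw [add_comm]; exact hb x)
  have am : ∀ T : H →L[ℂ] H, ‖T‖ ≤ r⁻¹ → algebraMap ℝ (H →L[ℂ] H) (‖T‖ ^ 2) ≤ algebraMap ℝ _ (r⁻¹ ^ 2) :=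
    fun T hT => algebraMap_mono _ (pow_le_pow_left₀ (norm_nonneg _) hT 2)
  have sJ : star J' * star J = 1 := by rw [← star_mul, h1, star_one]
  have sJ' : star J * star J' = 1 := by rw [← star_mul, h2, star_one]
  have p1 := paProdNonneg (r⁻¹ ^ 2) (star J * J) (J' * star J')
    (CStarAlgebra.star_mul_le_algebraMap_norm_sq.trans (am _ hn1))
    (CStarAlgebra.mul_star_le_algebraMap_norm_sq.trans (am _ hn2))
    (by rw [mul_assoc, ← mul_assoc J, h1, one_mul, sJ'])
    (by rw [mul_assoc, ← mul_assoc (star J'), sJ, one_mul, h2])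
  have p2 := paProdNonneg (r⁻¹ ^ 2) (J * star J) (star J' * J')
    (CStarAlgebra.mul_star_le_algebraMap_norm_sq.trans (am _ hn1))
    (CStarAlgebra.star_mul_le_algebraMap_norm_sq.trans (am _ hn2))
    (by rw [mul_assoc, ← mul_assoc (star J), sJ', one_mul, h1])
    (by rw [mul_assoc, ← mul_assoc J', h2, one_mul, sJ])
  have hs : ((r⁻¹ ^ 2) ^ 2 + 1 : ℝ) = r⁻¹ ^ 2 * (r⁻¹ ^ 2 + r ^ 2) := by rw [mul_add, hrr]; ring
  rw [hs, Complex.ofReal_mul, mul_smul, ← smul_sub] at p1 p2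
  have hz := (add_eq_zero_iff_of_nonneg p1 p2).1 (by
    rw [← smul_add]
    rw [← sub_eq_zero] at he
    convert smul_zero _ using 2
    rw [← he]; abel)
  have h0 : ((r⁻¹ ^ 2 : ℝ) : ℂ) ≠ 0 := by
    rw [Complex.ofReal_ne_zero]; linarith
  have := (smul_eq_zero.1 hz.1).resolve_left h0
  exact (sub_eq_zero.1 this).symm

/-- An invertible operator `J` lies in `𝒫𝔸_r` if and only if
`(r⁻² + r²)I − J*J − J⁻*J⁻¹ = −((r⁻² + r²)I − JJ* − J⁻¹J⁻*)` and
`(1/(r⁻² − r²)) ((r⁻² + r²)I − J*J − J⁻*J⁻¹)` is an orthogonal projection. -/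
theorem pa_script_characterization {H : Type*}
    [NormedAddCommGroup H] [InnerProductSpace ℂ H] [CompleteSpace H]
    (r : ℝ) (hr0 : 0 < r) (hr1 : r < 1)
    (J J' : H →L[ℂ] H) (hJinv : J * J' = 1) (hJinv' : J' * J = 1) :
    memPAscript r J ↔
      ((((r⁻¹ ^ 2 + r ^ 2 : ℝ) : ℂ) • (1 : H →L[ℂ] H) - adjoint J * J - adjoint J' * J'
          = -(((r⁻¹ ^ 2 + r ^ 2 : ℝ) : ℂ) • (1 : H →L[ℂ] H) - J * adjoint J
              - J' * adjoint J')) ∧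
        IsOrthProj ((((r⁻¹ ^ 2 - r ^ 2 : ℝ)⁻¹ : ℝ) : ℂ) •
          (((r⁻¹ ^ 2 + r ^ 2 : ℝ) : ℂ) • (1 : H →L[ℂ] H) - adjoint J * J
            - adjoint J' * J'))) := by
  have hri : 1 < r⁻¹ := (one_lt_inv₀ hr0).2 hr1
  have hr2 : r ^ 2 < 1 := by nlinarith
  have hi2 : 1 < r⁻¹ ^ 2 := by nlinarith
  have hd0 : (r⁻¹ ^ 2 - r ^ 2 : ℝ) ≠ 0 := by linarith
  have hd : ((r⁻¹ ^ 2 - r ^ 2 : ℝ) : ℂ) ≠ 0 := Complex.ofReal_ne_zero.2 hd0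
  have cs : ((r⁻¹ ^ 2 + r ^ 2 : ℝ) : ℂ) = ((r : ℂ)⁻¹) ^ 2 + (r : ℂ) ^ 2 := by push_cast; rfl
  have cd : ((r⁻¹ ^ 2 - r ^ 2 : ℝ) : ℂ) = ((r : ℂ)⁻¹) ^ 2 - (r : ℂ) ^ 2 := by push_cast; rfl
  have hc : (r : ℂ) * (r : ℂ)⁻¹ = 1 := mul_inv_cancel₀ (Complex.ofReal_ne_zero.2 hr0.ne')
  have sc : star (r : ℂ) = r := Complex.conj_ofReal r
  have sci : star (r : ℂ)⁻¹ = (r : ℂ)⁻¹ := by rw [star_inv₀, sc]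
  simp only [← star_eq_adjoint]
  constructor
  · rintro ⟨Pp, Pm, U, hp, -, hpm, u1, u2, h0, hJ⟩
    have hPm : Pm = 1 - Pp := eq_sub_of_add_eq' hpm
    subst hPm
    have := paFwdAlg (r : ℂ) (r : ℂ)⁻¹ hc sc sci (by rwa [← cd]) J J' Pp U hJinv hp.1 hp.2 u1 u2 h0 hJ
    rw [← cs, ← cd] at this
    obtain ⟨e, E, sE, EE, hE⟩ := this
    refine ⟨e, ?_⟩
    rw [hE, Complex.ofReal_inv, inv_smul_smul₀ hd]
    exact ⟨sE, EE⟩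
  · rintro ⟨he, hE⟩
    obtain ⟨E, hEE⟩ : ∃ E, E = (((r⁻¹ ^ 2 - r ^ 2 : ℝ)⁻¹ : ℝ) : ℂ) •
          (((r⁻¹ ^ 2 + r ^ 2 : ℝ) : ℂ) • (1 : H →L[ℂ] H) - star J * J
            - star J' * J') := ⟨_, rfl⟩
    rw [← hEE] at hE
    have hE2 : ((r⁻¹ ^ 2 + r ^ 2 : ℝ) : ℂ) • (1 : H →L[ℂ] H) - star J * J - star J' * J' =
      ((r⁻¹ ^ 2 - r ^ 2 : ℝ) : ℂ) • E := by
      rw [hEE, Complex.ofReal_inv, smul_inv_smul₀ hd]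
    have key := paKey r hr0 hr1 J J' E hJinv hJinv' he hE.1 hE.2 hE2
    rw [cs] at key
    rw [cs, cd] at hE2
    obtain ⟨P, U, sP, PP, u1, u2, h0, hJ⟩ := paBwdAlg (r : ℂ) (r : ℂ)⁻¹ hc sc sci (by rwa [← cd]) J J'
      hJinv hJinv' key E hE.2 hE2
    refine ⟨P, 1 - P, U, ⟨sP, PP⟩, ⟨?_, ?_⟩, by abel, u1, u2, h0, hJ⟩
    · exact (IsSelfAdjoint.one _).sub sP
    · rw [sub_mul, mul_sub, mul_sub, PP]; simp

end
end

section
/- Fix 0 < r < 1. Let H and K be complex Hilbert spaces, let T be an invertible bounded linear operator on H, let Y ∈ ℙ𝔸_r[K], and let V : H → K be a linear isometry such that T = V* Y V and T⁻¹ = V* Y⁻¹ V. Then T ∈ ℙ𝔸_r[H]; that is, ℙ𝔸_r is closed with respect to ℂ[x,x⁻¹]-dilations. -/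
open ContinuousLinearMap

noncomputable section

theorem pick_aux {H : Type*}
    [NormedAddCommGroup H] [InnerProductSpace ℂ H] [CompleteSpace H]
    (c : ℝ) (T T' : H →L[ℂ] H) :
    (((c : ℝ) : ℂ) • (1 : H →L[ℂ] H) - adjoint T * T - adjoint T' * T').IsPositive ↔
      ∀ x, ‖T x‖ ^ 2 + ‖T' x‖ ^ 2 ≤ c * ‖x‖ ^ 2 := by
  have key : ∀ x, inner ℂ ((((c : ℝ) : ℂ) • (1 : H →L[ℂ] H) - adjoint T * T
      - adjoint T' * T') x) x = ((c * ‖x‖ ^ 2 - ‖T x‖ ^ 2 - ‖T' x‖ ^ 2 : ℝ) : ℂ) := by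
    intro x
    simp [inner_sub_left, inner_smul_left, adjoint_inner_left, inner_self_eq_norm_sq_to_K]
  rw [isPositive_iff_complex]
  refine forall_congr' fun x => ?_
  rw [key]
  simp only [RCLike.re_to_complex, Complex.ofReal_re]
  constructor
  · rintro ⟨-, h⟩
    linarith
  · intro h
    exact ⟨trivial, by linarith⟩

/-- The Pick annulus `ℙ𝔸_r` is closed with respect to `ℂ[x,x⁻¹]`-dilations: if
`Y ∈ ℙ𝔸_r[K]` and `V : H → K` is an isometry with `T = V* Y V` and `T⁻¹ = V* Y⁻¹ V`,
then `T ∈ ℙ𝔸_r[H]`. -/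
theorem pick_annulus_closed_dilations {H K : Type*}
    [NormedAddCommGroup H] [InnerProductSpace ℂ H] [CompleteSpace H]
    [NormedAddCommGroup K] [InnerProductSpace ℂ K] [CompleteSpace K]
    (r : ℝ) (hr0 : 0 < r) (hr1 : r < 1)
    (Y Y' : K →L[ℂ] K) (hYinv : Y * Y' = 1) (hYinv' : Y' * Y = 1)
    (hYpick : (((r⁻¹ ^ 2 + r ^ 2 : ℝ) : ℂ) • (1 : K →L[ℂ] K)
      - adjoint Y * Y - adjoint Y' * Y').IsPositive)
    (T T' : H →L[ℂ] H) (hTinv : T * T' = 1) (hTinv' : T' * T = 1)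
    (V : H →L[ℂ] K) (hV : ∀ x, ‖V x‖ = ‖x‖)
    (hT : T = adjoint V ∘L Y ∘L V) (hT' : T' = adjoint V ∘L Y' ∘L V) :
    (((r⁻¹ ^ 2 + r ^ 2 : ℝ) : ℂ) • (1 : H →L[ℂ] H)
      - adjoint T * T - adjoint T' * T').IsPositive := by
  rw [pick_aux] at hYpick ⊢
  have hVa : ∀ y, ‖adjoint V y‖ ≤ ‖y‖ := by
    intro y
    have h1 : ‖V‖ ≤ 1 := V.opNorm_le_bound zero_le_one fun x => by rw [hV, one_mul]
    have h2 : ‖adjoint V‖ = ‖V‖ := LinearIsometryEquiv.norm_map _ _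
    calc ‖adjoint V y‖ ≤ ‖adjoint V‖ * ‖y‖ := le_opNorm _ _
      _ ≤ 1 * ‖y‖ := by rw [h2]; gcongr
      _ = ‖y‖ := one_mul _
  intro x
  have h := hYpick (V x)
  rw [hV] at h
  have h1 : ‖T x‖ ^ 2 ≤ ‖Y (V x)‖ ^ 2 := by
    rw [hT]; exact pow_le_pow_left₀ (norm_nonneg _) (hVa _) 2
  have h2 : ‖T' x‖ ^ 2 ≤ ‖Y' (V x)‖ ^ 2 := by
    rw [hT']; exact pow_le_pow_left₀ (norm_nonneg _) (hVa _) 2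
  linarith

end
end

section
/- Fix 0 < r < 1. Let K be a complex Hilbert space, let Y ∈ ℙ𝔸_r[K], let H be a complex Hilbert space, and let V : H → K be a linear isometry whose range is invariant under both Y and Y⁻¹. Then the operator T = V* Y V on H is invertible with T⁻¹ = V* Y⁻¹ V, and T ∈ ℙ𝔸_r[H]; that is, ℙ𝔸_r is closed with respect to restrictions to subspaces invariant for Y and Y⁻¹. -/
open ContinuousLinearMap

noncomputable section

/-- The Pick annulus `ℙ𝔸_r` is closed with respect to restrictions to subspaces invariant
for `Y` and `Y⁻¹`: if `Y ∈ ℙ𝔸_r[K]` and `V : H → K` is an isometry whose range is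
invariant under `Y` and `Y⁻¹`, then `T = V* Y V` is invertible with `T⁻¹ = V* Y⁻¹ V`
and `T ∈ ℙ𝔸_r[H]`. -/
theorem pick_annulus_closed_invariant_restriction {H K : Type*}
    [NormedAddCommGroup H] [InnerProductSpace ℂ H] [CompleteSpace H]
    [NormedAddCommGroup K] [InnerProductSpace ℂ K] [CompleteSpace K]
    (r : ℝ) (hr0 : 0 < r) (hr1 : r < 1)
    (Y Y' : K →L[ℂ] K) (hYinv : Y * Y' = 1) (hYinv' : Y' * Y = 1)
    (hYpick : (((r⁻¹ ^ 2 + r ^ 2 : ℝ) : ℂ) • (1 : K →L[ℂ] K)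
      - adjoint Y * Y - adjoint Y' * Y').IsPositive)
    (V : H →L[ℂ] K) (hV : ∀ x, ‖V x‖ = ‖x‖)
    (hran : ∀ y ∈ Set.range V, Y y ∈ Set.range V)
    (hran' : ∀ y ∈ Set.range V, Y' y ∈ Set.range V)
    (T T' : H →L[ℂ] H)
    (hT : T = adjoint V ∘L Y ∘L V) (hT' : T' = adjoint V ∘L Y' ∘L V) :
    T * T' = 1 ∧ T' * T = 1 ∧
      (((r⁻¹ ^ 2 + r ^ 2 : ℝ) : ℂ) • (1 : H →L[ℂ] H)
        - adjoint T * T - adjoint T' * T').IsPositive := by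
  have hVV : ∀ x, adjoint V (V x) = x := fun x => by
    have h := (norm_map_iff_adjoint_comp_self V).1 hV
    simpa using congrArg (fun A : H →L[ℂ] H => A x) h
  have hVT : ∀ x, V (T x) = Y (V x) := fun x => by
    obtain ⟨z, hz⟩ := hran (V x) ⟨x, rfl⟩
    rw [hT]
    simp only [comp_apply]
    rw [← hz, hVV]
  have hVT' : ∀ x, V (T' x) = Y' (V x) := fun x => by
    obtain ⟨z, hz⟩ := hran' (V x) ⟨x, rfl⟩
    rw [hT']
    simp only [comp_apply]
    rw [← hz, hVV]
  have h1 : ∀ k, Y (Y' k) = k := fun k => by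
    simpa using congrArg (fun A : K →L[ℂ] K => A k) hYinv
  have h2 : ∀ k, Y' (Y k) = k := fun k => by
    simpa using congrArg (fun A : K →L[ℂ] K => A k) hYinv'
  refine ⟨?_, ?_, ?_⟩
  · ext x
    change T (T' x) = x
    rw [← hVV (T (T' x)), hVT, hVT', h1, hVV]
  · ext x
    change T' (T x) = x
    rw [← hVV (T' (T x)), hVT', hVT, h2, hVV]
  · have key := hYpick.adjoint_conj V
    convert key using 1
    ext x
    refine ext_inner_left ℂ fun w => ?_
    have e : ∀ a b : H, inner ℂ (V a) (V b) = inner ℂ a b := fun a b => by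
      rw [← adjoint_inner_right, hVV]
    simp only [sub_apply, smul_apply, ContinuousLinearMap.one_def, ContinuousLinearMap.mul_def, id_apply, comp_apply, inner_sub_right,
      id_eq, inner_smul_right, adjoint_inner_right, ← hVT, ← hVT', e, map_sub, map_smul]

end
end

section
/- Fix 0 < r < 1. Let H be a complex Hilbert space and let T be an invertible bounded linear operator on H. Then T ∈ ℙ𝔸_r[H] if and only if there exist a complex Hilbert space K, an operator J ∈ 𝒫𝔸_r[K], and a linear isometry V : H → K such that V T = J V (that is, T lifts to an element of 𝒫𝔸_r). -/
open ContinuousLinearMap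
noncomputable section
universe u

set_option linter.unusedSimpArgs false

theorem exists_frame (H : Type u) [NormedAddCommGroup H] [InnerProductSpace ℂ H] [CompleteSpace H] :
    ∃ (K : Type u) (_ : NormedAddCommGroup K) (_ : InnerProductSpace ℂ K)
        (_ : CompleteSpace K) (e : ℤ → H →L[ℂ] K) (S : K ≃ₗᵢ[ℂ] K),
      (∀ m n x y, inner ℂ (e m x) (e n y) = if m = n then inner ℂ x y else 0) ∧
      (∀ n x, S (e n x) = e (n - 2) x) := by
  have h2 : (0:ℝ) < (2 : ENNReal).toReal := by norm_num
  have key : ∀ (k : ℤ) (f : lp (fun _ : ℤ => H) 2),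
      Memℓp (fun n : ℤ => (f (n + k) : H)) 2 := by
    intro k f
    have := (memℓp_gen_iff h2).1 (lp.memℓp f)
    rw [memℓp_gen_iff h2]
    exact (Equiv.addRight k).summable_iff.2 this
  refine ⟨lp (fun _ : ℤ => H) 2, inferInstance, inferInstance, inferInstance,
    fun n => (lp.singleContinuousLinearMap ℂ (fun _ : ℤ => H) 2 n),
    { toFun := fun f => ⟨fun n => f (n + 2), key 2 f⟩
      invFun := fun f => ⟨fun n => f (n + (-2)), key (-2) f⟩
      map_add' := fun f g => by ext n; rfl
      map_smul' := fun c f => by ext n; rfl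
      left_inv := fun f => by ext n; simp
      right_inv := fun f => by ext n; simp
      norm_map' := fun f => ?_ }, ?_, ?_⟩
  · rw [lp.norm_eq_tsum_rpow h2, lp.norm_eq_tsum_rpow h2]
    congr 1
    exact (Equiv.addRight (2:ℤ)).tsum_eq (fun n => ‖f n‖ ^ (2 : ENNReal).toReal)
  · intro m n x y
    simp only [lp.singleContinuousLinearMap_apply]
    rw [lp.inner_single_left]
    split_ifs with h
    · subst h; simp
    · simp [h]
  · intro n x
    ext k
    simp [Pi.single_apply, eq_sub_iff_add_eq]

theorem exists_factor {H : Type u} [NormedAddCommGroup H] [InnerProductSpace ℂ H] [CompleteSpace H]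
    (X Y : H →L[ℂ] H) (α β : ℝ) (h : ∀ x, 0 ≤ α * ‖X x‖ ^ 2 + β * ‖Y x‖ ^ 2) :
    ∃ A : H →L[ℂ] H, ∀ x y, inner ℂ (A x) (A y) =
      (α : ℂ) * inner ℂ (X x) (X y) + (β : ℂ) * inner ℂ (Y x) (Y y) := by
  set Q : H →L[ℂ] H := (α : ℂ) • (adjoint X * X) + (β : ℂ) • (adjoint Y * Y) with hQ
  have hin : ∀ x y, inner ℂ (Q x) y =
      (α : ℂ) * inner ℂ (X x) (X y) + (β : ℂ) * inner ℂ (Y x) (Y y) := by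
    intro x y
    simp [hQ, inner_add_left, inner_smul_left, adjoint_inner_left]
  have hpos : Q.IsPositive := by
    rw [ContinuousLinearMap.isPositive_iff_complex]
    intro x
    have : inner ℂ (Q x) x = ((α * ‖X x‖ ^ 2 + β * ‖Y x‖ ^ 2 : ℝ) : ℂ) := by
      rw [hin, inner_self_eq_norm_sq_to_K, inner_self_eq_norm_sq_to_K]
      push_cast; rfl
    rw [this]
    exact ⟨by simp only [RCLike.re_eq_complex_re, Complex.ofReal_re], by simpa only [RCLike.re_eq_complex_re, Complex.ofReal_re] using h x⟩
  rw [← ContinuousLinearMap.nonneg_iff_isPositive,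
    CStarAlgebra.nonneg_iff_eq_star_mul_self] at hpos
  obtain ⟨A, hA⟩ := hpos
  refine ⟨A, fun x y => ?_⟩
  rw [← hin, hA, star_eq_adjoint]
  exact (adjoint_inner_left A y (A x)).symm

theorem exists_refl {H K : Type u} [NormedAddCommGroup H] [InnerProductSpace ℂ H]
    [NormedAddCommGroup K] [InnerProductSpace ℂ K] [CompleteSpace K]
    (a b : H →L[ℂ] K) (h : ∀ x y, inner ℂ (a x) (a y) = inner ℂ (b x) (b y))
    (h0 : ∀ x y, inner ℂ (a x) (b y) = 0) :
    ∃ G : K ≃ₗᵢ[ℂ] K, (∀ x, G (a x) = b x) ∧ (∀ x y, inner ℂ (G x) y = inner ℂ x (G y)) ∧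
      ∀ z, (∀ x, inner ℂ (a x) z = 0) → (∀ x, inner ℂ (b x) z = 0) → G z = z := by
  have h0' : ∀ x y, inner ℂ (b x) (a y) = 0 := fun x y => inner_eq_zero_symm.1 (h0 y x)
  set R : Submodule ℂ K := ((a - b : H →L[ℂ] K) : H →ₗ[ℂ] K).range
  have hfix : ∀ z, (∀ x, inner ℂ (a x - b x) z = 0) → Rᗮ.reflection z = z := by
    intro z hz
    apply Submodule.reflection_mem_subspace_eq_self
    rw [Submodule.mem_orthogonal]
    rintro _ ⟨x, rfl⟩
    exact hz x
  have hsym : ∀ x y, inner ℂ (Rᗮ.reflection x) y = inner ℂ x (Rᗮ.reflection y) := by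
    intro x y
    rw [← Rᗮ.reflection.inner_map_map x, Submodule.reflection_reflection]
  refine ⟨Rᗮ.reflection, fun x => ?_, hsym, fun z h1 h2 => hfix z fun x => ?_⟩
  · have e1 : Rᗮ.reflection (a x - b x) = -(a x - b x) := by
      apply Submodule.reflection_mem_subspace_orthogonalComplement_eq_neg
      apply Submodule.le_orthogonal_orthogonal
      exact ⟨x, by simp⟩
    have e2 : Rᗮ.reflection (a x + b x) = a x + b x := by
      apply hfix
      intro y
      simp [inner_sub_left, inner_add_right, h, h0, h0']
    have e3 : (2:ℂ) • Rᗮ.reflection (a x) = (2:ℂ) • b x := by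
      rw [← map_smul]
      have : (2:ℂ) • a x = (a x - b x) + (a x + b x) := by rw [two_smul]; abel
      rw [this, map_add, e1, e2, two_smul]; abel
    exact smul_right_injective K (two_ne_zero' ℂ) e3
  · rw [inner_sub_left, h1, h2, sub_zero]

theorem bound_aux {H : Type u} [NormedAddCommGroup H] [InnerProductSpace ℂ H]
    (r : ℝ) (hr0 : 0 < r) (hr1 : r < 1)
    (T T' : H →L[ℂ] H) (hTinv : T * T' = 1)
    (hq : ∀ x, ‖T x‖ ^ 2 + ‖T' x‖ ^ 2 ≤ (r⁻¹ ^ 2 + r ^ 2) * ‖x‖ ^ 2) (x : H) :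
    ‖T x‖ ^ 2 ≤ r⁻¹ ^ 2 * ‖x‖ ^ 2 := by
  set s := ‖T‖ with hs
  have hs0 : 0 ≤ s := norm_nonneg T
  have hir : 1 < r⁻¹ := (one_lt_inv₀ hr0).2 hr1
  have hrr : r⁻¹ * r = 1 := inv_mul_cancel₀ hr0.ne'
  set i := r⁻¹ with hi
  have hb : s ≤ i := by
    by_contra hc
    push Not at hc
    have hs1 : 0 < s := by linarith
    have h1 : ∀ y, ‖y‖ ^ 2 ≤ s ^ 2 * ‖T' y‖ ^ 2 := by
      intro y
      have : T (T' y) = y := DFunLike.congr_fun hTinv y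
      calc ‖y‖ ^ 2 = ‖T (T' y)‖ ^ 2 := by rw [this]
        _ ≤ (s * ‖T' y‖) ^ 2 := by gcongr; exact T.le_opNorm _
        _ = _ := by ring
    have h2 : ∀ y, s ^ 2 * ‖T y‖ ^ 2 ≤ ((i ^ 2 + r ^ 2) * s ^ 2 - 1) * ‖y‖ ^ 2 := by
      intro y
      nlinarith [h1 y, hq y, mul_le_mul_of_nonneg_left (hq y) (sq_nonneg s)]
    have hc0 : 0 ≤ (i ^ 2 + r ^ 2) * s ^ 2 - 1 := by
      have : 1 ≤ i * s := by nlinarith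
      nlinarith [sq_nonneg (r*s)]
    have h3 : s * s ≤ Real.sqrt ((i ^ 2 + r ^ 2) * s ^ 2 - 1) := by
      have : s ≤ Real.sqrt ((i ^ 2 + r ^ 2) * s ^ 2 - 1) / s := by
        apply T.opNorm_le_bound (by positivity)
        intro y
        rw [div_mul_eq_mul_div, le_div_iff₀ hs1]
        apply abs_le_of_sq_le_sq' _ (by positivity) |>.2
        rw [mul_pow, mul_pow, Real.sq_sqrt hc0]
        linarith [h2 y]
      rwa [le_div_iff₀ hs1] at this
    have h4 : (s * s) ^ 2 ≤ (i ^ 2 + r ^ 2) * s ^ 2 - 1 := by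
      rw [← Real.sq_sqrt hc0]; gcongr
    have h5 : i ^ 2 * r ^ 2 = 1 := by rw [← mul_pow, hrr, one_pow]
    have h6 : 0 < (s ^ 2 - i ^ 2) * (s ^ 2 - r ^ 2) := by
      apply mul_pos <;> nlinarith
    nlinarith
  calc ‖T x‖ ^ 2 ≤ (s * ‖x‖) ^ 2 := by gcongr; exact T.le_opNorm _
    _ ≤ (i * ‖x‖) ^ 2 := by gcongr
    _ = _ := by ring

theorem norm_sq_proj {K : Type u} [NormedAddCommGroup K] [InnerProductSpace ℂ K] [CompleteSpace K]
    {P Q : K →L[ℂ] K} (hP : IsOrthProj P) (hPQ : P + Q = 1) (z : K) :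
    ‖z‖ ^ 2 = ‖P z‖ ^ 2 + ‖Q z‖ ^ 2 := by
  have hz : z = P z + Q z := (DFunLike.congr_fun hPQ z).symm
  have hPQ0 : P (Q z) = 0 := by
    have h1 : P (P z) = P z := DFunLike.congr_fun hP.2 z
    have h2 : P z = P (P z) + P (Q z) := by rw [← map_add, ← hz]
    rw [h1] at h2
    simpa using h2
  have horth : inner ℂ (P z) (Q z) = 0 := by
    have := ContinuousLinearMap.adjoint_inner_left P (Q z) z
    rw [show adjoint P = P from hP.1.adjoint_eq, hPQ0, inner_zero_right] at this
    exact this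
  have := norm_add_sq_eq_norm_sq_add_norm_sq_of_inner_eq_zero (𝕜 := ℂ) (P z) (Q z) horth
  rw [← hz] at this
  nlinarith

theorem isPositive_iff_bound {H : Type u}
    [NormedAddCommGroup H] [InnerProductSpace ℂ H] [CompleteSpace H]
    (c : ℝ) (T T' : H →L[ℂ] H) :
    ((c : ℂ) • (1 : H →L[ℂ] H) - adjoint T * T - adjoint T' * T').IsPositive ↔
      ∀ x, ‖T x‖ ^ 2 + ‖T' x‖ ^ 2 ≤ c * ‖x‖ ^ 2 := by
  rw [ContinuousLinearMap.isPositive_iff_complex]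
  refine forall_congr' fun x => ?_
  have : inner ℂ (((c : ℂ) • (1 : H →L[ℂ] H) - adjoint T * T - adjoint T' * T') x) x
      = ((c * ‖x‖ ^ 2 - ‖T x‖ ^ 2 - ‖T' x‖ ^ 2 : ℝ) : ℂ) := by
    have h : ((c : ℂ) • (1 : H →L[ℂ] H) - adjoint T * T - adjoint T' * T') x
      = (c : ℂ) • x - adjoint T (T x) - adjoint T' (T' x) := rfl
    rw [h, inner_sub_left, inner_sub_left, adjoint_inner_left, adjoint_inner_left, inner_smul_left,
      inner_self_eq_norm_sq_to_K, inner_self_eq_norm_sq_to_K, inner_self_eq_norm_sq_to_K,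
      Complex.conj_ofReal]
    push_cast; rfl
  rw [this]
  simp only [RCLike.re_eq_complex_re, Complex.ofReal_re, true_and]
  constructor <;> intro h <;> linarith

theorem backward_aux {H K : Type u}
    [NormedAddCommGroup H] [InnerProductSpace ℂ H] [CompleteSpace H]
    [NormedAddCommGroup K] [InnerProductSpace ℂ K] [CompleteSpace K]
    (r : ℝ) (hr0 : 0 < r) (hr1 : r < 1)
    (T T' : H →L[ℂ] H) (hTinv : T * T' = 1)
    (J : K →L[ℂ] K) (V : H →L[ℂ] K) (hJ : memPAscript r J) (hV : ∀ x, ‖V x‖ = ‖x‖)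
    (hVT : V ∘L T = J ∘L V) (x : H) :
    ‖T x‖ ^ 2 + ‖T' x‖ ^ 2 ≤ (r⁻¹ ^ 2 + r ^ 2) * ‖x‖ ^ 2 := by
  obtain ⟨P, Q, U, hP, hQ, hPQ, hU, -, hUt, rfl⟩ := hJ
  have hUn : ∀ z, ‖U z‖ = ‖z‖ := by
    intro z
    have h1 : inner ℂ (U z) (U z) = inner ℂ z z := by
      rw [← adjoint_inner_left, show adjoint U (U z) = z from DFunLike.congr_fun hU z]
    rw [inner_self_eq_norm_sq_to_K, inner_self_eq_norm_sq_to_K] at h1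
    have h2 : ‖U z‖ ^ 2 = ‖z‖ ^ 2 := by exact_mod_cast h1
    exact (sq_eq_sq₀ (norm_nonneg _) (norm_nonneg _)).1 h2
  set D : K →L[ℂ] K := (r : ℂ) • P + (r : ℂ)⁻¹ • Q with hD
  have hsum : ∀ z, z = P z + Q z := fun z => (DFunLike.congr_fun hPQ z).symm
  have hPP : ∀ z, P (P z) = P z := fun z => DFunLike.congr_fun hP.2 z
  have hQQ : ∀ z, Q (Q z) = Q z := fun z => DFunLike.congr_fun hQ.2 z
  have hPQ0 : ∀ z, P (Q z) = 0 := fun z => by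
    have h2 : P z = P (P z) + P (Q z) := by rw [← map_add, ← hsum z]
    rw [hPP] at h2
    simpa using h2
  have hQP0 : ∀ z, Q (P z) = 0 := fun z => by
    have h2 : Q z = Q (P z) + Q (Q z) := by rw [← map_add, ← hsum z]
    rw [hQQ] at h2
    simpa using h2
  have hDz : ∀ z, D z = (r : ℂ) • P z + (r : ℂ)⁻¹ • Q z := fun z => rfl
  have hPD : ∀ z, ‖P (D z)‖ ^ 2 = r ^ 2 * ‖P z‖ ^ 2 := fun z => by
    rw [hDz, map_add, map_smul, map_smul, hPP, hPQ0, smul_zero, add_zero, norm_smul, mul_pow]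
    simp
  have hQD : ∀ z, ‖Q (D z)‖ ^ 2 = r⁻¹ ^ 2 * ‖Q z‖ ^ 2 := fun z => by
    rw [hDz, map_add, map_smul, map_smul, hQQ, hQP0, smul_zero, zero_add, norm_smul, mul_pow]
    simp
  have hT : ∀ y, V (T y) = U (D (V y)) := fun y => DFunLike.congr_fun hVT y
  have e1 := hT x
  have e2 := hT (T' x)
  rw [show T (T' x) = x from DFunLike.congr_fun hTinv x] at e2
  have n1 : ‖T x‖ ^ 2 = r ^ 2 * ‖P (V x)‖ ^ 2 + r⁻¹ ^ 2 * ‖Q (V x)‖ ^ 2 := by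
    rw [← hV, e1, hUn, norm_sq_proj hP hPQ, hPD, hQD]
  have n2 : ‖T' x‖ ^ 2 = ‖P (V (T' x))‖ ^ 2 + ‖Q (V (T' x))‖ ^ 2 := by
    rw [← hV, norm_sq_proj hP hPQ]
  have n3 : ‖x‖ ^ 2 = ‖P (V x)‖ ^ 2 + ‖Q (V x)‖ ^ 2 := by
    rw [← hV, norm_sq_proj hP hPQ]
  have n4 : ‖x‖ ^ 2 = r ^ 2 * ‖P (V (T' x))‖ ^ 2 + r⁻¹ ^ 2 * ‖Q (V (T' x))‖ ^ 2 := by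
    rw [← hV, e2, hUn, norm_sq_proj hP hPQ, hPD, hQD]
  have n5 : ‖Q (V x)‖ ^ 2 ≤ r⁻¹ ^ 2 * ‖Q (V (T' x))‖ ^ 2 := by
    rw [← hQD]
    have : Q (V x) = Q (U (Q (D (V (T' x))))) := by
      have h0 : Q (U (P (D (V (T' x))))) = 0 := DFunLike.congr_fun hUt _
      rw [e2]
      conv_lhs => rw [hsum (D (V (T' x)))]
      rw [map_add, map_add, h0, zero_add]
    rw [this, ← hUn (Q (D (V (T' x))))]
    have := norm_sq_proj hP hPQ (U (Q (D (V (T' x)))))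
    nlinarith [sq_nonneg ‖P (U (Q (D (V (T' x)))))‖]
  have hir : 1 < r⁻¹ := (one_lt_inv₀ hr0).2 hr1
  have hrr : r⁻¹ ^ 2 * r ^ 2 = 1 := by rw [← mul_pow, inv_mul_cancel₀ hr0.ne', one_pow]
  set i := r⁻¹
  generalize ‖P (V x)‖ ^ 2 = p at *
  generalize ‖Q (V x)‖ ^ 2 = m at *
  generalize ‖P (V (T' x))‖ ^ 2 = p' at *
  generalize ‖Q (V (T' x))‖ ^ 2 = m' at *
  generalize ‖x‖ ^ 2 = N at *
  have hp' : p' = i ^ 2 * (N - i ^ 2 * m') := by linear_combination (-p') * hrr - i ^ 2 * n4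
  have hm' : m' = r ^ 2 * (i ^ 2 * m') := by linear_combination (-m') * hrr
  have hlt : r ^ 2 < i ^ 2 := by nlinarith
  have hp : p = N - m := by linarith
  rw [n1, n2, hp, hp']
  nlinarith [mul_nonneg (sub_nonneg.2 n5) (sub_nonneg.2 hlt.le)]

theorem forward_aux {H : Type u}
    [NormedAddCommGroup H] [InnerProductSpace ℂ H] [CompleteSpace H]
    (r : ℝ) (hr0 : 0 < r) (hr1 : r < 1)
    (T T' : H →L[ℂ] H) (hTinv : T * T' = 1) (hTinv' : T' * T = 1)
    (hq : ∀ x, ‖T x‖ ^ 2 + ‖T' x‖ ^ 2 ≤ (r⁻¹ ^ 2 + r ^ 2) * ‖x‖ ^ 2) :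
      ∃ (K : Type u) (_ : NormedAddCommGroup K) (_ : InnerProductSpace ℂ K)
        (_ : CompleteSpace K) (J : K →L[ℂ] K) (V : H →L[ℂ] K),
        memPAscript r J ∧ (∀ x, ‖V x‖ = ‖x‖) ∧ V ∘L T = J ∘L V := by
  have hT'T : ∀ x, T' (T x) = x := fun x => DFunLike.congr_fun hTinv' x
  have hup := bound_aux r hr0 hr1 T T' hTinv hq
  have hlo : ∀ x, r ^ 2 * ‖x‖ ^ 2 ≤ ‖T x‖ ^ 2 := by
    intro x
    have h1 := bound_aux r hr0 hr1 T' T hTinv' (fun y => by linarith [hq y]) (T x)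
    rw [hT'T] at h1
    have hrr : r ^ 2 * r⁻¹ ^ 2 = 1 := by rw [← mul_pow, mul_inv_cancel₀ hr0.ne', one_pow]
    calc r ^ 2 * ‖x‖ ^ 2 ≤ r ^ 2 * (r⁻¹ ^ 2 * ‖T x‖ ^ 2) := by gcongr
      _ = ‖T x‖ ^ 2 := by rw [← mul_assoc, hrr, one_mul]
  have hir : 1 < r⁻¹ := (one_lt_inv₀ hr0).2 hr1
  have hrr : r⁻¹ * r = 1 := inv_mul_cancel₀ hr0.ne'
  have hic : ((r⁻¹ : ℝ) : ℂ) = (r : ℂ)⁻¹ := Complex.ofReal_inv r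
  have hrrc : ((r⁻¹ : ℝ) : ℂ) * (r : ℂ) = 1 := by exact_mod_cast hrr
  set i := r⁻¹ with hi
  obtain ⟨c, hc⟩ : ∃ c : ℝ, c = i ^ 2 - r ^ 2 := ⟨_, rfl⟩
  have hc0 : 0 < c := by rw [hc]; nlinarith
  have hcc : (c : ℂ) = (i : ℂ) ^ 2 - (r : ℂ) ^ 2 := by rw [hc]; push_cast; rfl
  have hcc0 : (c : ℂ) ≠ 0 := by exact_mod_cast hc0.ne'
  have hcinv : (c : ℂ) * (c : ℂ)⁻¹ = 1 := mul_inv_cancel₀ hcc0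
  obtain ⟨A, hA⟩ := exists_factor (1 : H →L[ℂ] H) T (c⁻¹ * i ^ 2) (-c⁻¹) (fun x => by
    have := hup x
    have h2 : 0 ≤ c⁻¹ * (i ^ 2 * ‖x‖ ^ 2 - ‖T x‖ ^ 2) := mul_nonneg (by positivity) (by linarith)
    rw [one_apply_eq_self]
    linarith)
  obtain ⟨B, hB⟩ := exists_factor T (1 : H →L[ℂ] H) c⁻¹ (-(c⁻¹ * r ^ 2)) (fun x => by
    have := hlo x
    have h2 : 0 ≤ c⁻¹ * (‖T x‖ ^ 2 - r ^ 2 * ‖x‖ ^ 2) := mul_nonneg (by positivity) (by linarith)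
    rw [one_apply_eq_self]
    linarith)
  have hBn : ∀ x, ‖B x‖ ^ 2 = c⁻¹ * (‖T x‖ ^ 2 - r ^ 2 * ‖x‖ ^ 2) := by
    intro x
    have h := hB x x
    rw [one_apply_eq_self] at h
    simp only [inner_self_eq_norm_sq_to_K] at h
    simp only [Complex.coe_algebraMap] at h
    have : ‖B x‖ ^ 2 = c⁻¹ * ‖T x‖ ^ 2 + (-(c⁻¹ * r ^ 2)) * ‖x‖ ^ 2 := by exact_mod_cast h
    rw [this]; ring
  obtain ⟨Δ, hΔ⟩ := exists_factor B (B * T) (i ^ 2) (-1) (fun x => by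
    rw [show (B * T) x = B (T x) from rfl, hBn, hBn]
    have h1 := hq (T x)
    rw [hT'T] at h1
    have h2 : 0 ≤ c⁻¹ * ((i ^ 2 + r ^ 2) * ‖T x‖ ^ 2 - ‖T (T x)‖ ^ 2 - ‖x‖ ^ 2) :=
      mul_nonneg (by positivity) (by linarith)
    have h3 : i ^ 2 * r ^ 2 = 1 := by rw [← mul_pow, hrr, one_pow]
    have h4 : i ^ 2 * (c⁻¹ * (‖T x‖ ^ 2 - r ^ 2 * ‖x‖ ^ 2)) +
        -1 * (c⁻¹ * (‖T (T x)‖ ^ 2 - r ^ 2 * ‖T x‖ ^ 2)) =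
        c⁻¹ * ((i ^ 2 + r ^ 2) * ‖T x‖ ^ 2 - ‖T (T x)‖ ^ 2 - ‖x‖ ^ 2) := by
      linear_combination (-c⁻¹ * ‖x‖ ^ 2) * h3
    rw [h4]; exact h2)
  simp only [show ∀ x, (B * T) x = B (T x) from fun _ => rfl] at hΔ
  simp only [one_apply_eq_self] at hA hB
  push_cast at hA hB hΔ
  obtain ⟨K, _, _, _, e, S, he, hS⟩ := exists_frame H
  obtain ⟨G1, hG1, -, hG1f⟩ := exists_refl ((i : ℂ) • (e 0 ∘L B)) (e 1 ∘L Δ + e 2 ∘L B ∘L T)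
    (by
      intro x y
      simp [inner_add_left, inner_add_right, inner_smul_left, inner_smul_right, he, hΔ]
      ring)
    (by
      intro x y
      simp [inner_add_left, inner_add_right, inner_smul_left, inner_smul_right, he])
  obtain ⟨G2, hG2, hG2s, hG2f⟩ := exists_refl ((r : ℂ) • (e (-4) ∘L A) + e (-1) ∘L Δ)
    (e (-2) ∘L A ∘L T)
    (by
      intro x y
      simp [inner_add_left, inner_add_right, inner_smul_left, inner_smul_right, he, hΔ, hA, hB]
      ring)
    (by
      intro x y
      simp [inner_add_left, inner_add_right, inner_smul_left, inner_smul_right, he])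
  set L : Submodule ℂ K := Submodule.span ℂ {z | ∃ n : ℤ, 0 ≤ n ∧ ∃ x, z = e n x} with hL
  have hmemL : ∀ n : ℤ, 0 ≤ n → ∀ x, e n x ∈ L := fun n hn x =>
    Submodule.subset_span ⟨n, hn, x, rfl⟩
  have hmemLo : ∀ z, z ∈ Lᗮ ↔ ∀ n : ℤ, 0 ≤ n → ∀ x, inner ℂ (e n x) z = 0 := by
    intro z
    rw [Submodule.mem_orthogonal]
    refine ⟨fun h n hn x => h _ (hmemL n hn x), fun h u hu => ?_⟩
    induction hu using Submodule.span_induction with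
    | mem u hu => obtain ⟨n, hn, x, rfl⟩ := hu; exact h n hn x
    | zero => simp
    | add a b _ _ ha hb => rw [inner_add_left, ha, hb, add_zero]
    | smul a b _ hb => rw [inner_smul_left, hb, mul_zero]
  have hneg : ∀ n : ℤ, n < 0 → ∀ x, e n x ∈ Lᗮ := by
    intro n hn x
    rw [hmemLo]
    intro m hm y
    rw [he, if_neg (by omega)]
  have hSL : ∀ z ∈ Lᗮ, S z ∈ Lᗮ := by
    intro z hz
    rw [hmemLo] at hz ⊢
    intro n hn x
    have h1 := hS (n + 2) x
    rw [add_sub_cancel_right] at h1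
    rw [← h1, S.inner_map_map]
    exact hz _ (by omega) x
  have hG1L : ∀ z ∈ Lᗮ, G1 z = z := by
    intro z hz
    rw [hmemLo] at hz
    apply hG1f
    · intro x
      simp [inner_smul_left, hz]
    · intro x
      simp [inner_add_left, hz]
  have hG2L : ∀ z ∈ Lᗮᗮ, G2 z = z := by
    intro z hz
    have hz' : ∀ n : ℤ, n < 0 → ∀ x, inner ℂ (e n x) z = 0 := fun n hn x =>
      (Submodule.mem_orthogonal _ _).1 hz _ (hneg n hn x)
    apply hG2f
    · intro x
      simp [inner_add_left, inner_smul_left, hz']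
    · intro x
      simp [hz']
  have hG2L' : ∀ z ∈ Lᗮ, G2 z ∈ Lᗮ := by
    intro z hz
    rw [hmemLo] at hz ⊢
    intro n hn x
    rw [← hG2s, hG2L _ (L.le_orthogonal_orthogonal (hmemL n hn x))]
    exact hz n hn x
  set U0 : K ≃ₗᵢ[ℂ] K := (G1.trans S).trans G2 with hU0
  have hU0a : ∀ z, U0 z = G2 (S (G1 z)) := fun z => rfl
  set U : K →L[ℂ] K := (U0 : K →L[ℂ] K) with hU
  have hUa : adjoint U = (U0.symm : K →L[ℂ] K) := by
    symm
    rw [ContinuousLinearMap.eq_adjoint_iff]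
    intro x y
    change inner ℂ (U0.symm x) y = inner ℂ x (U0 y)
    rw [← U0.inner_map_map, U0.apply_symm_apply]
  have hPneg : ∀ n : ℤ, n < 0 → ∀ x, Lᗮ.starProjection (e n x) = e n x := fun n hn x =>
    Submodule.starProjection_eq_self_iff.2 (hneg n hn x)
  have hPpos : ∀ n : ℤ, 0 ≤ n → ∀ x, Lᗮ.starProjection (e n x) = 0 := fun n hn x =>
    (Submodule.starProjection_apply_eq_zero_iff _).2 (L.le_orthogonal_orthogonal (hmemL n hn x))
  refine ⟨K, inferInstance, inferInstance, inferInstance,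
    U * ((r : ℂ) • Lᗮ.starProjection + (r : ℂ)⁻¹ • (1 - Lᗮ.starProjection)),
    e (-2) ∘L A + e 0 ∘L B,
    ⟨Lᗮ.starProjection, 1 - Lᗮ.starProjection, U, ?_, ?_, by abel, ?_, ?_, ?_, rfl⟩, ?_, ?_⟩
  · exact ⟨isSelfAdjoint_starProjection _, Lᗮ.isIdempotentElem_starProjection⟩
  · exact ⟨(IsSelfAdjoint.one _).sub (isSelfAdjoint_starProjection _),
      Lᗮ.isIdempotentElem_starProjection.one_sub⟩
  · rw [hUa]
    ext z
    exact U0.symm_apply_apply z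
  · rw [hUa]
    ext z
    exact U0.apply_symm_apply z
  · ext z
    change U0 (Lᗮ.starProjection z) - Lᗮ.starProjection (U0 (Lᗮ.starProjection z)) = 0
    have hm := Submodule.starProjection_apply_mem Lᗮ z
    have : U0 (Lᗮ.starProjection z) ∈ Lᗮ := by
      rw [hU0a, hG1L _ hm]
      exact hG2L' _ (hSL _ hm)
    rw [Submodule.starProjection_eq_self_iff.2 this, sub_self]
  · intro x
    have h1 : inner ℂ ((e (-2) ∘L A + e 0 ∘L B) x) ((e (-2) ∘L A + e 0 ∘L B) x)
        = inner ℂ x x := by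
      change inner ℂ (e (-2) (A x) + e 0 (B x)) (e (-2) (A x) + e 0 (B x)) = inner ℂ x x
      rw [inner_add_left, inner_add_right]
      rw [inner_add_right, he, he, he, he, if_pos rfl, if_neg (by norm_num), if_neg (by norm_num),
        if_pos rfl, hA, hB]
      have : (c : ℂ)⁻¹ * ((i : ℂ) ^ 2 - (r : ℂ) ^ 2) = 1 := by rw [← hcc, mul_comm, hcinv]
      linear_combination (inner ℂ x x) * this
    rw [inner_self_eq_norm_sq_to_K, inner_self_eq_norm_sq_to_K] at h1
    have h2 : ‖(e (-2) ∘L A + e 0 ∘L B) x‖ ^ 2 = ‖x‖ ^ 2 := by exact_mod_cast h1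
    exact (sq_eq_sq₀ (norm_nonneg _) (norm_nonneg _)).1 h2
  · ext x
    change e (-2) (A (T x)) + e 0 (B (T x)) =
      U0 ((r : ℂ) • Lᗮ.starProjection (e (-2) (A x) + e 0 (B x)) + (r : ℂ)⁻¹ •
        ((e (-2) (A x) + e 0 (B x)) - Lᗮ.starProjection (e (-2) (A x) + e 0 (B x))))
    rw [map_add Lᗮ.starProjection, hPneg (-2) (by norm_num), hPpos 0 le_rfl, add_zero, add_sub_cancel_left, hU0a,
      map_add G1]
    have g1 := hG1 x
    have g2 := hG2 x
    simp only [add_apply, smul_apply, comp_apply] at g1 g2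
    rw [hG1L _ (Submodule.smul_mem _ _ (hneg _ (by norm_num) _)), ← hic, g1]
    simp only [map_add, map_smul, hS]
    norm_num
    have g3 : G2 (e 0 (B (T x))) = e 0 (B (T x)) :=
      hG2L _ (L.le_orthogonal_orthogonal (hmemL 0 le_rfl _))
    rw [g3, ← add_assoc, ← g2, map_add, map_smul, Complex.coe_smul]

/-- An invertible operator `T` lies in the Pick annulus `ℙ𝔸_r[H]` if and only if `T`
lifts to an element `J` of `𝒫𝔸_r`, i.e. there is an isometry `V` with `V T = J V`. -/
theorem pick_annulus_lifting {H : Type u}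
    [NormedAddCommGroup H] [InnerProductSpace ℂ H] [CompleteSpace H]
    (r : ℝ) (hr0 : 0 < r) (hr1 : r < 1)
    (T T' : H →L[ℂ] H) (hTinv : T * T' = 1) (hTinv' : T' * T = 1) :
    (((r⁻¹ ^ 2 + r ^ 2 : ℝ) : ℂ) • (1 : H →L[ℂ] H)
        - adjoint T * T - adjoint T' * T').IsPositive ↔
      ∃ (K : Type u) (_ : NormedAddCommGroup K) (_ : InnerProductSpace ℂ K)
        (_ : CompleteSpace K) (J : K →L[ℂ] K) (V : H →L[ℂ] K),
        memPAscript r J ∧ (∀ x, ‖V x‖ = ‖x‖) ∧ V ∘L T = J ∘L V := by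
  rw [isPositive_iff_bound]
  constructor
  · exact forward_aux r hr0 hr1 T T' hTinv hTinv'
  · rintro ⟨K, _, _, _, J, V, hJ, hV, hVT⟩ x
    exact backward_aux r hr0 hr1 T T' hTinv J V hJ hV hVT x

end
end

section
/- Fix 0 < r < 1. Let H and K be complex Hilbert spaces, let J ∈ 𝒫𝔸_r[H], let F ∈ ℙ𝔸_r[K], and let V : H → K be a linear isometry such that Jⁿ = V* Fⁿ V for every integer n. Then the range of V reduces F; that is, the range of V is invariant under both F and F*. (In other words, every element of 𝒫𝔸_r is dilation extremal in ℙ𝔸_r.) -/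
open ContinuousLinearMap

noncomputable section

lemma aux_contr {H K : Type*} [NormedAddCommGroup H] [InnerProductSpace ℂ H]
    [NormedAddCommGroup K] [InnerProductSpace ℂ K]
    (C : H →L[ℂ] K) (S : H →L[ℂ] H) (hS : ∀ x, ‖S x‖ = ‖x‖) (M : H → Prop)
    (hM : ∀ x, M x → M (S x)) (q : ℝ) (hq0 : 0 ≤ q) (hq1 : q < 1)
    (h : ∀ x, M x → ‖C x‖ ≤ q * ‖C (S x)‖) : ∀ x, M x → C x = 0 := by
  have key : ∀ n : ℕ, ∀ x, M x → ‖C x‖ ≤ q ^ n * (‖C‖ * ‖x‖) := by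
    intro n
    induction n with
    | zero => intro x _; simpa using C.le_opNorm x
    | succ n ih =>
      intro x hx
      have h1 := h x hx
      have h2 := ih (S x) (hM x hx)
      rw [hS] at h2
      calc ‖C x‖ ≤ q * ‖C (S x)‖ := h1
        _ ≤ q * (q ^ n * (‖C‖ * ‖x‖)) := by gcongr
        _ = _ := by ring
  intro x hx
  have ht : Filter.Tendsto (fun n : ℕ => q ^ n * (‖C‖ * ‖x‖)) Filter.atTop (nhds 0) := by
    simpa using (tendsto_pow_atTop_nhds_zero_of_lt_one hq0 hq1).mul_const (‖C‖ * ‖x‖)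
  have := ge_of_tendsto' ht (fun n => key n x hx)
  exact norm_le_zero_iff.1 this

lemma aux_norm {K : Type*} [NormedAddCommGroup K] [InnerProductSpace ℂ K]
    (r : ℝ) (hr0 : 0 < r) (hr1 : r < 1) (F F' : K →L[ℂ] K) (hFinv : F * F' = 1)
    (h : ∀ x, ‖F x‖ ^ 2 + ‖F' x‖ ^ 2 ≤ (r⁻¹ ^ 2 + r ^ 2) * ‖x‖ ^ 2) : ‖F‖ ≤ r⁻¹ := by
  by_contra hcon
  push Not at hcon
  have hri : 1 < r⁻¹ := (one_lt_inv₀ hr0).2 hr1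
  have hs : 0 < ‖F‖ := by linarith
  set s := ‖F‖ with hsdef
  have hinv : ∀ x, F (F' x) = x := fun x => by
    simpa using congrArg (fun T : K →L[ℂ] K => T x) hFinv
  have h1 : ∀ x, ‖F x‖ ^ 2 ≤ (r⁻¹ ^ 2 + r ^ 2 - (s⁻¹) ^ 2) * ‖x‖ ^ 2 := by
    intro x
    have h2 : ‖x‖ ≤ s * ‖F' x‖ := by
      have := F.le_opNorm (F' x)
      rwa [hinv] at this
    have h3 : s⁻¹ * ‖x‖ ≤ ‖F' x‖ := by
      rw [inv_mul_le_iff₀ hs]; exact h2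
    have h4 : (s⁻¹ * ‖x‖) ^ 2 ≤ ‖F' x‖ ^ 2 := by gcongr
    have := h x
    nlinarith
  have hsi : s⁻¹ < 1 := inv_lt_one_of_one_lt₀ (by linarith)
  have hsi0 : 0 < s⁻¹ := by positivity
  have hE : 0 ≤ r⁻¹ ^ 2 + r ^ 2 - (s⁻¹) ^ 2 := by nlinarith [sq_nonneg r]
  have h5 : s ≤ Real.sqrt (r⁻¹ ^ 2 + r ^ 2 - (s⁻¹) ^ 2) := by
    refine F.opNorm_le_bound (Real.sqrt_nonneg _) (fun x => ?_)
    refine abs_le_of_sq_le_sq' ?_ (by positivity) |>.2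
    rw [mul_pow, Real.sq_sqrt hE]
    exact h1 x
  have h6 : s ^ 2 ≤ r⁻¹ ^ 2 + r ^ 2 - (s⁻¹) ^ 2 := (Real.le_sqrt hs.le hE).1 h5
  have h7 : s * s⁻¹ = 1 := mul_inv_cancel₀ hs.ne'
  have h8 : r * r⁻¹ = 1 := mul_inv_cancel₀ hr0.ne'
  have h9 : s⁻¹ < r := by
    rw [inv_lt_comm₀ hs hr0]; exact hcon
  have h10 : s - s⁻¹ ≤ r⁻¹ - r := by
    refine abs_le_of_sq_le_sq' ?_ (by linarith) |>.2
    nlinarith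
  linarith

lemma aux_eq {H K : Type*}
    [NormedAddCommGroup H] [InnerProductSpace ℂ H] [CompleteSpace H]
    [NormedAddCommGroup K] [InnerProductSpace ℂ K] [CompleteSpace K]
    (V : H →L[ℂ] K) (hV : ∀ x, ‖V x‖ = ‖x‖) (y : K) :
    ‖y - V (adjoint V y)‖ ^ 2 = ‖y‖ ^ 2 - ‖adjoint V y‖ ^ 2 := by
  rw [@norm_sub_sq ℂ, hV, ← adjoint_inner_left, inner_self_eq_norm_sq]
  ring

lemma aux_ker {K : Type*} [NormedAddCommGroup K] [InnerProductSpace ℂ K] [CompleteSpace K]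
    (T : K →L[ℂ] K) (hT : T.IsPositive) (x : K) (h : RCLike.re (inner ℂ (T x) x) = 0) :
    T x = 0 := by
  rw [← nonneg_iff_isPositive] at hT
  obtain ⟨S, hS⟩ := CStarAlgebra.nonneg_iff_eq_star_mul_self.1 hT
  have e : T x = adjoint S (S x) := by rw [hS]; rfl
  rw [e, adjoint_inner_left, inner_self_eq_norm_sq] at h
  have h1 : S x = 0 := norm_eq_zero.1 (pow_eq_zero_iff two_ne_zero |>.1 h)
  rw [e, h1, map_zero]

set_option maxHeartbeats 2000000

/-- Every element of `𝒫𝔸_r` is dilation extremal in the Pick annulus `ℙ𝔸_r`: any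
`ℂ[x,x⁻¹]`-dilation of `J ∈ 𝒫𝔸_r` to an element `F ∈ ℙ𝔸_r` is trivial, i.e. the range
of the isometry `V` reduces `F`. -/
theorem pa_script_dilation_extremal {H K : Type*}
    [NormedAddCommGroup H] [InnerProductSpace ℂ H] [CompleteSpace H]
    [NormedAddCommGroup K] [InnerProductSpace ℂ K] [CompleteSpace K]
    (r : ℝ) (hr0 : 0 < r) (hr1 : r < 1)
    (J J' : H →L[ℂ] H) (hJinv : J * J' = 1) (hJinv' : J' * J = 1)
    (hJ : memPAscript r J)
    (F F' : K →L[ℂ] K) (hFinv : F * F' = 1) (hFinv' : F' * F = 1)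
    (hFpick : (((r⁻¹ ^ 2 + r ^ 2 : ℝ) : ℂ) • (1 : K →L[ℂ] K)
      - adjoint F * F - adjoint F' * F').IsPositive)
    (V : H →L[ℂ] K) (hV : ∀ x, ‖V x‖ = ‖x‖)
    (hdil : ∀ n : ℕ, J ^ n = adjoint V ∘L (F ^ n) ∘L V ∧
      J' ^ n = adjoint V ∘L (F' ^ n) ∘L V) :
    (∀ y ∈ Set.range V, F y ∈ Set.range V) ∧
      (∀ y ∈ Set.range V, adjoint F y ∈ Set.range V) := by
  obtain ⟨Pp, Pm, U, ⟨hPps, hPpi⟩, ⟨hPms, hPmi⟩, hsum, hUU, hUU', htri, hJe⟩ := hJ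
  have ev : ∀ {A B : H →L[ℂ] H}, A = B → ∀ x, A x = B x := fun h x => by rw [h]
  have evK : ∀ {A B : K →L[ℂ] K}, A = B → ∀ x, A x = B x := fun h x => by rw [h]
  have ha : (r : ℂ) ≠ 0 := by exact_mod_cast hr0.ne'
  have hri : 1 < r⁻¹ := (one_lt_inv₀ hr0).2 hr1
  have jj' : ∀ x, J (J' x) = x := ev hJinv
  have j'j : ∀ x, J' (J x) = x := ev hJinv'
  have ff' : ∀ x, F (F' x) = x := evK hFinv
  have f'f : ∀ x, F' (F x) = x := evK hFinv'
  have uu : ∀ x, adjoint U (U x) = x := ev hUU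
  have uu' : ∀ x, U (adjoint U x) = x := ev hUU'
  have hsum' : ∀ x, Pp x + Pm x = x := ev hsum
  have hU : ∀ x, ‖U x‖ = ‖x‖ := (norm_map_iff_adjoint_comp_self U).2 hUU
  have hU' : ∀ x, ‖adjoint U x‖ = ‖x‖ := fun x => by rw [← hU, uu']
  have vv : ∀ x, adjoint V (V x) = x := fun x => by
    have := (norm_map_iff_adjoint_comp_self V).1 hV
    exact congrArg (fun T : H →L[ℂ] H => T x) this
  have hJF : ∀ x, adjoint V (F (V x)) = J x := fun x => by
    have := (hdil 1).1; rw [pow_one, pow_one] at this; rw [this]; rfl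
  have hJF' : ∀ x, adjoint V (F' (V x)) = J' x := fun x => by
    have := (hdil 1).2; rw [pow_one, pow_one] at this; rw [this]; rfl
  have hL : ∀ x, Pm x = 0 → J x = (r : ℂ) • U x := fun x hx => by
    have h1 : Pp x = x := by simpa [hx] using hsum' x
    simp [hJe, hx, h1]
  have hM : ∀ x, Pp x = 0 → J x = (r : ℂ)⁻¹ • U x := fun x hx => by
    have h1 : Pm x = x := by simpa [hx] using hsum' x
    simp [hJe, hx, h1]
  have hUL : ∀ x, Pm x = 0 → Pm (U x) = 0 := fun x hx => by
    have h1 : Pp x = x := by simpa [hx] using hsum' x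
    have := ev htri x
    simpa [h1] using this
  have htri' : Pp * adjoint U * Pm = 0 := by
    have := congrArg star htri
    rw [star_mul, star_mul, star_zero, hPps.star_eq, hPms.star_eq, ← mul_assoc] at this
    exact this
  have hUM : ∀ x, Pp x = 0 → Pp (adjoint U x) = 0 := fun x hx => by
    have h1 : Pm x = x := by simpa [hx] using hsum' x
    have := ev htri' x
    simpa [h1] using this
  have hJ'U : ∀ y, Pm y = 0 → J' (U y) = (r : ℂ)⁻¹ • y := fun y hy => by
    have := j'j y
    rw [hL y hy, map_smul] at this
    rw [← this, smul_smul, inv_mul_cancel₀ ha, one_smul, this]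
  have hJ'M : ∀ x, Pp x = 0 → J' x = (r : ℂ) • adjoint U x := fun x hx => by
    have := j'j (adjoint U x)
    rw [hM _ (hUM x hx), map_smul, uu'] at this
    rw [← this, smul_smul, mul_inv_cancel₀ ha, one_smul]
  have hJad : adjoint J = ((r : ℂ) • Pp + (r : ℂ)⁻¹ • Pm) * adjoint U := by
    have : star J = star (U * ((r : ℂ) • Pp + (r : ℂ)⁻¹ • Pm)) := by rw [hJe]
    rw [star_mul, star_add, star_smul, star_smul, hPps.star_eq, hPms.star_eq] at this
    simpa [star_eq_adjoint] using this
  have jsj's : ∀ x, adjoint J (adjoint J' x) = x := by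
    have : star J * star J' = 1 := by rw [← star_mul, hJinv', star_one]
    exact ev this
  have j'sjs : ∀ x, adjoint J' (adjoint J x) = x := by
    have : star J' * star J = 1 := by rw [← star_mul, hJinv, star_one]
    exact ev this
  have fsf's : ∀ x, adjoint F (adjoint F' x) = x := by
    have : star F * star F' = 1 := by rw [← star_mul, hFinv', star_one]
    exact evK this
  have f'sfs : ∀ x, adjoint F' (adjoint F x) = x := by
    have : star F' * star F = 1 := by rw [← star_mul, hFinv, star_one]
    exact evK this
  have hJ'sL : ∀ y, Pm y = 0 → adjoint J' y = (r : ℂ)⁻¹ • U y := fun y hy => by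
    have h1 : Pp y = y := by simpa [hy] using hsum' y
    have h2 : adjoint J (U y) = (r : ℂ) • y := by simp [hJad, uu, hy, h1]
    have := j'sjs (U y)
    rw [h2, map_smul] at this
    rw [← this, smul_smul, inv_mul_cancel₀ ha, one_smul]
  have hJ'sM : ∀ y, Pp y = 0 → adjoint J' y = (r : ℂ) • U y := fun y hy => by
    have h1 : Pm y = y := by simpa [hy] using hsum' y
    have h2 : adjoint J (U y) = (r : ℂ)⁻¹ • y := by simp [hJad, uu, hy, h1]
    have := j'sjs (U y)
    rw [h2, map_smul] at this
    rw [← this, smul_smul, mul_inv_cancel₀ ha, one_smul]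
  set T : K →L[ℂ] K := (((r⁻¹ ^ 2 + r ^ 2 : ℝ) : ℂ) • (1 : K →L[ℂ] K)
      - adjoint F * F - adjoint F' * F') with hT
  have hTre : ∀ x, RCLike.re (inner ℂ (T x) x)
      = (r⁻¹ ^ 2 + r ^ 2) * ‖x‖ ^ 2 - ‖F x‖ ^ 2 - ‖F' x‖ ^ 2 := by
    intro x
    have e : T x = ((r⁻¹ ^ 2 + r ^ 2 : ℝ) : ℂ) • x - adjoint F (F x) - adjoint F' (F' x) := rfl
    rw [e, inner_sub_left, inner_sub_left, adjoint_inner_left, adjoint_inner_left, map_sub, map_sub,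
      inner_self_eq_norm_sq, inner_self_eq_norm_sq, inner_smul_left, Complex.conj_ofReal]
    have : RCLike.re ((((r⁻¹ ^ 2 + r ^ 2 : ℝ) : ℂ)) * inner ℂ x x)
        = (r⁻¹ ^ 2 + r ^ 2) * ‖x‖ ^ 2 := by
      rw [← inner_self_eq_norm_sq (𝕜 := ℂ) x]
      exact Complex.re_ofReal_mul _ _
    rw [this]
  have hpick : ∀ x, ‖F x‖ ^ 2 + ‖F' x‖ ^ 2 ≤ (r⁻¹ ^ 2 + r ^ 2) * ‖x‖ ^ 2 := fun x => by
    have h1 := hFpick.re_inner_nonneg_left x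
    have h2 := hTre x
    linarith
  have hnF : ‖F‖ ≤ r⁻¹ := aux_norm r hr0 hr1 F F' hFinv hpick
  have hnF' : ‖F'‖ ≤ r⁻¹ := aux_norm r hr0 hr1 F' F hFinv' (fun x => by linarith [hpick x])
  have hTker : ∀ x, RCLike.re (inner ℂ (T x) x) = 0 → T x = 0 := aux_ker T hFpick
  have hcore : ∀ x, ‖J x‖ ^ 2 + ‖J' x‖ ^ 2 = (r⁻¹ ^ 2 + r ^ 2) * ‖x‖ ^ 2 →
      F (V x) = V (J x) ∧ F' (V x) = V (J' x) ∧ T (V x) = 0 := by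
    intro x hx
    have e1 := aux_eq V hV (F (V x))
    have e2 := aux_eq V hV (F' (V x))
    rw [hJF] at e1
    rw [hJF'] at e2
    have e3 := hpick (V x)
    rw [hV] at e3
    have n1 := sq_nonneg ‖F (V x) - V (J x)‖
    have n2 := sq_nonneg ‖F' (V x) - V (J' x)‖
    have z1 : ‖F (V x) - V (J x)‖ ^ 2 = 0 := by linarith
    have z2 : ‖F' (V x) - V (J' x)‖ ^ 2 = 0 := by linarith
    refine ⟨?_, ?_, hTker _ ?_⟩
    · exact sub_eq_zero.1 (norm_eq_zero.1 (pow_eq_zero_iff two_ne_zero |>.1 z1))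
    · exact sub_eq_zero.1 (norm_eq_zero.1 (pow_eq_zero_iff two_ne_zero |>.1 z2))
    · rw [hTre, hV]; linarith
  have hnr : ‖(r : ℂ)‖ = r := by rw [Complex.norm_real, Real.norm_of_nonneg hr0.le]
  have hcL : ∀ y, Pm y = 0 → ‖J (U y)‖ ^ 2 + ‖J' (U y)‖ ^ 2
      = (r⁻¹ ^ 2 + r ^ 2) * ‖U y‖ ^ 2 := fun y hy => by
    rw [hL _ (hUL y hy), hJ'U y hy, norm_smul, norm_smul, norm_inv, hnr, hU, hU]; ring
  have hcM : ∀ x, Pp x = 0 → ‖J x‖ ^ 2 + ‖J' x‖ ^ 2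
      = (r⁻¹ ^ 2 + r ^ 2) * ‖x‖ ^ 2 := fun x hx => by
    rw [hM _ hx, hJ'M x hx, norm_smul, norm_smul, norm_inv, hnr, hU, hU']; ring
  have hPpm : ∀ x, Pp (Pm x) = 0 := fun x => by
    have := hsum' (Pm x)
    have h2 : Pm (Pm x) = Pm x := ev hPmi x
    simpa [h2] using this
  have hPmp : ∀ x, Pm (Pp x) = 0 := fun x => by
    have := hsum' (Pp x)
    have h2 : Pp (Pp x) = Pp x := ev hPpi x
    simpa [h2] using this
  have hFL : ∀ y, Pm y = 0 → F (V y) = V (J y) := fun y hy => by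
    have h1 := (hcore _ (hcL y hy)).2.1
    rw [hJ'U y hy] at h1
    have h2 : F' (V (J y)) = V y := by
      rw [hL y hy, map_smul, map_smul, h1, map_smul, smul_smul, mul_inv_cancel₀ ha, one_smul]
    rw [← h2, ff']
  have hFV : ∀ x, F (V x) = V (J x) := fun x => by
    rw [← hsum' x]
    simp only [map_add]
    rw [hFL _ (hPmp x), (hcore _ (hcM _ (hPpm x))).1]
  have hF'V : ∀ x, F' (V x) = V (J' x) := fun x => by
    have := hFV (J' x)
    rw [jj'] at this
    rw [← this, f'f]
  let C : H →L[ℂ] K := adjoint F ∘L V - V ∘L adjoint J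
  let C' : H →L[ℂ] K := adjoint F' ∘L V - V ∘L adjoint J'
  have hC : ∀ x, adjoint F (V x) = V (adjoint J x) + C x := fun x => by simp [C]
  have hC' : ∀ x, adjoint F' (V x) = V (adjoint J' x) + C' x := fun x => by simp [C']
  have hVC : ∀ x, adjoint V (C x) = 0 := by
    intro x
    refine ext_inner_right ℂ (fun y => ?_)
    have e : C x = adjoint F (V x) - V (adjoint J x) := rfl
    rw [e, map_sub, vv, inner_sub_left, adjoint_inner_left, adjoint_inner_left,
      adjoint_inner_left, hFV, ← adjoint_inner_left, vv, sub_self, inner_zero_left]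
  have hVC' : ∀ x, adjoint V (C' x) = 0 := by
    intro x
    refine ext_inner_right ℂ (fun y => ?_)
    have e : C' x = adjoint F' (V x) - V (adjoint J' x) := rfl
    rw [e, map_sub, vv, inner_sub_left, adjoint_inner_left, adjoint_inner_left,
      adjoint_inner_left, hF'V, ← adjoint_inner_left, vv, sub_self, inner_zero_left]
  have hCC' : ∀ x, adjoint F (C' x) = - C (adjoint J' x) := by
    intro x
    have h1 := fsf's (V x)
    rw [hC', map_add, hC, jsj's, add_assoc] at h1
    have h2 := add_eq_left.1 h1
    rw [eq_neg_iff_add_eq_zero, add_comm]; exact h2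
  have hC'e : ∀ x, C' x = - adjoint F' (C (adjoint J' x)) := by
    intro x
    rw [← f'sfs (C' x), hCC', map_neg]
  have hrel : ∀ x, ‖J x‖ ^ 2 + ‖J' x‖ ^ 2 = (r⁻¹ ^ 2 + r ^ 2) * ‖x‖ ^ 2 →
      C (J x) = adjoint F' (C (adjoint J' (J' x))) := by
    intro x hx
    have h0 := (hcore x hx).2.2
    have e : T (V x) = ((r⁻¹ ^ 2 + r ^ 2 : ℝ) : ℂ) • V x - adjoint F (F (V x))
      - adjoint F' (F' (V x)) := rfl
    rw [e, hFV, hF'V, hC, hC'] at h0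
    have h1 := congrArg (fun z => z - V (adjoint V z)) h0
    simp only [map_sub, map_add, map_smul, vv, hVC, hVC', map_zero, sub_zero, add_zero] at h1
    have h2 : C (J x) + C' (J' x) = 0 := by
      rw [← neg_eq_zero, ← h1]; abel
    rw [hC'e] at h2
    rw [← sub_eq_zero, sub_eq_add_neg]; exact h2
  have hr2 : r ^ 2 < 1 := by nlinarith
  have hCL : ∀ x, (∃ y, Pm y = 0 ∧ x = U y) → C x = 0 := by
    refine aux_contr C U hU _ ?_ (r ^ 2) (by positivity) hr2 ?_
    · rintro x ⟨y, hy, rfl⟩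
      exact ⟨U y, hUL y hy, rfl⟩
    · rintro x ⟨y, hy, rfl⟩
      have h1 := hrel _ (hcL y hy)
      rw [hL _ (hUL y hy), hJ'U y hy, map_smul, map_smul, hJ'sL y hy] at h1
      have h2 := congrArg (adjoint F) h1
      rw [fsf's, smul_smul, map_smul, map_smul] at h2
      have h3 : C (U y) = ((r : ℂ) * r * r) • adjoint F (C (U (U y))) := by
        rw [mul_smul, h2, smul_smul]
        rw [show (r : ℂ) * r * ((r : ℂ)⁻¹ * (r : ℂ)⁻¹) = 1 by field_simp, one_smul]
      rw [h3, norm_smul, norm_mul, norm_mul, hnr]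
      have h4 : ‖adjoint F (C (U (U y)))‖ ≤ r⁻¹ * ‖C (U (U y))‖ := by
        refine (le_opNorm _ _).trans ?_
        rw [LinearIsometryEquiv.norm_map]
        gcongr
      calc r * r * r * ‖adjoint F (C (U (U y)))‖
          ≤ r * r * r * (r⁻¹ * ‖C (U (U y))‖) := by gcongr
        _ = r ^ 2 * ‖C (U (U y))‖ := by field_simp
  have hrelM : ∀ x, Pp x = 0 → C (U x) = ((r : ℂ) * r * r) • adjoint F' (C x) := by
    intro x hx
    have h1 := hrel _ (hcM x hx)
    rw [hM _ hx, hJ'M x hx, map_smul, map_smul, hJ'sM _ (hUM x hx), uu', smul_smul, map_smul,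
      map_smul] at h1
    rw [mul_assoc, mul_smul, ← h1, smul_smul, mul_inv_cancel₀ ha, one_smul]
  have hCM : ∀ x, Pp x = 0 → C x = 0 := by
    refine aux_contr C (adjoint U) hU' _ hUM (r ^ 2) (by positivity) hr2 ?_
    intro x hx
    have h3 := hrelM _ (hUM x hx)
    rw [uu'] at h3
    rw [h3, norm_smul, norm_mul, norm_mul, hnr]
    have h4 : ‖adjoint F' (C (adjoint U x))‖ ≤ r⁻¹ * ‖C (adjoint U x)‖ := by
      refine (le_opNorm _ _).trans ?_
      rw [LinearIsometryEquiv.norm_map]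
      gcongr
    calc r * r * r * ‖adjoint F' (C (adjoint U x))‖
        ≤ r * r * r * (r⁻¹ * ‖C (adjoint U x)‖) := by gcongr
      _ = r ^ 2 * ‖C (adjoint U x)‖ := by field_simp
  have hC0 : ∀ x, C x = 0 := by
    intro x
    rw [← uu' x, ← hsum' (adjoint U x), map_add, map_add, hCL _ ⟨_, hPmp _, rfl⟩,
      hrelM _ (hPpm _), hCM _ (hPpm _), map_zero, smul_zero, add_zero]
  refine ⟨?_, ?_⟩
  · rintro _ ⟨x, rfl⟩
    exact ⟨J x, (hFV x).symm⟩
  · rintro _ ⟨x, rfl⟩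
    exact ⟨adjoint J x, by rw [hC, hC0, add_zero]⟩


end
end

section
/- Fix 0 < r < 1. Let H and K be complex Hilbert spaces, let J ∈ 𝒫𝔸_r[H], let F ∈ ℙ𝔸_r[K], and let V : H → K be a linear isometry such that V J = F V. Then the range of V reduces F; that is, the range of V is invariant under both F and F*. (In other words, every element of 𝒫𝔸_r is extremal in the Agler sense: every lift of J to an element of ℙ𝔸_r is trivial.) -/
open ContinuousLinearMap

noncomputable section

lemma posKer {K : Type*} [NormedAddCommGroup K] [InnerProductSpace ℂ K] [CompleteSpace K]
    (T : K →L[ℂ] K) (hT : T.IsPositive) (x : K) (hx : RCLike.re (inner ℂ (T x) x) = 0) :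
    T x = 0 := by
  obtain ⟨S, hS⟩ := CStarAlgebra.nonneg_iff_eq_star_mul_self.mp
    ((ContinuousLinearMap.nonneg_iff_isPositive T).mpr hT)
  have h1 : ∀ y, T y = adjoint S (S y) := fun y => by rw [hS]; rfl
  rw [h1, adjoint_inner_left, inner_self_eq_norm_sq] at hx
  have : S x = 0 := by simpa using hx
  rw [h1, this, map_zero]

lemma pickForm {K : Type*} [NormedAddCommGroup K] [InnerProductSpace ℂ K] [CompleteSpace K]
    (c : ℝ) (F F' : K →L[ℂ] K) (x : K) :
    RCLike.re (inner ℂ (((c : ℂ) • (1 : K →L[ℂ] K)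
      - adjoint F * F - adjoint F' * F') x) x) = c * ‖x‖ ^ 2 - ‖F x‖ ^ 2 - ‖F' x‖ ^ 2 := by
  have h1 : ((c : ℂ) • (1 : K →L[ℂ] K) - adjoint F * F - adjoint F' * F') x
      = (c : ℂ) • x - adjoint F (F x) - adjoint F' (F' x) := rfl
  rw [h1, inner_sub_left, inner_sub_left, adjoint_inner_left, adjoint_inner_left, inner_smul_left,
    map_sub, map_sub, inner_self_eq_norm_sq, inner_self_eq_norm_sq, Complex.conj_ofReal]
  congr 2
  rw [← inner_self_eq_norm_sq (𝕜 := ℂ) x]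
  simp

lemma normBound {K : Type*} [NormedAddCommGroup K] [InnerProductSpace ℂ K] [CompleteSpace K]
    (r : ℝ) (hr0 : 0 < r) (hr1 : r < 1) (F F' : K →L[ℂ] K) (h : F' * F = 1)
    (h' : F * F' = 1)
    (hp : ∀ x, ‖F x‖ ^ 2 + ‖F' x‖ ^ 2 ≤ (r⁻¹ ^ 2 + r ^ 2) * ‖x‖ ^ 2) : ‖F‖ ≤ r⁻¹ := by
  by_contra hM
  push Not at hM
  have hri : 1 < r⁻¹ := (one_lt_inv₀ hr0).mpr hr1
  have hM0 : 0 < ‖F‖ := by linarith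
  have hlow : ∀ x, ‖x‖ ≤ ‖F‖ * ‖F' x‖ := fun x => by
    have : F (F' x) = x := by
      have := congrArg (fun T : K →L[ℂ] K => T x) h'
      simpa using this
    calc ‖x‖ = ‖F (F' x)‖ := by rw [this]
      _ ≤ _ := F.le_opNorm _
  have hsq : ∀ x, ‖F x‖ ^ 2 ≤ (r⁻¹ ^ 2 + r ^ 2 - ‖F‖⁻¹ ^ 2) * ‖x‖ ^ 2 := fun x => by
    have h1 : ‖F‖⁻¹ * ‖x‖ ≤ ‖F' x‖ := by
      rw [inv_mul_le_iff₀ hM0]; exact hlow x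
    have h2 : (‖F‖⁻¹ * ‖x‖) ^ 2 ≤ ‖F' x‖ ^ 2 := by gcongr
    have := hp x
    nlinarith
  have hMi : ‖F‖⁻¹ < r := by
    rw [inv_lt_comm₀ hM0 hr0]; exact hM
  have hMi0 : 0 < ‖F‖⁻¹ := by positivity
  have hd : 0 ≤ r⁻¹ ^ 2 + r ^ 2 - ‖F‖⁻¹ ^ 2 := by nlinarith [sq_nonneg r⁻¹]
  have hle : ‖F‖ ≤ Real.sqrt (r⁻¹ ^ 2 + r ^ 2 - ‖F‖⁻¹ ^ 2) := by
    refine F.opNorm_le_bound (Real.sqrt_nonneg _) fun x => ?_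
    refine le_of_abs_le (abs_le_of_sq_le_sq ?_ (by positivity))
    rw [mul_pow, Real.sq_sqrt hd]
    exact hsq x
  have hle2 : ‖F‖ ^ 2 ≤ r⁻¹ ^ 2 + r ^ 2 - ‖F‖⁻¹ ^ 2 := by
    rw [← Real.sq_sqrt hd]; gcongr
  set m := ‖F‖ with hm
  have e1 : m * m⁻¹ = 1 := mul_inv_cancel₀ hM0.ne'
  have e2 : r * r⁻¹ = 1 := mul_inv_cancel₀ hr0.ne'
  have e3 : m ^ 2 * m ^ 2 + 1 ≤ (r⁻¹ ^ 2 + r ^ 2) * m ^ 2 := by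
    have : m ^ 2 * m⁻¹ ^ 2 = 1 := by rw [← mul_pow, e1, one_pow]
    nlinarith [mul_le_mul_of_nonneg_left hle2 (sq_nonneg m)]
  have e4 : r ^ 2 * r⁻¹ ^ 2 = 1 := by rw [← mul_pow, e2, one_pow]
  have e5 : 0 < m ^ 2 - r⁻¹ ^ 2 := by nlinarith
  have e6 : 0 < m ^ 2 - r ^ 2 := by nlinarith
  nlinarith [mul_pos e5 e6]

lemma growth {H K : Type*} [NormedAddCommGroup H] [InnerProductSpace ℂ H]
    [NormedAddCommGroup K] [InnerProductSpace ℂ K]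
    (N : H →L[ℂ] K) (T : H → H) (S : Set H) (q : ℝ) (hq0 : 0 ≤ q) (hq1 : q < 1)
    (hTS : ∀ g ∈ S, T g ∈ S) (hTn : ∀ g ∈ S, ‖T g‖ = ‖g‖)
    (hN : ∀ g ∈ S, ‖N g‖ ≤ q * ‖N (T g)‖) : ∀ g ∈ S, N g = 0 := by
  have key : ∀ n : ℕ, ∀ g ∈ S, ‖N g‖ ≤ q ^ n * (‖N‖ * ‖g‖) := by
    intro n
    induction n with
    | zero => intro g _; simpa using N.le_opNorm g
    | succ k ih =>
      intro g hg
      have h1 := ih (T g) (hTS g hg)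
      rw [hTn g hg] at h1
      calc ‖N g‖ ≤ q * ‖N (T g)‖ := hN g hg
        _ ≤ q * (q ^ k * (‖N‖ * ‖g‖)) := by gcongr
        _ = _ := by ring
  intro g hg
  have hl : Filter.Tendsto (fun n : ℕ => q ^ n * (‖N‖ * ‖g‖)) Filter.atTop (nhds 0) := by
    simpa using (tendsto_pow_atTop_nhds_zero_of_lt_one hq0 hq1).mul_const (‖N‖ * ‖g‖)
  have : ‖N g‖ ≤ 0 := ge_of_tendsto' hl (fun n => key n g hg)
  simpa using this

/-- Every element of `𝒫𝔸_r` is extremal in the Agler sense: if `J ∈ 𝒫𝔸_r[H]` lifts to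
`F ∈ ℙ𝔸_r[K]` via an isometry `V` (so `V J = F V`), then the range of `V` reduces `F`. -/
theorem pa_script_extremal {H K : Type*}
    [NormedAddCommGroup H] [InnerProductSpace ℂ H] [CompleteSpace H]
    [NormedAddCommGroup K] [InnerProductSpace ℂ K] [CompleteSpace K]
    (r : ℝ) (hr0 : 0 < r) (hr1 : r < 1)
    (J : H →L[ℂ] H) (hJ : memPAscript r J)
    (F F' : K →L[ℂ] K) (hFinv : F * F' = 1) (hFinv' : F' * F = 1)
    (hFpick : (((r⁻¹ ^ 2 + r ^ 2 : ℝ) : ℂ) • (1 : K →L[ℂ] K)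
      - adjoint F * F - adjoint F' * F').IsPositive)
    (V : H →L[ℂ] K) (hV : ∀ x, ‖V x‖ = ‖x‖)
    (hlift : V ∘L J = F ∘L V) :
    (∀ y ∈ Set.range V, F y ∈ Set.range V) ∧
      (∀ y ∈ Set.range V, adjoint F y ∈ Set.range V) := by
  obtain ⟨Pp, Pm, U, hPp, hPm, hsum, hU1, hU2, htri, hJe⟩ := hJ
  have hl : ∀ x, V (J x) = F (V x) := fun x => congrArg (fun T : H →L[ℂ] K => T x) hlift
  have hFF' : ∀ x, F (F' x) = x := fun x => congrArg (fun T : K →L[ℂ] K => T x) hFinv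
  have hF'F : ∀ x, F' (F x) = x := fun x => congrArg (fun T : K →L[ℂ] K => T x) hFinv'
  refine ⟨?_, ?_⟩
  · rintro _ ⟨x, rfl⟩
    exact ⟨J x, hl x⟩
  have hr : (r : ℂ) ≠ 0 := by exact_mod_cast hr0.ne'
  have hUs : ∀ x, adjoint U (U x) = x := fun x => congrArg (fun T : H →L[ℂ] H => T x) hU1
  have hsU : ∀ x, U (adjoint U x) = x := fun x => congrArg (fun T : H →L[ℂ] H => T x) hU2
  have hUn : ∀ x, ‖U x‖ = ‖x‖ := (norm_map_iff_adjoint_comp_self U).mpr hU1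
  have hUn' : ∀ x, ‖adjoint U x‖ = ‖x‖ := fun x => by rw [← hUn, hsU]
  have hVV : ∀ x, adjoint V (V x) = x := fun x =>
    congrArg (fun T : H →L[ℂ] H => T x) ((norm_map_iff_adjoint_comp_self V).mp hV)
  have hs : ∀ x, Pp x + Pm x = x := fun x => congrArg (fun T : H →L[ℂ] H => T x) hsum
  have hpp : ∀ x, Pp (Pp x) = Pp x := fun x => congrArg (fun T : H →L[ℂ] H => T x) hPp.2
  have hmm : ∀ x, Pm (Pm x) = Pm x := fun x => congrArg (fun T : H →L[ℂ] H => T x) hPm.2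
  have hJx : ∀ x, J x = U ((r : ℂ) • Pp x + (r : ℂ)⁻¹ • Pm x) := fun x => by rw [hJe]; rfl
  have hUp : ∀ x, Pp x = x → Pp (U x) = U x := fun x hx => by
    have h1 : Pm (U (Pp x)) = 0 := congrArg (fun T : H →L[ℂ] H => T x) htri
    have h2 := hs (U x)
    rw [hx] at h1
    rwa [h1, add_zero] at h2
  have htri' : Pp * adjoint U * Pm = 0 := by
    have h1 : star (Pm * U * Pp) = 0 := by rw [htri, star_zero]
    rw [star_mul, star_mul, hPp.1.star_eq, hPm.1.star_eq, star_eq_adjoint] at h1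
    rw [mul_assoc]; exact h1
  have hUm : ∀ x, Pm x = x → Pm (adjoint U x) = adjoint U x := fun x hx => by
    have h1 : Pp (adjoint U (Pm x)) = 0 := congrArg (fun T : H →L[ℂ] H => T x) htri'
    have h2 := hs (adjoint U x)
    rw [hx] at h1
    rwa [h1, zero_add] at h2
  have hJp : ∀ x, Pp x = x → J x = (r : ℂ) • U x := fun x hx => by
    have h2 := hs x
    rw [hx] at h2
    have h3 : Pm x = 0 := by simpa using h2
    rw [hJx, hx, h3, smul_zero, add_zero, map_smul]
  have hJm : ∀ x, Pm x = x → J x = (r : ℂ)⁻¹ • U x := fun x hx => by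
    have h2 := hs x
    rw [hx] at h2
    have h3 : Pp x = 0 := by simpa using h2
    rw [hJx, hx, h3, smul_zero, zero_add, map_smul]
  have hPadj : adjoint Pp = Pp := hPp.1
  have hPadj' : adjoint Pm = Pm := hPm.1
  have hJadj : ∀ x, adjoint J x = (r : ℂ) • Pp (adjoint U x) + (r : ℂ)⁻¹ • Pm (adjoint U x) := by
    intro x
    refine ext_inner_right ℂ fun y => ?_
    rw [adjoint_inner_left, hJx, ← adjoint_inner_left, inner_add_left, inner_add_right,
      inner_smul_left, inner_smul_left, inner_smul_right, inner_smul_right,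
      ← adjoint_inner_left Pp, ← adjoint_inner_left Pm, hPadj, hPadj', ← Complex.ofReal_inv,
      Complex.conj_ofReal, Complex.conj_ofReal]
  have hJJp : ∀ x, Pp x = x → adjoint J (J x) = ((r : ℂ) ^ 2) • x := fun x hx => by
    have h2 := hs x
    rw [hx] at h2
    have h3 : Pm x = 0 := by simpa using h2
    rw [hJp x hx, map_smul, hJadj, hUs, hx, h3, smul_zero, add_zero, smul_smul, sq]
  have hJJm : ∀ x, Pm x = x → adjoint J (J x) = ((r : ℂ)⁻¹ ^ 2) • x := fun x hx => by
    have h2 := hs x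
    rw [hx] at h2
    have h3 : Pp x = 0 := by simpa using h2
    rw [hJm x hx, map_smul, hJadj, hUs, hx, h3, smul_zero, zero_add, smul_smul, sq]
  have hp : ∀ x, ‖F x‖ ^ 2 + ‖F' x‖ ^ 2 ≤ (r⁻¹ ^ 2 + r ^ 2) * ‖x‖ ^ 2 := fun x => by
    have h1 := hFpick.re_inner_nonneg_left x
    rw [pickForm] at h1
    linarith
  have hFn := normBound r hr0 hr1 F F' hFinv' hFinv hp
  have hFn' := normBound r hr0 hr1 F' F hFinv hFinv' (fun x => by rw [add_comm]; exact hp x)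
  have hAn : ∀ w, ‖adjoint F w‖ ≤ r⁻¹ * ‖w‖ := fun w =>
    (adjoint F).le_of_opNorm_le (by rwa [LinearIsometryEquiv.norm_map]) w
  have hA'A : ∀ w, adjoint F' (adjoint F w) = w := fun w => by
    refine ext_inner_right ℂ fun y => ?_
    rw [adjoint_inner_left, adjoint_inner_left, hFF']
  have hAA' : ∀ w, adjoint F (adjoint F' w) = w := fun w => by
    refine ext_inner_right ℂ fun y => ?_
    rw [adjoint_inner_left, adjoint_inner_left, hF'F]
  have hAn' : ∀ w, ‖w‖ ≤ r⁻¹ * ‖adjoint F w‖ := fun w => by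
    have h1 := (adjoint F').le_of_opNorm_le (c := r⁻¹)
      (by rwa [LinearIsometryEquiv.norm_map]) (adjoint F w)
    rwa [hA'A] at h1
  let Q : K →L[ℂ] K := 1 - V ∘L adjoint V
  let X : H →L[ℂ] K := Q ∘L adjoint F ∘L V
  have hQ : ∀ w, Q w = w - V (adjoint V w) := fun w => rfl
  have hX : ∀ h, X h = Q (adjoint F (V h)) := fun h => rfl
  have hQV : ∀ h, Q (V h) = 0 := fun h => by rw [hQ, hVV, sub_self]
  have hVQ : ∀ w, adjoint V (Q w) = 0 := fun w => by rw [hQ, map_sub, hVV, sub_self]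
  have hVF : ∀ w, adjoint V (adjoint F w) = adjoint J (adjoint V w) := fun w => by
    refine ext_inner_right ℂ fun y => ?_
    rw [adjoint_inner_left, adjoint_inner_left, adjoint_inner_left, adjoint_inner_left, hl]
  have hQF : ∀ w, Q (adjoint F (Q w)) = adjoint F (Q w) := fun w => by
    rw [hQ (adjoint F (Q w)), hVF, hVQ, map_zero, map_zero, sub_zero]
  have hdec : ∀ h, adjoint F (V h) = V (adjoint J h) + X h := fun h => by
    rw [hX, hQ, hVF, hVV]; abel
  have main : ∀ h h', J h' = h → ‖J h‖ ^ 2 + ‖h'‖ ^ 2 = (r⁻¹ ^ 2 + r ^ 2) * ‖h‖ ^ 2 →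
      adjoint F (X (J h)) = ((r⁻¹ ^ 2 + r ^ 2 : ℝ) : ℂ) • X h - X (adjoint J (J h)) := by
    intro h h' hh hn
    have hF'V : F' (V h) = V h' := by rw [← hh, hl, hF'F]
    have h0 := posKer _ hFpick (V h) (by
      rw [pickForm, ← hl, hF'V, hV, hV, hV]; linarith)
    have h1 : ((r⁻¹ ^ 2 + r ^ 2 : ℝ) : ℂ) • V h - adjoint F (F (V h))
      - adjoint F' (F' (V h)) = 0 := h0
    rw [← hl, hF'V] at h1
    have h2 := congrArg (fun w => Q (adjoint F w)) h1
    simp only [map_sub, map_smul, map_zero] at h2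
    rw [hAA', hQV, sub_zero, ← hX, hdec (J h), map_add, map_add, ← hX,
      hX (J h), hQF, ← hX] at h2
    rw [← sub_eq_zero, ← neg_eq_zero, ← h2]
    abel
  have q0 : (0 : ℝ) ≤ r ^ 2 := by positivity
  have q1 : r ^ 2 < 1 := by nlinarith
  have step1 : ∀ g ∈ {g | Pp g = g}, (X ∘L U) g = 0 := by
    refine growth (X ∘L U) U _ (r ^ 2) q0 q1 (fun g hg => hUp g hg) (fun g _ => hUn g) ?_
    intro g hg
    have hg : Pp g = g := hg
    have h1 := main (U g) ((r : ℂ)⁻¹ • g)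
      (by rw [map_smul, hJp g hg, smul_smul, inv_mul_cancel₀ hr, one_smul])
      (by
        rw [hJp _ (hUp g hg), norm_smul, norm_smul, hUn, hUn, norm_inv, Complex.norm_real,
          Real.norm_of_nonneg hr0.le]
        ring)
    rw [hJJp _ (hUp g hg), hJp _ (hUp g hg), map_smul, map_smul, map_smul, ← sub_smul] at h1
    have h2 : ((r⁻¹ ^ 2 + r ^ 2 : ℝ) : ℂ) - (r : ℂ) ^ 2 = ((r⁻¹ ^ 2 : ℝ) : ℂ) := by
      push_cast; ring
    rw [h2] at h1
    have h3 := congrArg norm h1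
    rw [norm_smul, norm_smul, Complex.norm_real, Complex.norm_real,
      Real.norm_of_nonneg hr0.le, Real.norm_of_nonneg (by positivity)] at h3
    have h4 := hAn (X (U (U g)))
    change ‖X (U g)‖ ≤ r ^ 2 * ‖X (U (U g))‖
    have h5 : ‖X (U g)‖ = r ^ 2 * (r * ‖adjoint F (X (U (U g)))‖) := by
      rw [h3]; field_simp
    rw [h5]
    have h6 : r * ‖adjoint F (X (U (U g)))‖ ≤ ‖X (U (U g))‖ := by
      rw [inv_mul_eq_div, le_div_iff₀ hr0] at h4; linarith
    gcongr
  have step2 : ∀ g ∈ {g | Pm g = g}, (X ∘L U) g = 0 := by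
    refine growth (X ∘L U) (adjoint U) _ (r ^ 2) q0 q1 (fun g hg => hUm g hg)
      (fun g _ => hUn' g) ?_
    intro g hg
    have hg : Pm g = g := hg
    have h1 := main g ((r : ℂ) • adjoint U g)
      (by rw [map_smul, hJm _ (hUm g hg), smul_smul, mul_inv_cancel₀ hr, one_smul, hsU])
      (by
        rw [hJm _ hg, norm_smul, norm_smul, hUn, hUn', norm_inv, Complex.norm_real,
          Real.norm_of_nonneg hr0.le]
        ring)
    rw [hJJm _ hg, hJm _ hg, map_smul, map_smul, map_smul, ← sub_smul] at h1
    have h2 : ((r⁻¹ ^ 2 + r ^ 2 : ℝ) : ℂ) - (r : ℂ)⁻¹ ^ 2 = ((r ^ 2 : ℝ) : ℂ) := by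
      push_cast; ring
    rw [h2] at h1
    have h3 := congrArg norm h1
    rw [norm_smul, norm_smul, norm_inv, Complex.norm_real, Complex.norm_real,
      Real.norm_of_nonneg hr0.le, Real.norm_of_nonneg (by positivity)] at h3
    have h4 := hAn' (X (U g))
    change ‖X (U g)‖ ≤ r ^ 2 * ‖X (U (adjoint U g))‖
    rw [hsU, ← h3]
    exact h4
  have hX0 : ∀ h, X h = 0 := fun h => by
    have h1 : X (U (Pp (adjoint U h))) = 0 := step1 _ (hpp _)
    have h2 : X (U (Pm (adjoint U h))) = 0 := step2 _ (hmm _)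
    rw [← hsU h, ← hs (adjoint U h), map_add, map_add, h1, h2, add_zero]
  rintro _ ⟨x, rfl⟩
  exact ⟨adjoint J x, by rw [hdec, hX0, add_zero]⟩

end
end

section
/- Let n be a positive integer and let T be an n × n complex matrix with operator norm ‖T‖ < 1. Then there exist an open set Ω ⊆ ℂ containing the closed unit disc and an analytic function F : Ω → M_n(ℂ) such that F(0) = T and F(ζ)* F(ζ) = I for every ζ with |ζ| = 1 (F is unitary valued on the unit circle). -/
open ContinuousLinearMap

noncomputable section

/-- Polar decomposition of a contraction on a finite dimensional space. -/
theorem polar_aux (n : ℕ)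
    (T : EuclideanSpace ℂ (Fin n) →L[ℂ] EuclideanSpace ℂ (Fin n)) :
    ∃ U P : EuclideanSpace ℂ (Fin n) →L[ℂ] EuclideanSpace ℂ (Fin n),
      star U * U = 1 ∧ star P = P ∧ ‖P‖ ≤ ‖T‖ ∧ U * P = T := by
  obtain ⟨P, hP, hPP⟩ : ∃ P : EuclideanSpace ℂ (Fin n) →L[ℂ] EuclideanSpace ℂ (Fin n),
      star P = P ∧ P * P = star T * T :=
    ⟨CFC.abs T, (CFC.abs_nonneg T).isSelfAdjoint, CFC.abs_mul_abs T⟩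
  have hn : ∀ x, ‖P x‖ = ‖T x‖ := by
    intro x
    have h1 : inner ℂ (P x) (P x) = inner ℂ (T x) (T x) := by
      rw [← adjoint_inner_right P, ← adjoint_inner_right T, ← star_eq_adjoint,
        ← star_eq_adjoint, hP]
      exact congrArg (fun A : EuclideanSpace ℂ (Fin n) →L[ℂ] EuclideanSpace ℂ (Fin n) =>
        inner ℂ x (A x)) hPP
    rw [inner_self_eq_norm_sq_to_K, inner_self_eq_norm_sq_to_K] at h1
    have h2 : ‖P x‖ ^ 2 = ‖T x‖ ^ 2 := by exact_mod_cast h1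
    exact (sq_eq_sq₀ (norm_nonneg _) (norm_nonneg _)).1 h2
  obtain ⟨g, hg⟩ := (P : EuclideanSpace ℂ (Fin n) →ₗ[ℂ]
    EuclideanSpace ℂ (Fin n)).rangeRestrict.exists_rightInverse_of_surjective
    (LinearMap.range_rangeRestrict _)
  have hg' : ∀ y, P (g y) = y := fun y => congrArg Subtype.val (LinearMap.congr_fun hg y)
  let L : LinearMap.range (P : EuclideanSpace ℂ (Fin n) →ₗ[ℂ] EuclideanSpace ℂ (Fin n)) →ₗᵢ[ℂ]
      EuclideanSpace ℂ (Fin n) :=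
    ⟨(T : EuclideanSpace ℂ (Fin n) →ₗ[ℂ] EuclideanSpace ℂ (Fin n)) ∘ₗ g, fun y => by
      change ‖T (g y)‖ = ‖y‖
      rw [← hn, hg']; rfl⟩
  refine ⟨L.extend.toContinuousLinearMap, P, ?_, hP, ?_, ?_⟩
  · ext1 x
    refine ext_inner_left ℂ fun y => ?_
    rw [star_eq_adjoint, ContinuousLinearMap.mul_apply, adjoint_inner_right]
    exact L.extend.inner_map_map y x
  · refine P.opNorm_le_bound (norm_nonneg _) fun x => ?_
    rw [hn]; exact T.le_opNorm x
  · ext1 x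
    have h := L.extend_apply ⟨P x, LinearMap.mem_range_self _ x⟩
    change L.extend (P x) = T x
    refine h.trans ?_
    change T (g _) = T x
    rw [← sub_eq_zero, ← map_sub, ← norm_eq_zero, ← hn, map_sub, hg', sub_self, norm_zero]

/-- The Möbius construction in a Banach star algebra. -/
theorem moebius_aux {A : Type*} [NormedRing A] [StarRing A] [NormedAlgebra ℂ A]
    [CompleteSpace A] [StarModule ℂ A] (U P T : A) (hU : star U * U = 1) (hP : star P = P)
    (hP1 : ‖P‖ < 1) (hUP : U * P = T) :
    ∃ Ω : Set ℂ, IsOpen Ω ∧ Metric.closedBall (0 : ℂ) 1 ⊆ Ω ∧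
      ∃ F : ℂ → A, AnalyticOnNhd ℂ F Ω ∧ F 0 = T ∧
        ∀ ζ : ℂ, ‖ζ‖ = 1 → star (F ζ) * F ζ = 1 := by
  have hopen : IsOpen {z : ℂ | IsUnit (1 + z • P)} :=
    Units.isOpen.preimage (f := fun z : ℂ => 1 + z • P) (by fun_prop)
  have hball : Metric.closedBall (0 : ℂ) 1 ⊆ {z : ℂ | IsUnit (1 + z • P)} := by
    intro z hz
    have hz : ‖z‖ ≤ 1 := by simpa using hz
    have h : ‖-(z • P)‖ < 1 := by
      rw [norm_neg, norm_smul]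
      nlinarith [norm_nonneg P, norm_nonneg z]
    have := isUnit_one_sub_of_norm_lt_one h
    simpa using this
  refine ⟨_, hopen, hball, fun z => U * (P + z • 1) * Ring.inverse (1 + z • P), ?_, ?_, ?_⟩
  · refine DifferentiableOn.analyticOnNhd (fun z hz => ?_) hopen
    refine DifferentiableAt.differentiableWithinAt ?_
    obtain ⟨u, hu⟩ : IsUnit (1 + z • P) := hz
    have h1 : DifferentiableAt ℂ (fun z : ℂ => Ring.inverse (1 + z • P)) z := by
      refine DifferentiableAt.comp z (g := Ring.inverse) (f := fun z : ℂ => 1 + z • P) ?_ ?_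
      · rw [← hu]; exact differentiableAt_inverse u.isUnit
      · fun_prop
    exact DifferentiableAt.mul (by fun_prop) h1
  · simp [hUP]
  · intro z hz
    have hzu : IsUnit (1 + z • P) := hball (by simp [hz])
    have hzz : star z * z = 1 := by
      rw [mul_comm, Complex.star_def, Complex.mul_conj, Complex.normSq_eq_norm_sq, hz]; simp
    set R := Ring.inverse (1 + z • P) with hR
    have hR1 : (1 + z • P) * R = 1 := Ring.mul_inverse_cancel _ hzu
    have hR2 : star R * star (1 + z • P) = 1 := by rw [← star_mul, hR1, star_one]
    have key : star (P + z • 1) * (P + z • 1) = star (1 + z • P) * (1 + z • P) := by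
      simp only [star_add, star_smul, star_one, hP, add_mul, mul_add, smul_mul_assoc,
        mul_smul_comm, one_mul, mul_one, smul_add, smul_smul]
      rw [mul_comm z (star z), hzz, one_smul, one_smul]
      abel
    calc star (U * (P + z • 1) * R) * (U * (P + z • 1) * R)
        = star R * (star (P + z • 1) * (star U * U) * (P + z • 1)) * R := by
          simp only [star_mul, mul_assoc]
      _ = (star R * star (1 + z • P)) * ((1 + z • P) * R) := by
          rw [hU, mul_one, key]; simp only [mul_assoc]
      _ = 1 := by rw [hR1, hR2, one_mul]

/-- Nelson's trick: a strict contraction `T` on `ℂⁿ` extends to a function `F`, analytic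
on an open neighborhood `Ω` of the closed unit disc, with `F(0) = T` and `F` unitary
valued on the unit circle. -/
theorem nelson_trick (n : ℕ) (hn : 0 < n)
    (T : EuclideanSpace ℂ (Fin n) →L[ℂ] EuclideanSpace ℂ (Fin n)) (hT : ‖T‖ < 1) :
    ∃ Ω : Set ℂ, IsOpen Ω ∧ Metric.closedBall (0 : ℂ) 1 ⊆ Ω ∧
      ∃ F : ℂ → (EuclideanSpace ℂ (Fin n) →L[ℂ] EuclideanSpace ℂ (Fin n)),
        AnalyticOnNhd ℂ F Ω ∧ F 0 = T ∧
        ∀ ζ : ℂ, ‖ζ‖ = 1 → adjoint (F ζ) * F ζ = 1 := by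
  obtain ⟨U, P, hU, hP, hPn, hUP⟩ := polar_aux n T
  exact moebius_aux U P T hU hP (hPn.trans_lt hT) hUP

end
end

section
/- Let n and g be positive integers and let T₁, …, T_g be n × n complex matrices such that the row matrix (T₁ ⋯ T_g) is a strict contraction, i.e., ‖T₁T₁* + ⋯ + T_gT_g*‖ < 1. Then there exist an open set Ω ⊆ ℂ containing the closed unit disc and analytic functions F₁, …, F_g : Ω → M_n(ℂ) such that F_j(0) = T_j for each j and F₁(ζ)F₁(ζ)* + ⋯ + F_g(ζ)F_g(ζ)* = I for every ζ with |ζ| = 1 (the row (F₁(ζ) ⋯ F_g(ζ)) is a coisometry on the unit circle). -/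
open ContinuousLinearMap

noncomputable section

/-- Two linear maps with the same norms: the second factors through an isometry. -/
lemma nelson_exists_isometry {H V : Type*} [NormedAddCommGroup H] [InnerProductSpace ℂ H]
    [NormedAddCommGroup V] [InnerProductSpace ℂ V] [FiniteDimensional ℂ V]
    (A B : H →ₗ[ℂ] V) (h : ∀ x, ‖B x‖ = ‖A x‖) :
    ∃ E : V →ₗᵢ[ℂ] V, ∀ x, E (A x) = B x := by
  obtain ⟨s, hs⟩ := LinearMap.exists_rightInverse_of_surjective A.rangeRestrict
    (LinearMap.range_eq_top.2 A.surjective_rangeRestrict)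
  have hs' : ∀ y : LinearMap.range A, A (s y) = y := fun y => by
    have := congrArg Subtype.val (LinearMap.congr_fun hs y)
    simpa using this
  let L : LinearMap.range A →ₗᵢ[ℂ] V :=
    { toLinearMap := B ∘ₗ s
      norm_map' := fun y => by
        rw [LinearMap.comp_apply, h, hs']; rfl }
  refine ⟨L.extend, fun x => ?_⟩
  have h1 := L.extend_apply ⟨A x, LinearMap.mem_range_self A x⟩
  have h2 : L ⟨A x, LinearMap.mem_range_self A x⟩ = B x := by
    change B (s ⟨A x, LinearMap.mem_range_self A x⟩) = B x
    rw [← sub_eq_zero, ← map_sub, ← norm_eq_zero, h, map_sub, hs']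
    simp
  exact h1.trans h2

lemma nelson_polar {H : Type*} [NormedAddCommGroup H] [InnerProductSpace ℂ H]
    [FiniteDimensional ℂ H] [CompleteSpace H] (g : ℕ) (hg : 0 < g) (T : Fin g → (H →L[ℂ] H))
    (P : H →L[ℂ] H) (hP : adjoint P = P) (hPP : P * P = ∑ j, T j * adjoint (T j)) :
    ∃ W : Fin g → (H →L[ℂ] H), (∀ j, P * W j = T j) ∧ ∑ j, W j * adjoint (W j) = 1 := by
  classical
  let V := PiLp 2 (fun _ : Fin g => H)
  let i0 : Fin g := ⟨0, hg⟩
  let ι : H →ₗ[ℂ] V := (WithLp.linearEquiv 2 ℂ (Fin g → H)).symm.toLinearMap ∘ₗ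
    LinearMap.single ℂ (fun _ : Fin g => H) i0
  have hι : ∀ x, ‖ι x‖ = ‖x‖ := fun x => PiLp.norm_toLp_single 2 (fun _ : Fin g => H) i0 x
  let B : H →ₗ[ℂ] V := (WithLp.linearEquiv 2 ℂ (Fin g → H)).symm.toLinearMap ∘ₗ
    LinearMap.pi (fun j => (adjoint (T j)).toLinearMap)
  have hB : ∀ x, ‖B x‖ = ‖(ι ∘ₗ P.toLinearMap) x‖ := fun x => by
    have e1 : ‖B x‖ ^ 2 = ∑ j, ‖adjoint (T j) x‖ ^ 2 := PiLp.norm_sq_eq_of_L2 _ _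
    have e2 : ‖(ι ∘ₗ P.toLinearMap) x‖ = ‖P x‖ := hι _
    rw [e2, ← sq_eq_sq₀ (norm_nonneg _) (norm_nonneg _), e1]
    have e3 : inner ℂ ((P * P) x) x = inner ℂ ((∑ j, T j * adjoint (T j)) x) x := by rw [hPP]
    have e4 : inner ℂ ((P * P) x) x = ((‖P x‖ ^ 2 : ℝ) : ℂ) := by
      change inner ℂ (P (P x)) x = _
      conv_lhs => rw [← hP, ContinuousLinearMap.adjoint_inner_left, hP]
      rw [inner_self_eq_norm_sq_to_K]; push_cast; rfl
    have e5 : inner ℂ ((∑ j, T j * adjoint (T j)) x) x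
        = ((∑ j, ‖adjoint (T j) x‖ ^ 2 : ℝ) : ℂ) := by
      rw [_root_.sum_apply, sum_inner]
      push_cast
      refine Finset.sum_congr rfl fun j _ => ?_
      change inner ℂ (T j (adjoint (T j) x)) x = _
      rw [← ContinuousLinearMap.adjoint_inner_right, inner_self_eq_norm_sq_to_K]; rfl
    rw [e4, e5] at e3
    exact_mod_cast e3.symm
  obtain ⟨E, hE⟩ := nelson_exists_isometry (ι ∘ₗ P.toLinearMap) B hB
  let G : Fin g → (H →L[ℂ] H) := fun j => LinearMap.toContinuousLinearMap
    (LinearMap.proj j ∘ₗ (WithLp.linearEquiv 2 ℂ (Fin g → H)).toLinearMap ∘ₗ E.toLinearMap ∘ₗ ι)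
  have hG : ∀ x, ∑ j, ‖G j x‖ ^ 2 = ‖x‖ ^ 2 := fun x => by
    rw [← hι x, ← E.norm_map (ι x)]
    exact (PiLp.norm_sq_eq_of_L2 _ _).symm
  have hGP : ∀ j, G j * P = adjoint (T j) := fun j => by
    ext x
    have := congrArg (fun v : V => v j) (hE x)
    exact this
  refine ⟨fun j => adjoint (G j), fun j => ?_, ?_⟩
  · have := congrArg adjoint (hGP j)
    rw [adjoint_adjoint] at this
    rw [← this]
    have h2 : adjoint (G j * P) = adjoint P * adjoint (G j) := star_mul (G j) P
    rw [h2, hP]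
  · simp only [adjoint_adjoint]
    have : (∑ j, adjoint (G j) * G j).toLinearMap = (1 : H →L[ℂ] H).toLinearMap := by
      rw [← ext_inner_map]
      intro x
      change inner ℂ ((∑ j, adjoint (G j) * G j) x) x = inner ℂ x x
      rw [_root_.sum_apply, sum_inner, inner_self_eq_norm_sq_to_K]
      change _ = (‖x‖ : ℂ) ^ 2
      rw [show ((‖x‖ : ℂ) ^ 2) = ((‖x‖ ^ 2 : ℝ) : ℂ) by push_cast; rfl, ← hG x]
      push_cast
      refine Finset.sum_congr rfl fun j _ => ?_
      change inner ℂ (adjoint (G j) (G j x)) x = _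
      rw [ContinuousLinearMap.adjoint_inner_left, inner_self_eq_norm_sq_to_K]; rfl
    exact ContinuousLinearMap.coe_injective this

/-- The Möbius transform of a self-adjoint element is unitary on the circle. -/
lemma nelson_moebius {A : Type*} [NormedRing A] [StarRing A] [NormedAlgebra ℂ A] [StarModule ℂ A]
    (P : A) (hP : star P = P) (ζ : ℂ) (hζ : ‖ζ‖ = 1) (hu : IsUnit (1 + ζ • P)) :
    ((ζ • 1 + P) * Ring.inverse (1 + ζ • P)) * star ((ζ • 1 + P) * Ring.inverse (1 + ζ • P))
      = 1 := by
  have hz : ζ * star ζ = 1 := by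
    rw [Complex.star_def, Complex.mul_conj, Complex.normSq_eq_norm_sq, hζ]; simp
  obtain ⟨u, hu'⟩ := hu
  have hs : star (u : A) = 1 + star ζ • P := by rw [hu']; simp [hP]
  have hC : ζ • (1 : A) + P = ζ • star (u : A) := by
    rw [hs, smul_add, smul_smul, hz, one_smul]
  have hcomm : (u : A) * star (u : A) = star (u : A) * u := by
    rw [hs, hu']
    simp only [mul_add, add_mul, one_mul, mul_one, smul_mul_smul_comm, mul_comm ζ]
    abel
  have hcu : u * star u = star u * u := Units.ext hcomm
  rw [hC, ← hu', Ring.inverse_unit]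
  have key : star u * u⁻¹ * star (star u * u⁻¹) = 1 := by
    rw [star_mul, star_star, star_inv]
    have : u⁻¹ * (star u)⁻¹ = (star u)⁻¹ * u⁻¹ := by
      rw [← mul_inv_rev, ← mul_inv_rev, hcu]
    calc star u * u⁻¹ * ((star u)⁻¹ * u) = star u * (u⁻¹ * (star u)⁻¹) * u := by group
      _ = 1 := by rw [this]; group
  have key' := congrArg (Units.val) key
  simp only [Units.val_mul, Units.coe_star, Units.val_one] at key'
  rw [smul_mul_assoc, star_smul, smul_mul_smul_comm, hz, one_smul]
  exact key'

lemma nelson_general {H : Type*} [NormedAddCommGroup H] [InnerProductSpace ℂ H]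
    [FiniteDimensional ℂ H] [CompleteSpace H] (g : ℕ) (hg : 0 < g)
    (T : Fin g → (H →L[ℂ] H))
    (hT : ‖∑ j, T j * adjoint (T j)‖ < 1) :
    ∃ Ω : Set ℂ, IsOpen Ω ∧ Metric.closedBall (0 : ℂ) 1 ⊆ Ω ∧
      ∃ F : Fin g → ℂ → (H →L[ℂ] H),
        (∀ j, AnalyticOnNhd ℂ (F j) Ω) ∧ (∀ j, F j 0 = T j) ∧
        ∀ ζ : ℂ, ‖ζ‖ = 1 → ∑ j, F j ζ * adjoint (F j ζ) = 1 := by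
  have hS : 0 ≤ ∑ j, T j * adjoint (T j) := Finset.sum_nonneg fun j _ => mul_star_self_nonneg (T j)
  obtain ⟨P, hPP, hP⟩ : ∃ P : H →L[ℂ] H,
      P * P = ∑ j, T j * adjoint (T j) ∧ star P = P := by
    generalize (∑ j, T j * adjoint (T j)) = S at hS
    exact ⟨CFC.sqrt S, CFC.sqrt_mul_sqrt_self S hS, (CFC.sqrt_nonneg S).isSelfAdjoint⟩
  have hPn : ‖P‖ < 1 := by
    have h1 : ‖star P * P‖ = ‖P‖ * ‖P‖ := by
      exact CStarRing.norm_star_mul_self (x := P)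
    rw [hP, hPP] at h1
    nlinarith [norm_nonneg P]
  obtain ⟨W, hW, hWW⟩ := nelson_polar g hg T P hP hPP
  let a : ℂ → (H →L[ℂ] H) := fun ζ => 1 + ζ • P
  have ha : Continuous a := by fun_prop
  have hball : Metric.closedBall (0 : ℂ) 1 ⊆ a ⁻¹' {x | IsUnit x} := by
    intro ζ hζ
    have hζ' : ‖ζ‖ ≤ 1 := by simpa using hζ
    have : ‖-(ζ • P)‖ < 1 := by
      rw [norm_neg, norm_smul]
      nlinarith [norm_nonneg P, norm_nonneg ζ]
    have h2 := isUnit_one_sub_of_norm_lt_one this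
    rw [sub_neg_eq_add] at h2
    exact h2
  refine ⟨a ⁻¹' {x | IsUnit x}, Units.isOpen.preimage ha, hball,
    fun j ζ => (ζ • 1 + P) * Ring.inverse (a ζ) * W j, fun j ζ hζ => ?_, fun j => ?_,
    fun ζ hζ => ?_⟩
  · obtain ⟨u, hu⟩ := hζ
    have han : AnalyticAt ℂ a ζ := by
      exact analyticAt_const.add (analyticAt_id.smul analyticAt_const)
    have hinv : AnalyticAt ℂ (fun ζ => Ring.inverse (a ζ)) ζ := by
      refine AnalyticAt.comp (g := Ring.inverse) ?_ han
      rw [← hu]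
      exact analyticAt_inverse u
    exact (((analyticAt_id.smul analyticAt_const).add analyticAt_const).mul hinv).mul
      analyticAt_const
  · simp [a, hW]
  · have hm := nelson_moebius P hP ζ hζ (hball (by simp [hζ]))
    set M := (ζ • 1 + P) * Ring.inverse (a ζ) with hM
    have : ∀ j, M * W j * adjoint (M * W j) = M * (W j * adjoint (W j)) * star M := fun j => by
      have : adjoint (M * W j) = adjoint (W j) * star M := star_mul M (W j)
      rw [this]; simp only [mul_assoc]
    change ∑ j, M * W j * adjoint (M * W j) = 1
    rw [Finset.sum_congr rfl fun j _ => this j]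
    rw [← Finset.sum_mul, ← Finset.mul_sum, hWW, mul_one]
    exact hm

/-- Nelson's trick for row contractions: if `(T₁ ⋯ T_g)` is a strict row contraction of
`n × n` matrices, there are functions `F₁, …, F_g`, analytic on an open neighborhood `Ω`
of the closed unit disc, with `F_j(0) = T_j` and such that `(F₁(ζ) ⋯ F_g(ζ))` is a
coisometry for every `ζ` on the unit circle. -/
theorem nelson_trick_row_contraction (n g : ℕ) (hn : 0 < n) (hg : 0 < g)
    (T : Fin g → (EuclideanSpace ℂ (Fin n) →L[ℂ] EuclideanSpace ℂ (Fin n)))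
    (hT : ‖∑ j, T j * adjoint (T j)‖ < 1) :
    ∃ Ω : Set ℂ, IsOpen Ω ∧ Metric.closedBall (0 : ℂ) 1 ⊆ Ω ∧
      ∃ F : Fin g → ℂ → (EuclideanSpace ℂ (Fin n) →L[ℂ] EuclideanSpace ℂ (Fin n)),
        (∀ j, AnalyticOnNhd ℂ (F j) Ω) ∧ (∀ j, F j 0 = T j) ∧
        ∀ ζ : ℂ, ‖ζ‖ = 1 → ∑ j, F j ζ * adjoint (F j ζ) = 1 := by
  exact nelson_general g hg T hT

end
end

section
/- Let n and d be positive integers and let T₁, …, T_d be invertible n × n complex matrices with ‖T_j‖ < 1 for each j, which pairwise doubly commute: T_jT_k = T_kT_j for all j, k and T_j*T_k = T_kT_j* for all j ≠ k. Then there exist an open set Ω ⊆ ℂ containing the closed unit disc and analytic functions F₁, …, F_d : Ω → M_n(ℂ) such that: F_j(0) = T_j for each j; F_j(ζ) is unitary for every ζ with |ζ| = 1; and for all j ≠ k and all z, w ∈ Ω, F_j(z)F_k(w) = F_k(w)F_j(z) and F_j(z)*F_k(w) = F_k(w)F_j(z)* (the functions pointwise doubly commute). -/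
open ContinuousLinearMap

noncomputable section

lemma nelson_single {A : Type*} [CStarAlgebra A] [PartialOrder A] [StarOrderedRing A]
    (T : A) (hT : IsUnit T) (hn : ‖T‖ < 1) :
    ∃ F : ℂ → A, (∀ z : ℂ, ‖z‖ * ‖T‖ < 1 → AnalyticAt ℂ F z) ∧ F 0 = T ∧
      (∀ z : ℂ, ‖z‖ = 1 → star (F z) * F z = 1 ∧ F z * star (F z) = 1) ∧
      (∀ x : A, Commute x T → Commute x (star T) → ∀ z, Commute x (F z)) := by
  set P : A := CFC.sqrt (star T * T) with hP
  have hpos : (0 : A) ≤ star T * T := star_mul_self_nonneg T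
  have hPP : P * P = star T * T := CFC.sqrt_mul_sqrt_self _ hpos
  have hPs : star P = P := (IsSelfAdjoint.of_nonneg (CFC.sqrt_nonneg _)).star_eq
  have hPn : ‖P‖ = ‖T‖ := by
    have h1 : ‖P‖ * ‖P‖ = ‖T‖ * ‖T‖ := by
      rw [← CStarRing.norm_star_mul_self, ← CStarRing.norm_star_mul_self, hPs, hPP]
    nlinarith [norm_nonneg P, norm_nonneg T]
  have hPu : IsUnit P := by
    have h : IsUnit (P * P) := by rw [hPP]; exact hT.star.mul hT
    exact ((Commute.refl P).isUnit_mul_iff.mp h).1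
  have hPc : ∀ x : A, Commute x T → Commute x (star T) → Commute x P := by
    intro x h1 h2
    have h := h2.mul_right h1
    rw [hP, CFC.sqrt_eq_cfc]
    exact (Commute.cfc_nnreal h.symm _).symm
  obtain ⟨u, hu⟩ := hPu
  have hunit : ∀ z : ℂ, ‖z‖ * ‖T‖ < 1 → IsUnit (1 + z • P) := by
    intro z hz
    have := isUnit_one_sub_of_norm_lt_one (x := -(z • P)) (by
      rw [norm_neg, norm_smul, hPn]; exact hz)
    simpa using this
  refine ⟨fun z => T * (1 + z • (↑u⁻¹ : A)) * Ring.inverse (1 + z • P), ?_, ?_, ?_, ?_⟩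
  · intro z hz
    have h1 : AnalyticAt ℂ (fun z : ℂ => 1 + z • P) z := by fun_prop
    obtain ⟨v, hv⟩ := hunit z hz
    have h2 : AnalyticAt ℂ (fun z : ℂ => Ring.inverse (1 + z • P)) z := by
      have h3 : AnalyticAt ℂ (Ring.inverse : A → A) (1 + z • P) := by
        rw [← hv]; exact analyticAt_inverse v
      exact AnalyticAt.fun_comp h3 h1
    have h3 : AnalyticAt ℂ (fun z : ℂ => T * (1 + z • (↑u⁻¹ : A))) z := by fun_prop
    exact h3.mul h2
  · simp
  · intro z hz
    obtain ⟨v, hv⟩ := hunit z (by rw [hz]; simpa using hn)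
    obtain ⟨w, hw⟩ := hunit (star z) (by rw [norm_star, hz]; simpa using hn)
    have hzz : star z * z = 1 := by
      have := Complex.conj_mul' z
      rw [hz] at this; simpa using this
    have hzz' : z * star z = 1 := by rw [mul_comm, hzz]
    have hus : star (↑u⁻¹ : A) = ↑u⁻¹ := by
      have : star u = u := Units.ext (by rw [Units.coe_star, hu, hPs])
      rw [← Units.coe_star, star_inv, this]
    have e1 : (1 + z • (↑u⁻¹ : A)) = ↑u⁻¹ * (z • (w : A)) := by
      rw [hw, smul_add, smul_smul, hzz', one_smul, mul_add, ← hu, Units.inv_mul, mul_smul_comm,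
        mul_one, add_comm]
    have hvw : star (v : A) = w := by
      rw [hv, hw]; simp [hPs]
    have hwv : star (w : A) = v := by rw [← hvw, star_star]
    have hcomm : (v : A) * w = w * v := by
      rw [hv, hw]
      simp only [mul_add, add_mul, mul_smul_comm, smul_mul_assoc, one_mul, mul_one, smul_add]
      rw [smul_comm]; abel
    have huP : (↑u⁻¹ : A) * (star T * T) * ↑u⁻¹ = 1 := by
      rw [← hPP, ← hu]; simp
    have hFu : IsUnit (T * (1 + z • (↑u⁻¹ : A)) * Ring.inverse (1 + z • P)) := by
      rw [e1, ← hv, Ring.inverse_unit]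
      refine (hT.mul (u⁻¹.isUnit.mul ?_)).mul v⁻¹.isUnit
      have hz0 : z ≠ 0 := by rintro rfl; simp at hz
      exact w.isUnit.smul (Units.mk0 z hz0)
    have hFF : star (T * (1 + z • (↑u⁻¹ : A)) * Ring.inverse (1 + z • P)) *
        (T * (1 + z • (↑u⁻¹ : A)) * Ring.inverse (1 + z • P)) = 1 := by
      rw [e1, ← hv, Ring.inverse_unit]
      have hvi : star (↑v⁻¹ : A) = ↑w⁻¹ := by
        have : star v = w := Units.ext (by rw [Units.coe_star, hvw])
        rw [← Units.coe_star, star_inv, this]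
      rw [star_mul, star_mul, star_mul, star_smul, hvi, hwv, hus]
      calc _ = (star z * z) • ((↑w⁻¹ : A) * (v * (↑u⁻¹ * (star T * T) * ↑u⁻¹) * w) * ↑v⁻¹) := by
            simp only [mul_smul_comm, smul_mul_assoc, smul_smul, mul_assoc]
            try rw [mul_comm z]
        _ = 1 := by
            rw [huP, hzz, mul_one, hcomm, one_smul]; simp
    refine ⟨hFF, ?_⟩
    obtain ⟨f, hf⟩ := hFu
    simp only
    rw [← hf] at hFF ⊢
    rw [Units.eq_inv_of_mul_eq_one_right hFF]; simp
  · intro x h1 h2 z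
    have hxP := hPc x h1 h2
    have hxu : Commute x (↑u⁻¹ : A) := by
      rw [← hu] at hxP; exact hxP.units_inv_right
    refine (h1.mul_right ((Commute.one_right x).add_right (hxu.smul_right z))).mul_right ?_
    have hc : Commute x (1 + z • P) := (Commute.one_right x).add_right (hxP.smul_right z)
    by_cases hi : IsUnit (1 + z • P)
    · obtain ⟨v, hv⟩ := hi
      rw [← hv] at hc ⊢
      rw [Ring.inverse_unit]
      exact hc.units_inv_right
    · rw [Ring.inverse_non_unit _ hi]
      exact Commute.zero_right x

/-- Nelson's trick for doubly commuting tuples: if `T₁, …, T_d` are invertible strict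
contractions on `ℂⁿ` that pairwise doubly commute, there are functions `F₁, …, F_d`,
analytic on an open neighborhood `Ω` of the closed unit disc, with `F_j(0) = T_j`,
`F_j` unitary valued on the unit circle, and the `F_j` pointwise doubly commuting. -/
theorem nelson_trick_doubly_commuting (n d : ℕ) (hn : 0 < n) (hd : 0 < d)
    (T : Fin d → (EuclideanSpace ℂ (Fin n) →L[ℂ] EuclideanSpace ℂ (Fin n)))
    (hinv : ∀ j, IsUnit (T j)) (hnorm : ∀ j, ‖T j‖ < 1)
    (hcomm : ∀ j k, T j * T k = T k * T j)
    (hdcomm : ∀ j k, j ≠ k → adjoint (T j) * T k = T k * adjoint (T j)) :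
    ∃ Ω : Set ℂ, IsOpen Ω ∧ Metric.closedBall (0 : ℂ) 1 ⊆ Ω ∧
      ∃ F : Fin d → ℂ → (EuclideanSpace ℂ (Fin n) →L[ℂ] EuclideanSpace ℂ (Fin n)),
        (∀ j, AnalyticOnNhd ℂ (F j) Ω) ∧ (∀ j, F j 0 = T j) ∧
        (∀ j, ∀ ζ : ℂ, ‖ζ‖ = 1 →
          adjoint (F j ζ) * F j ζ = 1 ∧ F j ζ * adjoint (F j ζ) = 1) ∧
        (∀ j k, j ≠ k → ∀ z ∈ Ω, ∀ w ∈ Ω,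
          F j z * F k w = F k w * F j z ∧
          adjoint (F j z) * F k w = F k w * adjoint (F j z)) := by
  choose F hF1 hF2 hF3 hF4 using fun j => nelson_single (T j) (hinv j) (hnorm j)
  refine ⟨⋂ j, {z : ℂ | ‖z‖ * ‖T j‖ < 1}, ?_, ?_, F, ?_, hF2, hF3, ?_⟩
  · exact isOpen_iInter_of_finite fun j => isOpen_lt (by fun_prop) (by fun_prop)
  · intro z hz
    rw [mem_closedBall_zero_iff] at hz
    refine Set.mem_iInter.2 fun j => ?_
    show ‖z‖ * ‖T j‖ < 1
    nlinarith [hnorm j, norm_nonneg (T j), norm_nonneg z]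
  · intro j z hz
    exact hF1 j z (Set.mem_iInter.1 hz j)
  · intro j k hjk z _ w _
    have a1 : Commute (T j) (T k) := hcomm j k
    have a2 : Commute (star (T j)) (T k) := hdcomm j k hjk
    have a3 : Commute (T j) (star (T k)) := (hdcomm k j hjk.symm).symm
    have a4 : Commute (star (T j)) (star (T k)) := a1.star_star
    have b1 : Commute (T j) (F k w) := hF4 k _ a1 a3 w
    have b2 : Commute (star (T j)) (F k w) := hF4 k _ a2 a4 w
    have c1 : Commute (F k w) (F j z) := hF4 j _ b1.symm b2.symm z
    have b1' : Commute (star (F k w)) (T j) := by simpa using b2.star_star.symm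
    have b2' : Commute (star (F k w)) (star (T j)) := b1.star_star.symm
    have c2 : Commute (star (F k w)) (F j z) := hF4 j _ b1' b2' z
    have c3 : Commute (F k w) (star (F j z)) := by simpa using c2.star_star
    exact ⟨c1.symm, c3.symm⟩

end
end
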